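/- For every integer α ≥ 1 there exist integers d(n,0) for n ≥ 2 and d(n,1), d(n,2) for n ≥ 3 such that, in the d_3 tower, L_{2α−1} = p_0·∑_{n≥2} d(n,0)·7^{⌊(7n−13)/4⌋+α−1}·t^n + p_1·∑_{n≥3} d(n,1)·7^{⌊(7n−16)/4⌋+α−1}·t^n + ∑_{n≥3} d(n,2)·7^{⌊(7n−16)/4⌋+α−1}·t^n, where the infinite sums converge coefficientwise since t^n has q-order n. -/

import Mathlib

noncomputable section

/-- `J b = ∏_{k=1}^∞ (1 - q^{b·k})` as a formal power series with integer coefficients. -/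
def J (b : ℕ) : PowerSeries ℤ :=
  PowerSeries.mk fun n =>
    PowerSeries.coeff n
      (∏ k ∈ Finset.range (n + 1), (1 - (PowerSeries.X : PowerSeries ℤ) ^ (b * (k + 1))))

/-- The coefficientwise-convergent sum `∑_{n≥0} c(n)·t^n`: since `t` has q-order 1, the
coefficient of `q^m` only receives contributions from `n ≤ m`. -/
def tpowSum (t : PowerSeries ℤ) (c : ℕ → ℤ) : PowerSeries ℤ :=
  PowerSeries.mk fun m =>
    ∑ n ∈ Finset.range (m + 1), c n * PowerSeries.coeff m (t ^ n)

open PowerSeries in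
theorem coeff_partial_stable (b : ℕ) (hb : 1 ≤ b) (m N : ℕ) (h : m + 1 ≤ N) :
    coeff m (∏ k ∈ Finset.range N, (1 - (X : PowerSeries ℤ) ^ (b * (k + 1)))) =
    coeff m (∏ k ∈ Finset.range (m+1), (1 - (X : PowerSeries ℤ) ^ (b * (k + 1)))) := by
  induction N, h using Nat.le_induction with
  | base => rfl
  | succ n hn ih =>
    rw [Finset.prod_range_succ, mul_sub, mul_one, map_sub, ih, coeff_mul_X_pow', if_neg, sub_zero]
    nlinarith

/-- partial product -/
def QQ (b N : ℕ) : PowerSeries ℤ := ∏ k ∈ Finset.range N, (1 - (PowerSeries.X : PowerSeries ℤ) ^ (b * (k + 1)))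

/-- reduction mod X^N -/
def pi (N : ℕ) : PowerSeries ℤ →+* PowerSeries ℤ ⧸ Ideal.span {(PowerSeries.X : PowerSeries ℤ)^N} :=
  Ideal.Quotient.mk _

theorem pi_eq_iff (N : ℕ) (f g : PowerSeries ℤ) :
    pi N f = pi N g ↔ ∀ m < N, PowerSeries.coeff m f = PowerSeries.coeff m g := by
  unfold pi
  rw [Ideal.Quotient.eq, Ideal.mem_span_singleton, PowerSeries.X_pow_dvd_iff]
  simp only [map_sub, sub_eq_zero]

theorem pi_ext (f g : PowerSeries ℤ) (h : ∀ N, pi N f = pi N g) : f = g := by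
  ext n
  exact (pi_eq_iff (n+1) f g).1 (h _) n (Nat.lt_succ_self n)

theorem pi_X (N m : ℕ) (h : N ≤ m) : pi N (PowerSeries.X ^ m) = 0 := by
  unfold pi
  rw [Ideal.Quotient.eq_zero_iff_mem, Ideal.mem_span_singleton]
  exact pow_dvd_pow _ h

theorem pi_J (b : ℕ) (hb : 1 ≤ b) (N M : ℕ) (h : N ≤ M) : pi N (J b) = pi N (QQ b M) := by
  rw [pi_eq_iff]
  intro m hm
  rw [J, PowerSeries.coeff_mk, QQ, coeff_partial_stable b hb m M (by omega)]

/-- generating function of a weight -/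
def gen {ι : Type} (w : ι → ℕ) : PowerSeries ℤ := PowerSeries.mk fun n => (Nat.card {i // w i = n} : ℤ)

theorem pi_gen_nat (w : ℕ → ℕ) (hw : ∀ k, k ≤ w k) (N M : ℕ) (h : N ≤ M) :
    pi N (gen w) = pi N (∑ k ∈ Finset.range M, PowerSeries.X ^ (w k)) := by
  rw [pi_eq_iff]
  intro m hm
  rw [gen, PowerSeries.coeff_mk, map_sum]
  simp only [PowerSeries.coeff_X_pow]
  rw [Finset.sum_ite, Finset.sum_const_zero, add_zero, Finset.sum_const, nsmul_one]
  congr 1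
  rw [Nat.subtype_card]
  intro x
  simp only [Finset.mem_filter, Finset.mem_range]
  constructor
  · rintro ⟨_, h⟩; exact h.symm
  · intro h; have := hw x; exact ⟨by omega, h.symm⟩

theorem shanks1 {R : Type*} [CommRing R] (q : R) (n : ℕ) :
    (∏ k ∈ Finset.range n, (1 - q^(2*k+1))) * ∑ k ∈ Finset.range (2*n), q^(k*(k+1)/2) =
    ∑ s ∈ Finset.range n, (∏ k ∈ Finset.Ico s n, (1 - q^(2*(k+1)))) * (∏ k ∈ Finset.range s, (1 - q^(2*k+1))) * q^(s*(2*n+1)) := by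
  induction n with
  | zero => simp
  | succ n ih =>
    have h1 : (2*n*(2*n+1)/2) = n*(2*n+1) := by
      rw [mul_assoc, Nat.mul_div_cancel_left _ (by norm_num)]
    have h2 : ((2*n+1)*(2*n+1+1)/2) = n*(2*n+1) + (2*n+1) := by
      rw [show (2*n+1)*(2*n+1+1) = 2*(n*(2*n+1) + (2*n+1)) by ring, Nat.mul_div_cancel_left _ (by norm_num)]
    rw [show 2*(n+1) = 2*n+1+1 by ring, Finset.sum_range_succ _ (2*n+1), Finset.sum_range_succ _ (2*n),
      Finset.prod_range_succ, Finset.sum_range_succ _ n, h1, h2]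
    set D := fun s => ∏ k ∈ Finset.range s, (1 - q^(2*k+1)) with hD
    set E := fun s => ∏ k ∈ Finset.Ico s n, (1 - q^(2*(k+1))) with hE
    have key := Finset.sum_range_sub (fun s => E s * D s * (1 - q^(2*s)) * q^(s*(2*n+1))) n
    have e2 : ∀ s ∈ Finset.range n, (E (s+1) * D (s+1) * (1 - q^(2*(s+1))) * q^((s+1)*(2*n+1)) -
        E s * D s * (1 - q^(2*s)) * q^(s*(2*n+1))) =
        (∏ k ∈ Finset.Ico s (n+1), (1 - q^(2*(k+1)))) * D s * q^(s*(2*n+1+1+1)) - (1 - q^(2*n+1)) *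
        (E s * D s * q^(s*(2*n+1))) := by
      intro s hs
      rw [Finset.mem_range] at hs
      have a1 : E s = (1 - q^(2*(s+1))) * E (s+1) := by
        simp only [hE]; rw [Finset.prod_eq_prod_Ico_succ_bot hs]
      have a2 : D (s+1) = D s * (1 - q^(2*s+1)) := by
        simp only [hD]; rw [Finset.prod_range_succ]
      have a3 : (∏ k ∈ Finset.Ico s (n+1), (1 - q^(2*(k+1)))) = E s * (1 - q^(2*(n+1))) := by
        rw [Finset.prod_Ico_succ_top (by omega)]
      rw [a3, a2, a1]
      ring
    rw [Finset.sum_congr rfl e2, Finset.sum_sub_distrib, ← Finset.mul_sum, ← ih] at key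
    have e3 : E n = 1 := by simp [hE]
    have e4 : (∏ k ∈ Finset.Ico n (n+1), (1 - q^(2*(k+1)))) = 1 - q^(2*(n+1)) := by simp
    rw [e4]
    rw [e3] at key
    simp only [mul_zero, pow_zero, sub_self, zero_mul, one_mul, sub_zero] at key
    rw [eq_add_of_sub_eq key]
    ring

theorem shanks2 {R : Type*} [CommRing R] (q : R) (n : ℕ) :
    (∏ k ∈ Finset.range n, (1 + q^(k+1))) * (1 + ∑ k ∈ Finset.range n, 2 * (-1)^(k+1) * q^((k+1)^2)) =
    (∏ k ∈ Finset.range n, (1 - q^(k+1))) +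
    ∑ s ∈ Finset.range n, 2 * (-1)^(s+1) * (∏ k ∈ Finset.Ico (s+1) n, (1 - q^(k+1))) * (∏ k ∈ Finset.range s, (1 + q^(k+1))) * q^((n+1)*(s+1)) := by
  induction n with
  | zero => simp
  | succ n ih =>
    rw [Finset.prod_range_succ, Finset.prod_range_succ _ n, Finset.sum_range_succ _ n, Finset.sum_range_succ _ n]
    set D := fun s => ∏ k ∈ Finset.range s, (1 + q^(k+1)) with hD
    set E := fun s => ∏ k ∈ Finset.Ico s n, (1 - q^(k+1)) with hE
    have key := Finset.sum_range_sub (fun s => 2 * (-1)^(s+1) * E s * D s * q^((n+1)*(s+1))) n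
    have e2 : ∀ s ∈ Finset.range n, (2 * (-1)^(s+1+1) * E (s+1) * D (s+1) * q^((n+1)*(s+1+1)) - 2 * (-1)^(s+1) * E s * D s * q^((n+1)*(s+1))) =
        2 * (-1)^(s+1) * (∏ k ∈ Finset.Ico (s+1) (n+1), (1 - q^(k+1))) * D s * q^((n+1+1)*(s+1)) - (1 + q^(n+1)) *
        (2 * (-1)^(s+1) * E (s+1) * D s * q^((n+1)*(s+1))) := by
      intro s hs
      rw [Finset.mem_range] at hs
      have a1 : E s = (1 - q^((s+1))) * E (s+1) := by
        simp only [hE]; rw [Finset.prod_eq_prod_Ico_succ_bot hs]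
      have a2 : D (s+1) = D s * (1 + q^(s+1)) := by
        simp only [hD]; rw [Finset.prod_range_succ]
      have a3 : (∏ k ∈ Finset.Ico (s+1) (n+1), (1 - q^(k+1))) = E (s+1) * (1 - q^(n+1)) := by
        rw [Finset.prod_Ico_succ_top (by omega)]
      rw [a3, a2, a1]
      ring
    rw [Finset.sum_congr rfl e2, Finset.sum_sub_distrib, ← Finset.mul_sum] at key
    have e3 : E n = 1 := by simp [hE]
    have e5 : D 0 = 1 := by simp [hD]
    have e6 : ∏ k ∈ Finset.range n, (1 - q^(k+1)) = E 0 := by simp [hE]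
    have e4 : (∏ k ∈ Finset.Ico (n+1) (n+1), (1 - q^(k+1))) = 1 := by simp
    rw [e6] at ih ⊢
    rw [e4]
    rw [e3, e5] at key
    rw [eq_add_of_sub_eq key]
    have ih' := sub_eq_of_eq_add' ih
    simp only [hD, hE] at ih' ⊢
    rw [← ih']
    ring

open PowerSeries in
theorem QQ_odd_even (N : ℕ) : (∏ k ∈ Finset.range N, (1 - (X : PowerSeries ℤ)^(2*k+1))) * QQ 2 N = QQ 1 (2*N) := by
  unfold QQ
  induction N with
  | zero => simp
  | succ n ih =>
    rw [show 2*(n+1) = 2*n+1+1 by ring]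
    simp only [Finset.prod_range_succ] at ih ⊢
    rw [← ih]; ring

open PowerSeries in
theorem QQ_plus (N : ℕ) : (∏ k ∈ Finset.range N, (1 + (X : PowerSeries ℤ)^(k+1))) * QQ 1 N = QQ 2 N := by
  unfold QQ
  rw [← Finset.prod_mul_distrib]
  refine Finset.prod_congr rfl fun k _ => ?_
  ring

/-- ramanujan psi -/
def psi : PowerSeries ℤ := gen (fun k : ℕ => k*(k+1)/2)

theorem psi_J : psi * J 1 = J 2 ^ 2 := by
  apply pi_ext
  intro N
  have h := congrArg (pi N) (shanks1 (PowerSeries.X : PowerSeries ℤ) N)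
  have h0 : pi N (∑ s ∈ Finset.range N, (∏ k ∈ Finset.Ico s N, (1 - (PowerSeries.X : PowerSeries ℤ)^(2*(k+1)))) * (∏ k ∈ Finset.range s, (1 - (PowerSeries.X : PowerSeries ℤ)^(2*k+1))) * PowerSeries.X^(s*(2*N+1))) = pi N (QQ 2 N) := by
    rcases Nat.eq_zero_or_pos N with h0 | h0
    · subst h0
      rw [pi_eq_iff]; simp
    obtain ⟨M, rfl⟩ : ∃ M, N = M+1 := ⟨N-1, by omega⟩
    rw [Finset.sum_range_succ', map_add, map_sum, Finset.sum_eq_zero]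
    · simp [QQ]
    · intro s _
      rw [map_mul, pi_X _ _ (by nlinarith), mul_zero]
  rw [h0, map_mul] at h
  rw [map_mul, map_pow, pi_J 2 le_rfl' N N le_rfl, pi_J 1 le_rfl N (2*N) (by omega), ← QQ_odd_even, psi,
    pi_gen_nat _ _ N (2*N) (by omega), map_mul, sq, ← h]
  · ring
  · intro k
    rw [Nat.le_div_iff_mul_le (by norm_num)]
    rcases k with _ | k
    · simp
    · nlinarith
where le_rfl' : 1 ≤ 2 := by norm_num

/-- phi(q), indexed by integers -/
def phi : PowerSeries ℤ := gen (fun k : ℤ => k.natAbs^2)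

theorem coeff_phi (n : ℕ) : PowerSeries.coeff n phi = if n = 0 then 1 else if IsSquare n then 2 else 0 := by
  rw [phi, gen, PowerSeries.coeff_mk]
  split_ifs with h1 h2
  · subst h1
    have : Nat.card {k : ℤ // k.natAbs^2 = 0} = ({0} : Finset ℤ).card := by
      apply Nat.subtype_card; simp
    rw [this]; simp
  · obtain ⟨r, rfl⟩ := h2
    have hr : r ≠ 0 := by rintro rfl; simp at h1
    have : Nat.card {k : ℤ // k.natAbs^2 = r*r} = ({(r:ℤ), -(r:ℤ)} : Finset ℤ).card := by
      apply Nat.subtype_card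
      intro x
      rw [← sq, Nat.pow_left_inj (by norm_num)]
      simp
      omega
    rw [this, Finset.card_pair (by omega)]; rfl
  · have : IsEmpty {k : ℤ // k.natAbs^2 = n} := by
      constructor
      rintro ⟨k, hk⟩
      exact h2 ⟨k.natAbs, by rw [← hk, sq]⟩
    rw [Nat.card_of_isEmpty]; rfl

open PowerSeries in
theorem phi_trunc (N : ℕ) : pi N (rescale (-1) phi) = pi N (1 + ∑ k ∈ Finset.range N, 2 * (-1)^(k+1) * X^((k+1)^2)) := by
  rw [pi_eq_iff]
  intro m hm
  rw [coeff_rescale, coeff_phi, map_add, map_sum, coeff_one]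
  have : ∀ k, coeff m (2 * (-1)^(k+1) * (X : PowerSeries ℤ)^((k+1)^2)) = if m = (k+1)^2 then 2 * (-1)^(k+1) else 0 := by
    intro k
    rw [show (2 * (-1)^(k+1) * (X : PowerSeries ℤ)^((k+1)^2)) = C (2 * (-1)^(k+1)) * X^((k+1)^2) by simp,
      coeff_C_mul, coeff_X_pow]
    simp
  simp only [this]
  split_ifs with h1 h2
  · subst h1
    rw [Finset.sum_eq_zero]
    · simp
    · intro k _
      rw [if_neg]
      positivity
  · obtain ⟨r, rfl⟩ := h2
    obtain ⟨s, rfl⟩ : ∃ s, r = s+1 := ⟨r-1, by rcases r with _ | r; simp at h1; rfl⟩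
    rw [Finset.sum_eq_single s]
    · rw [if_pos (by ring), pow_mul]
      rcases Nat.even_or_odd (s+1) with h | h <;> simp [h.neg_one_pow]
    · intro b _ hb
      rw [if_neg]
      intro h
      apply hb
      nlinarith [sq_nonneg (b-s:ℤ), Nat.pow_left_injective (n := 2) (by norm_num) (show (s+1)^2 = (b+1)^2 by rw [← h]; ring)]
    · intro h
      exfalso; apply h; rw [Finset.mem_range]; nlinarith
  · rw [Finset.sum_eq_zero]
    · simp
    · intro k _
      rw [if_neg]
      rintro rfl
      exact h2 ⟨k+1, by ring⟩

open PowerSeries in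
theorem phim_J : rescale (-1) phi * J 2 = J 1 ^ 2 := by
  apply pi_ext
  intro N
  have h := congrArg (pi N) (shanks2 (PowerSeries.X : PowerSeries ℤ) N)
  have h0 : pi N (∑ s ∈ Finset.range N, 2 * (-1)^(s+1) * (∏ k ∈ Finset.Ico (s+1) N, (1 - (PowerSeries.X : PowerSeries ℤ)^(k+1))) * (∏ k ∈ Finset.range s, (1 + (PowerSeries.X : PowerSeries ℤ)^(k+1))) * PowerSeries.X^((N+1)*(s+1))) = 0 := by
    rw [map_sum, Finset.sum_eq_zero]
    intro s _
    rw [map_mul, pi_X _ _ (by nlinarith), mul_zero]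
  have h1 : (∏ k ∈ Finset.range N, (1 - (PowerSeries.X : PowerSeries ℤ)^(k+1))) = QQ 1 N := by simp [QQ]
  rw [map_add, h0, add_zero, h1, map_mul, ← phi_trunc] at h
  rw [map_mul, pi_J 2 (by norm_num) N N le_rfl, map_pow, pi_J 1 le_rfl N N le_rfl, ← QQ_plus, map_mul, sq, ← h]
  ring

open PowerSeries in
theorem J_expand (b m : ℕ) (hb : 1 ≤ b) (hm : m ≠ 0) : expand m hm (J b) = J (m * b) := by
  ext n
  have hmb : 1 ≤ m * b := Nat.one_le_iff_ne_zero.2 (Nat.mul_ne_zero hm (by omega))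
  have h2 : expand m hm (QQ b (n+1)) = QQ (m*b) (n+1) := by
    unfold QQ; rw [map_prod]
    refine Finset.prod_congr rfl fun k _ => ?_
    rw [map_sub, map_one, map_pow, expand_X, ← pow_mul]; ring_nf
  have h3 := (pi_eq_iff (n+1) _ _).1 (pi_J (m*b) hmb (n+1) (n+1) le_rfl) n (by omega)
  rw [h3, ← h2, coeff_expand, coeff_expand]
  split_ifs with h
  · apply (pi_eq_iff (n+1) _ _).1 (pi_J b hb (n+1) (n+1) le_rfl)
    have := Nat.div_le_self n m
    omega
  · rfl

open PowerSeries in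
theorem Jneg : rescale (-1) (J 1) * J 1 * J 4 = J 2 ^ 3 := by
  have hr : ∀ N, pi N (rescale (-1) (J 1)) = pi N (rescale (-1) (QQ 1 (2*N))) := by
    intro N
    rw [pi_eq_iff]; intro m hm
    rw [coeff_rescale, coeff_rescale, (pi_eq_iff N _ _).1 (pi_J 1 le_rfl N (2*N) (by omega)) m hm]
  have hq : ∀ N, rescale (-1) (QQ 1 (2*N)) * QQ 1 (2*N) * QQ 4 N = QQ 2 (2*N) * QQ 2 N ^ 2 := by
    intro N
    unfold QQ
    induction N with
    | zero => simp
    | succ n ih =>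
      rw [show 2*(n+1) = 2*n+1+1 by ring]
      simp only [Finset.prod_range_succ, map_mul, map_sub, map_one, map_pow, rescale_neg_one_X, map_prod] at ih ⊢
      have e1 : (-X:PowerSeries ℤ) ^ (1 * (2 * n + 1)) = - X^(2*n+1) := by
        rw [one_mul]; exact Odd.neg_pow ⟨n, rfl⟩ X
      have e2 : (-X:PowerSeries ℤ) ^ (1 * (2 * n + 1 + 1)) = X^(2*n+2) := by
        rw [one_mul]; exact Even.neg_pow ⟨n+1, by ring⟩ X
      rw [e1, e2]
      linear_combination (1 + X ^ (2 * n + 1))* (1 - X ^ (2 * n + 2))* ((1 - X ^ (1 * (2 * n + 1))) * (1 - X ^ (1 * (2 * n + 1 + 1)))) * (1 - X ^ (4 * (n + 1))) * ih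
  apply pi_ext
  intro N
  rw [map_mul, map_mul, hr, pi_J 1 le_rfl N (2*N) (by omega), pi_J 4 (by norm_num) N N le_rfl, ← map_mul, ← map_mul, hq,
    map_mul, map_pow, map_pow, ← pi_J 2 (by norm_num) N N le_rfl, ← pi_J 2 (by norm_num) N (2*N) (by omega)]
  ring

open PowerSeries in
theorem resc_even (f : PowerSeries ℤ) : rescale (-1) (expand 2 two_ne_zero f) = expand 2 two_ne_zero f := by
  ext n
  rw [coeff_rescale, coeff_expand]
  split_ifs with h
  · obtain ⟨k, rfl⟩ := h; simp
  · simp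

open PowerSeries in
theorem resc_seven (f : PowerSeries ℤ) : rescale (-1) (expand 7 (by norm_num) f) = expand 7 (by norm_num) (rescale (-1) f) := by
  ext n
  rw [coeff_rescale, coeff_expand, coeff_expand]
  split_ifs with h
  · obtain ⟨k, rfl⟩ := h
    rw [coeff_rescale, Nat.mul_div_cancel_left _ (by norm_num), pow_mul]; norm_num
  · simp

open PowerSeries in
theorem expand_inj (m : ℕ) (hm : m ≠ 0) (f g : PowerSeries ℤ) (h : expand m hm f = expand m hm g) : f = g := by
  ext n
  rw [← coeff_expand_mul m hm f n, h, coeff_expand_mul]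

theorem J_ne (b : ℕ) (hb : 1 ≤ b) : J b ≠ 0 := by
  intro h
  have := congrArg (PowerSeries.coeff 0) h
  rw [J, PowerSeries.coeff_mk] at this
  simp [show b ≠ 0 by omega] at this

open PowerSeries in
theorem phi_J : phi * (J 1)^2 * (J 4)^2 = J 2 ^ 5 := by
  have h := congrArg (rescale (-1)) phim_J
  rw [map_mul, rescale_rescale, map_pow, show J 2 = expand 2 two_ne_zero (J 1) from (J_expand 1 2 le_rfl two_ne_zero).symm, resc_even,
    J_expand 1 2 le_rfl two_ne_zero] at h
  norm_num at h
  have h2 := Jneg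
  apply mul_left_cancel₀ (J_ne 2 (by norm_num))
  linear_combination (J 1)^2 * (J 4)^2 * h + ((rescale (-1) (J 1) * J 1 * J 4) + J 2 ^ 3)* h2

open PowerSeries in
theorem phi_psi : phi * expand 2 two_ne_zero psi = psi^2 := by
  have h1 := phi_J
  have h2 := psi_J
  have h3 := congrArg (expand 2 two_ne_zero) psi_J
  rw [map_mul, map_pow, J_expand _ _ (by norm_num), J_expand _ _ (by norm_num)] at h3
  apply mul_left_cancel₀ (mul_ne_zero (pow_ne_zero 2 (mul_ne_zero (J_ne 1 le_rfl) (J_ne 4 (by norm_num)))) (J_ne 2 (by norm_num)))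
  norm_num at h3
  generalize J 1 = j1 at *
  generalize J 2 = j2 at *
  generalize J 4 = j4 at *
  linear_combination (expand 2 two_ne_zero psi * j2) * h1 + j2^5 * h3  - j4^2*j2*(psi*j1+j2^2) * h2

open PowerSeries in
theorem phi_phim : phi * rescale (-1) phi = expand 2 two_ne_zero (rescale (-1) phi) ^ 2 := by
  have h1 := phi_J
  have h2 := phim_J
  have h3 := congrArg (expand 2 two_ne_zero) phim_J
  rw [map_mul, map_pow, J_expand _ _ (by norm_num), J_expand _ _ (by norm_num)] at h3
  apply mul_left_cancel₀ (mul_ne_zero (pow_ne_zero 2 (mul_ne_zero (J_ne 1 le_rfl) (J_ne 4 (by norm_num)))) (J_ne 2 (by norm_num)))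
  norm_num at h3
  generalize J 1 = j1 at *
  generalize J 2 = j2 at *
  generalize J 4 = j4 at *
  linear_combination (rescale (-1) phi * j2) * h1 + j2^5 * h2 - j1^2 * j2 * (expand 2 two_ne_zero (rescale (-1) phi) * j4 + j2^2) * h3

open PowerSeries in
theorem coeff_psi (n : ℕ) : coeff n psi = if IsSquare (8*n+1) then 1 else 0 := by
  rw [psi, gen, coeff_mk]
  have hh : ∀ k : ℕ, k*(k+1)/2*2 = k*(k+1) := fun k => Nat.div_mul_cancel (Nat.even_mul_succ_self k).two_dvd
  split_ifs with h
  · obtain ⟨r, hr⟩ := h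
    have : r % 2 = 1 := by
      rcases Nat.even_or_odd' r with ⟨c, rfl | rfl⟩
      · have : 8*n+1 = 2*(2*(c*c)) := by rw [hr]; ring
        omega
      · omega
    obtain ⟨c, rfl⟩ : ∃ c, r = 2*c+1 := ⟨r/2, by omega⟩
    have : Nat.card {k : ℕ // k*(k+1)/2 = n} = ({c} : Finset ℕ).card := by
      apply Nat.subtype_card
      intro x
      have := hh x
      rw [Finset.mem_singleton]
      constructor
      · rintro rfl; have := hh x; nlinarith
      · intro h
        have : x*(x+1) = c*(c+1) := by nlinarith
        nlinarith
    rw [this]; simp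
  · have : IsEmpty {k : ℕ // k*(k+1)/2 = n} := by
      constructor
      rintro ⟨k, hk⟩
      have := hh k
      exact h ⟨2*k+1, by nlinarith⟩
    rw [Nat.card_of_isEmpty]; rfl

open PowerSeries in
theorem phi_split : phi = expand 4 (by norm_num) phi + 2 * X * expand 8 (by norm_num) psi := by
  ext n
  rw [map_add, coeff_expand, mul_assoc, show (2:PowerSeries ℤ) = C 2 by simp, coeff_C_mul]
  rcases n with _ | n
  · simp
  rw [coeff_succ_X_mul, coeff_expand, coeff_phi]
  by_cases hs : IsSquare (n+1)
  · obtain ⟨r, hr⟩ := hs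
    rcases Nat.even_or_odd' r with ⟨c, rfl | rfl⟩
    · have e : n+1 = 4*(c*c) := by rw [hr]; ring
      rw [if_neg (by omega), if_pos ⟨_, hr⟩, if_pos ⟨_, e⟩, if_neg (by omega), coeff_phi, e,
        Nat.mul_div_cancel_left _ (by norm_num), if_neg (by omega), if_pos ⟨c, rfl⟩]; simp
    · obtain ⟨T, hT⟩ := (Nat.even_mul_succ_self c).two_dvd
      have e : n = 8*T := by nlinarith
      rw [if_neg (by omega), if_pos ⟨_, hr⟩, if_neg (by omega), if_pos ⟨_, e⟩, e,
        Nat.mul_div_cancel_left _ (by norm_num), coeff_psi, if_pos ⟨2*c+1, by rw [← hr, e]⟩]; simp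
  · rw [if_neg (by omega), if_neg hs]
    split_ifs with h1 h2 h2
    · omega
    · obtain ⟨m, hm⟩ := h1
      rw [hm, Nat.mul_div_cancel_left _ (by norm_num), coeff_phi, if_neg (by omega), if_neg]
      · simp
      · rintro ⟨r, hr⟩
        exact hs ⟨2*r, by rw [hm, hr]; ring⟩
    · obtain ⟨m, rfl⟩ := h2
      rw [Nat.mul_div_cancel_left _ (by norm_num), coeff_psi, if_neg hs]; simp
    · simp

open PowerSeries in
theorem neg_exp_zero (F : PowerSeries ℤ) (h : F = - expand 2 two_ne_zero F) : F = 0 := by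
  ext n
  induction n using Nat.strong_induction_on with
  | _ n ih =>
    have := congrArg (coeff n) h
    rw [map_neg, coeff_expand] at this
    split_ifs at this with h2
    · rcases Nat.eq_zero_or_pos n with rfl | h0
      · simp at this ⊢; omega
      · rw [this, ih (n/2) (by omega)]; simp
    · rw [this]; simp

open PowerSeries in
theorem JacJ : J 2 ^ 24 = J 1 ^ 16 * J 4 ^ 8 + 16 * X * J 1 ^ 8 * J 4 ^ 16 := by
  set e2 := expand (R := ℤ) 2 two_ne_zero with he2
  have ee : ∀ f : PowerSeries ℤ, expand 4 (by norm_num) f = e2 (e2 f) := fun f => expand_mul 2 two_ne_zero 2 two_ne_zero f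
  have ee8 : ∀ f : PowerSeries ℤ, expand 8 (by norm_num) f = e2 (e2 (e2 f)) := fun f => by
    rw [← ee]; exact expand_mul 4 (by norm_num) 2 two_ne_zero f
  have hs := phi_split
  rw [ee, ee8] at hs
  have hp := congrArg (fun f => e2 (e2 f)) phi_psi
  have hs2 := congrArg e2 hs
  have hX : e2 X = X^2 := expand_X 2 two_ne_zero
  have h2 : e2 2 = 2 := map_ofNat e2 2
  have h4 : e2 4 = 4 := map_ofNat e2 4
  simp only [map_add, map_mul, hX, map_pow, h2] at hs2 hp
  rw [← he2] at hp
  have hF := neg_exp_zero (phi^2 - (e2 phi)^2 - 4 * X * (e2 (e2 psi))^2) (by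
    rw [← he2]
    simp only [map_sub, map_mul, hX, map_pow, h4]
    linear_combination (phi + (e2 (e2 phi) + 2 * X * e2 (e2 (e2 psi)))) * hs + 4 * X * hp)
  have hr : ∀ f, rescale (-1) (e2 f) = e2 f := resc_even
  have hm := congrArg (rescale (-1)) hF
  simp only [map_sub, map_mul, map_pow, hr, rescale_neg_one_X, map_ofNat, map_zero] at hm
  have h5 := phi_phim
  rw [← he2] at h5
  have h6 : e2 (rescale (-1) phi ^ 4 - phi^4 + 16 * X * (e2 psi)^4) = e2 0 := by
    simp only [map_add, map_sub, map_mul, map_pow, hX, map_ofNat, map_zero]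
    have h7 := congrArg (fun x => x^2) h5
    linear_combination phi^2 * hm - h7  + ((e2 phi)^2 - 4*X*(e2 (e2 psi))^2) * hF
  have h7 := expand_inj 2 two_ne_zero _ _ h6
  have a1 := phi_J
  have a2 := phim_J
  have a3 := congrArg (expand 2 two_ne_zero) psi_J
  rw [map_mul, map_pow, J_expand _ _ (by norm_num), J_expand _ _ (by norm_num), ← he2] at a3
  apply mul_left_cancel₀ (pow_ne_zero 4 (J_ne 2 (by norm_num)))
  norm_num at a3
  generalize J 1 = j1 at *
  generalize J 2 = j2 at *
  generalize J 4 = j4 at *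
  have b1 := congrArg (fun x => x^4) a1
  have b2 := congrArg (fun x => x^4) a2
  have b3 := congrArg (fun x => x^4) a3
  linear_combination (-j2^8) * b1 + (j1^8*j4^8*j2^4) * b2 + (16*X*j1^8*j4^8*j2^4) * b3 - j1^8*j4^8*j2^8 * h7

/-- triangular number -/
def Tri (a : ℤ) : ℕ := (a*(a+1)/2).toNat

theorem Tri_two (a : ℤ) : 2 * (Tri a : ℤ) = a*(a+1) := by
  unfold Tri
  have h1 : (2:ℤ) ∣ a*(a+1) := (Int.even_mul_succ_self a).two_dvd
  have h2 : 0 ≤ a*(a+1) := by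
    rcases le_or_gt 0 a with h | h
    · positivity
    · exact mul_nonneg_of_nonpos_of_nonpos h.le (by omega)
  omega

theorem Tri_abs (a : ℤ) : a.natAbs ≤ 2 * Tri a + 1 := by
  have := Tri_two a
  rcases le_or_gt 0 a with h | h
  · zify; rw [abs_of_nonneg h]; nlinarith
  · zify; rw [abs_of_neg h]; nlinarith

theorem Tri_eq_iff (a : ℤ) (n : ℕ) : Tri a = n ↔ a*(a+1) = 2*n := by
  rw [← Tri_two]; omega

instance (n : ℕ) : Finite {a : ℤ // Tri a = n} := by
  apply Set.Finite.subset (Set.finite_Icc (-(2*n+1:ℤ)) (2*n+1))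
  intro a ha
  have := Tri_abs a
  rw [Set.mem_Icc]
  have h2 : Tri a = n := ha
  omega

/-- theta -/
def Th : PowerSeries ℤ := gen Tri

theorem Th_psi : Th = 2 * psi := by
  ext n
  rw [Th, show (2:PowerSeries ℤ) = PowerSeries.C 2 by simp, PowerSeries.coeff_C_mul, psi, gen, gen, PowerSeries.coeff_mk, PowerSeries.coeff_mk]
  have e : {a : ℤ // Tri a = n} ≃ {k : ℕ // k*(k+1)/2 = n} ⊕ {k : ℕ // k*(k+1)/2 = n} := by
    have hh : ∀ k : ℕ, k*(k+1)/2*2 = k*(k+1) := fun k => Nat.div_mul_cancel (Nat.even_mul_succ_self k).two_dvd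
    refine
      { toFun := fun a => if h : 0 ≤ a.1 then Sum.inl ⟨a.1.toNat, ?_⟩ else Sum.inr ⟨(-1-a.1).toNat, ?_⟩
        invFun := Sum.elim (fun k => ⟨(k.1:ℤ), ?_⟩) (fun k => ⟨-1-(k.1:ℤ), ?_⟩)
        left_inv := ?_
        right_inv := ?_ }
    · have := hh a.1.toNat
      have h2 := (Tri_eq_iff _ _).1 a.2
      zify at this ⊢
      rw [Int.toNat_of_nonneg h] at this ⊢
      omega
    · have := hh (-1-a.1).toNat
      have h2 := (Tri_eq_iff _ _).1 a.2
      zify at this ⊢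
      rw [Int.toNat_of_nonneg (by omega)] at this ⊢
      have h3 : (-1-a.1)*(-1-a.1+1) = a.1*(a.1+1) := by ring
      rw [h3] at this ⊢
      omega
    · rw [Tri_eq_iff]; have := hh k.1; rw [k.2] at this; zify at this; linarith
    · rw [Tri_eq_iff]; have := hh k.1; rw [k.2] at this; zify at this; linarith
    · rintro ⟨a, ha⟩
      by_cases h : 0 ≤ a
      · simp [h]
      · simp [h]; omega
    · rintro (⟨k, hk⟩ | ⟨k, hk⟩)
      · simp
      · have : ¬ (0 ≤ -1 - (k:ℤ)) := by omega
        show (if h : 0 ≤ -1-(k:ℤ) then Sum.inl _ else Sum.inr _) = _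
        rw [dif_neg this]
        simp
  have hf : Finite {k : ℕ // k*(k+1)/2 = n} := Finite.of_injective (fun k => e.symm (Sum.inl k)) (by
    intro a b h; simpa using h)
  rw [Nat.card_congr e, Nat.card_sum]; push_cast; ring

open PowerSeries in
theorem coeff_W (n : ℕ) : coeff n (Th * expand 7 (by norm_num) Th) = Nat.card {p : ℤ × ℤ // Tri p.1 + 7 * Tri p.2 = n} := by
  have e : {p : ℤ × ℤ // Tri p.1 + 7 * Tri p.2 = n} ≃ Σ ij : Finset.HasAntidiagonal.antidiagonal n, {a : ℤ // Tri a = ij.1.1} × {b : ℤ // 7 * Tri b = ij.1.2} :=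
    { toFun := fun p => ⟨⟨(Tri p.1.1, 7 * Tri p.1.2), Finset.HasAntidiagonal.mem_antidiagonal.2 p.2⟩, ⟨p.1.1, rfl⟩, ⟨p.1.2, rfl⟩⟩
      invFun := fun x => ⟨(x.2.1.1, x.2.2.1), by rw [x.2.1.2, x.2.2.2]; exact Finset.HasAntidiagonal.mem_antidiagonal.1 x.1.2⟩
      left_inv := fun p => rfl
      right_inv := by
        rintro ⟨⟨⟨i, j⟩, hij⟩, ⟨a, ha⟩, ⟨b, hb⟩⟩
        simp only at ha hb
        subst ha hb
        rfl }
  have hfin : ∀ m : ℕ, Finite {b : ℤ // 7 * Tri b = m} := by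
    intro m
    apply Finite.of_injective (fun b : {b : ℤ // 7 * Tri b = m} => (⟨b.1, by have := b.2; omega⟩ : {b : ℤ // Tri b = m/7}))
    intro a b h; ext; simpa using h
  have h7 : ∀ m : ℕ, coeff m (expand 7 (by norm_num) Th) = (Nat.card {b : ℤ // 7 * Tri b = m} : ℤ) := by
    intro m
    rw [coeff_expand]
    split_ifs with h
    · obtain ⟨k, rfl⟩ := h
      rw [Nat.mul_div_cancel_left _ (by norm_num), Th, gen, coeff_mk]
      congr 1
      apply Nat.card_congr
      apply Equiv.subtypeEquivRight
      intro x; omega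
    · have : IsEmpty {b : ℤ // 7 * Tri b = m} := ⟨fun b => h ⟨_, b.2.symm⟩⟩
      rw [Nat.card_of_isEmpty]; rfl
  rw [Nat.card_congr e, Nat.card_sigma, coeff_mul, Finset.univ_eq_attach, Finset.sum_attach (Finset.HasAntidiagonal.antidiagonal n) (fun ij => Nat.card ({a : ℤ // Tri a = ij.1} × {b : ℤ // 7 * Tri b = ij.2}))]
  push_cast
  refine Finset.sum_congr rfl fun ij _ => ?_
  rw [h7, Nat.card_prod, Th, gen, coeff_mk]; push_cast; rfl

/-- bijection -/
def bF (p : ℤ × ℤ) : ℤ × ℤ := if (p.1-p.2-2)%4=0 then (2*p.2 - (p.2-p.1-2)/4, (p.2-p.1-2)/4)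
  else ((p.1+p.2-1)/4-2*p.2-1, (p.1+p.2-1)/4)

/-- bijection inverse -/
def bG (p : ℤ × ℤ) : ℤ × ℤ := if (p.1-p.2)%2=0 then ((p.1-7*p.2-4)/2, (p.1+p.2)/2)
  else ((p.1+7*p.2+3)/2, (p.2-p.1-1)/2)

theorem bF1 (b d : ℤ) : bF (b-2-4*d, b) = (2*b-d, d) := by
  unfold bF; dsimp only
  rw [if_pos (by omega)]
  ext <;> dsimp only <;> omega
theorem bF2 (b d : ℤ) : bF (1-b+4*d, b) = (d-2*b-1, d) := by
  unfold bF; dsimp only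
  rw [if_neg (by omega)]
  ext <;> dsimp only <;> omega
theorem bG1 (b d : ℤ) : bG (2*b-d, d) = (b-2-4*d, b) := by
  unfold bG; dsimp only
  rw [if_pos (by omega)]
  ext <;> dsimp only <;> omega
theorem bG2 (b d : ℤ) : bG (d-2*b-1, d) = (1-b+4*d, b) := by
  unfold bG; dsimp only
  rw [if_neg (by omega)]
  ext <;> dsimp only <;> omega

theorem card_odd (m : ℕ) : Nat.card {p : ℤ × ℤ // Tri p.1 + 7 * Tri p.2 = 2*m+1} = Nat.card {p : ℤ × ℤ // Tri p.1 + 7 * Tri p.2 = m} := by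
  have key : ∀ (n : ℕ) (a b : ℤ), Tri a + 7 * Tri b = n ↔ a*(a+1) + 7*(b*(b+1)) = 2*n := by
    intro n a b
    rw [← Tri_two, ← Tri_two]; omega
  have par : ∀ p : ℤ × ℤ, Tri p.1 + 7 * Tri p.2 = 2*m+1 → ∃ b d, p = (b-2-4*d, b) ∨ p = (1-b+4*d, b) := by
    rintro ⟨a, b⟩ h
    have h := (key _ _ _).1 h
    push_cast at h
    have : ((a-b-2)%4=0) ∨ ((a+b-1)%4=0) := by
      obtain ⟨x, y, hx⟩ : ∃ x y : ℤ, a = 4*x+y ∧ 0 ≤ y ∧ y < 4 := ⟨a/4, a%4, by omega⟩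
      obtain ⟨z, w, hz⟩ : ∃ x y : ℤ, b = 4*x+y ∧ 0 ≤ y ∧ y < 4 := ⟨b/4, b%4, by omega⟩
      obtain ⟨rfl, hy0, hy1⟩ := hx
      obtain ⟨rfl, hw0, hw1⟩ := hz
      interval_cases y <;> interval_cases w <;> first | omega | (exfalso; ring_nf at h; omega)
    rcases this with h | h
    · exact ⟨b, (b-a-2)/4, Or.inl (by ext <;> dsimp only; omega)⟩
    · exact ⟨b, (a+b-1)/4, Or.inr (by ext <;> dsimp only; omega)⟩
  have par2 : ∀ p : ℤ × ℤ, ∃ b d, p = (2*b-d, d) ∨ p = (d-2*b-1, d) := by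
    rintro ⟨a, b⟩
    rcases Int.emod_two_eq_zero_or_one (a+b) with h | h
    · exact ⟨(a+b)/2, b, Or.inl (by ext <;> dsimp only; omega)⟩
    · exact ⟨(b-a-1)/2, b, Or.inr (by ext <;> dsimp only; omega)⟩
  apply Nat.card_congr
  refine
    { toFun := fun p => ⟨bF p.1, ?_⟩
      invFun := fun p => ⟨bG p.1, ?_⟩
      left_inv := ?_
      right_inv := ?_ }
  · obtain ⟨p, hp⟩ := p
    obtain ⟨b, d, rfl | rfl⟩ := par p hp
    · have := (key _ _ _).1 hp
      simp only [bF1]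
      rw [key]; push_cast at this; linarith
    · have := (key _ _ _).1 hp
      simp only [bF2]
      rw [key]; push_cast at this; linarith
  · obtain ⟨p, hp⟩ := p
    obtain ⟨b, d, rfl | rfl⟩ := par2 p
    · have := (key _ _ _).1 hp
      simp only [bG1]
      rw [key]; push_cast; linarith
    · have := (key _ _ _).1 hp
      simp only [bG2]
      rw [key]; push_cast; linarith
  · rintro ⟨p, hp⟩
    obtain ⟨b, d, rfl | rfl⟩ := par p hp
    · simp only [bF1, bG1]
    · simp only [bF2, bG2]
  · rintro ⟨p, hp⟩
    obtain ⟨b, d, rfl | rfl⟩ := par2 p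
    · simp only [bF1, bG1]
    · simp only [bF2, bG2]

open PowerSeries in
theorem GzJ : J 2 ^ 3 * J 14 ^ 3 = J 1 ^ 2 * J 7 ^ 2 * J 4 * J 28 + 2 * X * J 1 * J 7 * J 4 ^ 2 * J 28 ^ 2 := by
  set e7 := expand (R := ℤ) 7 (by norm_num) with he7
  set e2 := expand (R := ℤ) 2 two_ne_zero with he2
  have hW : Th * e7 Th - rescale (-1) (Th * e7 Th) = 2 * X * e2 (Th * e7 Th) := by
    ext n
    rw [map_sub, coeff_rescale, mul_assoc, show (2:PowerSeries ℤ) = C 2 by simp, coeff_C_mul]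
    rcases n with _ | n
    · simp
    rw [coeff_succ_X_mul, coeff_expand]
    split_ifs with h
    · obtain ⟨m, rfl⟩ := h
      rw [Nat.mul_div_cancel_left _ (by norm_num), coeff_W, coeff_W, card_odd, pow_succ, pow_mul]
      norm_num; ring
    · have : Even (n+1) := by rw [Nat.even_iff]; omega
      rw [this.neg_one_pow]; simp
  rw [Th_psi] at hW
  have hc : psi * e7 psi - rescale (-1) psi * e7 (rescale (-1) psi) = 2 * X * (e2 psi * e2 (e7 psi)) := by
    apply mul_left_cancel₀ (show (4:PowerSeries ℤ) ≠ 0 from fun h => by have := congrArg constantCoeff h; rw [map_ofNat] at this; simp at this)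
    simp only [map_mul, map_ofNat] at hW
    rw [resc_seven] at hW
    linear_combination hW
  have J' : ∀ a b c : ℕ, (hb : 1 ≤ b) → (ha : a ≠ 0) → a * b = c → expand a ha (J b) = J c := fun a b c hb ha h => h ▸ J_expand b a hb ha
  have hc2 : e2 (e7 psi) = e7 (e2 psi) := by
    rw [he2, he7, ← expand_mul, ← expand_mul]
  rw [hc2] at hc
  have a1 := psi_J
  have a3 := congrArg e2 psi_J
  have a2 := congrArg (rescale (-1)) psi_J
  have a4 := Jneg
  have hj2 : rescale (-1) (J 2) = J 2 := by
    rw [← J' 2 1 2 le_rfl two_ne_zero rfl, resc_even]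
  rw [map_mul, map_pow, J' 2 1 2 le_rfl two_ne_zero rfl, J' 2 2 4 (by norm_num) two_ne_zero rfl] at a3
  rw [map_mul, map_pow, hj2] at a2
  have a2' : rescale (-1) psi * J 2 = J 1 * J 4 := by
    apply mul_left_cancel₀ (pow_ne_zero 2 (J_ne 2 (by norm_num)))
    linear_combination (J 1 * J 4) * a2 - rescale (-1) psi * a4
  have b1 := congrArg e7 a1
  have b2 := congrArg e7 a2'
  have b3 := congrArg e7 a3
  have n7 : (7:ℕ) ≠ 0 := by norm_num
  simp only [map_mul, map_pow, he7, J' 7 1 7 le_rfl n7 rfl, J' 7 2 14 (by norm_num) n7 rfl, J' 7 4 28 (by norm_num) n7 rfl] at b1 b2 b3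
  rw [← he7] at b1 b2 b3
  apply mul_left_cancel₀ (mul_ne_zero (J_ne 2 (by norm_num)) (J_ne 14 (by norm_num)))
  generalize e7 psi = x1 at *
  generalize e7 (rescale (-1) psi) = x2 at *
  generalize e7 (e2 psi) = x3 at *
  generalize e2 psi = y3 at *
  generalize psi = y1 at *
  generalize rescale (-1) y1 = y2 at *
  have c1 : y1 * J 1 * (x1 * J 7) = J 2 ^ 2 * J 14 ^ 2 := by rw [a1, b1]
  have c2 : y2 * J 2 * (x2 * J 14) = J 1 * J 4 * (J 7 * J 28) := by rw [a2', b2]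
  have c3 : y3 * J 2 * (x3 * J 14) = J 4 ^ 2 * J 28 ^ 2 := by rw [a3, b3]
  linear_combination (-J 2 ^2 * J 14 ^ 2) * c1 + J 1 * J 7 * J 2 * J 14 * c2  + 2*X*J 1 * J 7 * J 2 * J 14 * c3 + (J 1 * J 7 * J 2^2 * J 14 ^ 2) * hc

/-- the field, raw version -/
abbrev K0 := LaurentSeries ℂ

theorem K0_ext (f g : K0) (h : ∀ n : ℤ, f.coeff n = g.coeff n) : f = g := HahnSeries.ext (funext h)

/-- embedding of integral power series -/
def i0 : PowerSeries ℤ →+* K0 := (HahnSeries.ofPowerSeries ℤ ℂ).comp (PowerSeries.map (Int.castRingHom ℂ))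

/-- q -> q^m -/
def V0 (m : ℕ) [NeZero m] : K0 →+* K0 :=
  HahnSeries.embDomainRingHom (AddMonoidHom.mulLeft (m:ℤ))
    (fun a b h => by
      have : (m:ℤ) ≠ 0 := by exact_mod_cast NeZero.ne m
      exact mul_left_cancel₀ this h)
    (fun a b => by
      have : (0:ℤ) < m := by exact_mod_cast Nat.pos_of_ne_zero (NeZero.ne m)
      exact mul_le_mul_iff_right₀ this)

theorem V0_coeff (m : ℕ) [NeZero m] (f : K0) (n : ℤ) : (V0 m f).coeff (m * n) = f.coeff n :=
  HahnSeries.embDomain_coeff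

theorem V0_coeff_nd (m : ℕ) [NeZero m] (f : K0) (n : ℤ) (h : ¬ (m:ℤ) ∣ n) : (V0 m f).coeff n = 0 := by
  apply HahnSeries.embDomain_notin_image_support
  rintro ⟨k, _, hk⟩
  exact h ⟨k, hk.symm⟩

theorem V0_inj (m : ℕ) [NeZero m] (f g : K0) (h : V0 m f = V0 m g) : f = g := by
  apply K0_ext; intro n
  rw [← V0_coeff m f, h, V0_coeff]

/-- q -> c q -/
def sg0 (c : ℂˣ) : K0 →+* K0 where
  toFun f := ⟨fun n => (c:ℂ)^n * f.coeff n, f.isPWO_support.mono (by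
    intro n hn h
    apply hn
    simp only [h, mul_zero])⟩
  map_one' := by
    ext n
    simp only [HahnSeries.coeff_one]
    split_ifs with h
    · simp [h]
    · simp
  map_zero' := by ext n; simp
  map_add' f g := by ext n; simp [mul_add]
  map_mul' f g := by
    ext n
    simp only [HahnSeries.coeff_mul, Finset.mul_sum]
    apply Finset.sum_congr
    · ext x
      simp only [Finset.mem_antidiagonal, HahnSeries.mem_support]
      simp [zpow_ne_zero _ c.ne_zero]
    · intro x hx
      rw [Finset.mem_antidiagonal] at hx
      rw [← hx.2.2, zpow_add₀ c.ne_zero]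
      ring

theorem sg0_coeff (c : ℂˣ) (f : K0) (n : ℤ) : (sg0 c f).coeff n = (c:ℂ)^n * f.coeff n := rfl

/-- the U operator -/
def U0 (f : K0) : K0 := ⟨fun n => f.coeff (7*n), by
  rw [Set.isPWO_iff_isWF]
  have h := f.isPWO_support.isWF
  rw [Set.IsWF, Set.wellFoundedOn_iff_no_descending_seq] at h ⊢
  intro g hg
  refine h ⟨⟨fun n => 7 * g n, fun a b hab => g.injective (by simpa using hab)⟩, ?_⟩ (fun n => hg n)
  intro a b
  have := g.map_rel_iff (a := a) (b := b)
  rw [← this]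
  exact mul_lt_mul_iff_right₀ (by norm_num : (0:ℤ) < 7)⟩

theorem U0_coeff (f : K0) (n : ℤ) : (U0 f).coeff n = f.coeff (7*n) := rfl
theorem U0_add (f g : K0) : U0 (f+g) = U0 f + U0 g := by
  apply K0_ext; intro n; simp [U0_coeff]
theorem U0_zero : U0 0 = 0 := by
  apply K0_ext; intro n; simp [U0_coeff]

theorem exists_zeta : ∃ z : ℂˣ, IsPrimitiveRoot (z:ℂ) 7 := by
  have h := Complex.isPrimitiveRoot_exp 7 (by norm_num)
  exact ⟨(h.isUnit (by norm_num)).unit, h⟩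

/-- primitive root -/
def ze : ℂˣ := exists_zeta.choose
theorem ze_prim : IsPrimitiveRoot (ze:ℂ) 7 := exists_zeta.choose_spec

theorem sum_sg0 (f : K0) : ∑ i ∈ Finset.range 7, sg0 (ze^i) f = 7 * V0 7 (U0 f) := by
  apply K0_ext; intro n
  rw [show (7:K0) = HahnSeries.C 7 from (map_ofNat (HahnSeries.C (Γ := ℤ) (R := ℂ)) 7).symm]
  rw [HahnSeries.C_mul_eq_smul, HahnSeries.coeff_smul, HahnSeries.coeff_sum]
  simp only [sg0_coeff]
  rw [← Finset.sum_mul, smul_eq_mul]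
  have h0 : ∀ i : ℕ, (((ze^i : ℂˣ) : ℂ))^n = ((ze:ℂ)^n)^i := by
    intro i; rw [Units.val_pow_eq_pow_val, ← zpow_natCast, ← zpow_natCast, ← zpow_mul, ← zpow_mul, mul_comm]
  simp only [h0]
  by_cases h : (7:ℤ) ∣ n
  · obtain ⟨k, rfl⟩ := h
    rw [zpow_mul, show (ze:ℂ)^(7:ℤ) = 1 by exact_mod_cast ze_prim.pow_eq_one]
    rw [show ((7:ℤ)*k) = ((7:ℕ):ℤ) * k by norm_num, V0_coeff, U0_coeff]
    simp
  · rw [V0_coeff_nd 7 _ n (by exact_mod_cast h), mul_zero]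
    have h1 : (ze:ℂ)^n ≠ 1 := by
      intro h2; apply h
      exact_mod_cast (ze_prim.zpow_eq_one_iff_dvd n).1 h2
    have h2 : (((ze:ℂ)^n))^7 = 1 := by
      rw [← zpow_natCast, ← zpow_mul, mul_comm, zpow_mul, zpow_natCast, ze_prim.pow_eq_one, one_zpow]
    rw [geom_sum_eq h1, h2]; simp

theorem sg0_V0 (i : ℕ) (f : K0) : sg0 (ze^i) (V0 7 f) = V0 7 f := by
  apply K0_ext; intro n
  rw [sg0_coeff]
  by_cases h : (7:ℤ) ∣ n
  · obtain ⟨k, rfl⟩ := h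
    rw [zpow_mul, Units.val_pow_eq_pow_val]
    rw [show ((ze:ℂ)^i)^(7:ℤ) = 1 by
      rw [← zpow_natCast, ← zpow_mul, mul_comm, zpow_mul, show (ze:ℂ)^(7:ℤ) = 1 by exact_mod_cast ze_prim.pow_eq_one, one_zpow]]
    simp
  · rw [V0_coeff_nd 7 _ n (by exact_mod_cast h), mul_zero]

theorem seven_ne : (7:K0) ≠ 0 := by
  rw [show (7:K0) = HahnSeries.C 7 from (map_ofNat (HahnSeries.C (Γ := ℤ) (R := ℂ)) 7).symm]
  simp

instance : CharZero K0 := charZero_of_injective_ringHom (f := (HahnSeries.C : ℂ →+* HahnSeries ℤ ℂ)) HahnSeries.C_injective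

theorem U0_V (c f : K0) : U0 (V0 7 c * f) = c * U0 f := by
  apply V0_inj 7
  apply mul_left_cancel₀ seven_ne
  rw [← sum_sg0, map_mul]
  simp only [map_mul, sg0_V0]
  rw [← Finset.mul_sum, sum_sg0]; ring

theorem V0_V0 (m n k : ℕ) [NeZero m] [NeZero n] [NeZero k] (h : m * n = k) (f : K0) : V0 m (V0 n f) = V0 k f := by
  subst h
  apply K0_ext; intro x
  by_cases h : (m:ℤ) ∣ x
  · obtain ⟨y, rfl⟩ := h
    rw [V0_coeff]
    by_cases h : (n:ℤ) ∣ y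
    · obtain ⟨z, rfl⟩ := h
      rw [V0_coeff, show (m:ℤ)*(n*z) = ((m*n:ℕ):ℤ)*z by push_cast; ring, V0_coeff]
    · rw [V0_coeff_nd _ _ _ h, V0_coeff_nd]
      rintro ⟨z, hz⟩
      apply h
      refine ⟨z, mul_left_cancel₀ (show (m:ℤ) ≠ 0 by exact_mod_cast NeZero.ne m) ?_⟩
      rw [hz]; push_cast; ring
  · rw [V0_coeff_nd _ _ _ h, V0_coeff_nd]
    rintro ⟨z, hz⟩
    exact h ⟨n*z, by rw [hz]; push_cast; ring⟩

theorem ofPS_neg (f : PowerSeries ℂ) (n : ℤ) (h : n < 0) : (HahnSeries.ofPowerSeries ℤ ℂ f).coeff n = 0 := by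
  rw [HahnSeries.ofPowerSeries_apply]
  apply HahnSeries.embDomain_notin_image_support
  rintro ⟨k, _, hk⟩
  simp at hk; omega

theorem V0_ofPS (m : ℕ) [NeZero m] (f : PowerSeries ℂ) : V0 m (HahnSeries.ofPowerSeries ℤ ℂ f) = HahnSeries.ofPowerSeries ℤ ℂ (PowerSeries.expand m (NeZero.ne m) f) := by
  have hm : (0:ℤ) < m := by exact_mod_cast Nat.pos_of_ne_zero (NeZero.ne m)
  apply K0_ext; intro x
  rcases lt_or_ge x 0 with hx | hx
  · rw [ofPS_neg _ _ hx]
    by_cases h : (m:ℤ) ∣ x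
    · obtain ⟨y, rfl⟩ := h
      rw [V0_coeff, ofPS_neg]
      by_contra hy
      push Not at hy
      nlinarith
    · rw [V0_coeff_nd _ _ _ h]
  · lift x to ℕ using hx
    rw [HahnSeries.ofPowerSeries_apply_coeff, PowerSeries.coeff_expand]
    split_ifs with h
    · obtain ⟨y, rfl⟩ := h
      rw [Nat.cast_mul, V0_coeff, HahnSeries.ofPowerSeries_apply_coeff, Nat.mul_div_cancel_left]
      exact Nat.pos_of_ne_zero (NeZero.ne m)
    · rw [V0_coeff_nd _ _ _ (by exact_mod_cast h)]

theorem V0_i0 (m : ℕ) [NeZero m] (f : PowerSeries ℤ) : V0 m (i0 f) = i0 (PowerSeries.expand m (NeZero.ne m) f) := by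
  unfold i0
  simp only [RingHom.comp_apply]
  rw [V0_ofPS, PowerSeries.map_expand]

/-- leading coefficient calculus -/
def LC0 (f : K0) (k : ℤ) (c : ℂ) : Prop := ∃ g : PowerSeries ℂ, f = HahnSeries.single k 1 * HahnSeries.ofPowerSeries ℤ ℂ g ∧ PowerSeries.constantCoeff g = c

theorem LC0.coeff {f : K0} {k : ℤ} {c : ℂ} (h : LC0 f k c) : f.coeff k = c := by
  obtain ⟨g, rfl, hg⟩ := h
  have := HahnSeries.coeff_single_mul_add (r := (1:ℂ)) (x := HahnSeries.ofPowerSeries ℤ ℂ g) (a := 0) (b := k)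
  rw [zero_add] at this
  rw [this, one_mul, ← hg]
  simpa using HahnSeries.ofPowerSeries_apply_coeff (Γ := ℤ) g 0

theorem LC0.coeff_lt {f : K0} {k : ℤ} {c : ℂ} (h : LC0 f k c) (n : ℤ) (hn : n < k) : f.coeff n = 0 := by
  obtain ⟨g, rfl, hg⟩ := h
  have := HahnSeries.coeff_single_mul_add (r := (1:ℂ)) (x := HahnSeries.ofPowerSeries ℤ ℂ g) (a := n-k) (b := k)
  rw [sub_add_cancel] at this
  rw [this, one_mul, ofPS_neg _ _ (by omega)]

theorem LC0.mul {f g : K0} {k l : ℤ} {c d : ℂ} (hf : LC0 f k c) (hg : LC0 g l d) : LC0 (f*g) (k+l) (c*d) := by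
  obtain ⟨f, rfl, rfl⟩ := hf
  obtain ⟨g, rfl, rfl⟩ := hg
  refine ⟨f*g, ?_, by simp⟩
  rw [map_mul, show (HahnSeries.single (k+l) (1:ℂ)) = HahnSeries.single k 1 * HahnSeries.single l 1 by simp]
  ring

theorem LC0.add {f g : K0} {k : ℤ} {c d : ℂ} (hf : LC0 f k c) (hg : LC0 g k d) : LC0 (f+g) k (c+d) := by
  obtain ⟨f, rfl, rfl⟩ := hf
  obtain ⟨g, rfl, rfl⟩ := hg
  exact ⟨f+g, by rw [map_add]; ring, by simp⟩

theorem LC0.neg {f : K0} {k : ℤ} {c : ℂ} (hf : LC0 f k c) : LC0 (-f) k (-c) := by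
  obtain ⟨f, rfl, rfl⟩ := hf
  exact ⟨-f, by rw [map_neg]; ring, by simp⟩

theorem LC0.sub {f g : K0} {k : ℤ} {c d : ℂ} (hf : LC0 f k c) (hg : LC0 g k d) : LC0 (f-g) k (c-d) := by
  rw [sub_eq_add_neg, sub_eq_add_neg]; exact hf.add hg.neg

theorem LC0.low {f : K0} {k : ℤ} {c : ℂ} (hf : LC0 f k c) (l : ℤ) (h : l < k) : LC0 f l 0 := by
  obtain ⟨f, rfl, rfl⟩ := hf
  obtain ⟨n, rfl⟩ : ∃ n : ℕ, k = l + (n+1 : ℕ) := ⟨(k-l-1).toNat, by omega⟩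
  refine ⟨PowerSeries.X^(n+1) * f, ?_, by simp⟩
  rw [map_mul, HahnSeries.ofPowerSeries_X_pow, ← mul_assoc]; simp

theorem LC0.inv {f : K0} {k : ℤ} {c : ℂ} (hf : LC0 f k c) (hc : c ≠ 0) : LC0 f⁻¹ (-k) c⁻¹ := by
  obtain ⟨f, rfl, rfl⟩ := hf
  refine ⟨f⁻¹, ?_, by simp⟩
  symm
  apply eq_inv_of_mul_eq_one_left
  have h1 : HahnSeries.ofPowerSeries ℤ ℂ f⁻¹ * HahnSeries.ofPowerSeries ℤ ℂ f = 1 := by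
    rw [← map_mul, PowerSeries.inv_mul_cancel _ hc, map_one]
  have h2 : (HahnSeries.single (-k) (1:ℂ)) * (HahnSeries.single k (1:ℂ)) = 1 := by simp
  linear_combination (HahnSeries.single (-k) (1:ℂ)) * (HahnSeries.single k (1:ℂ)) * h1 + h2

theorem LC0.ne {f : K0} {k : ℤ} {c : ℂ} (hf : LC0 f k c) (hc : c ≠ 0) : f ≠ 0 := by
  rintro rfl
  have := hf.coeff
  simp at this
  exact hc this.symm

theorem LC0.div {f g : K0} {k l : ℤ} {c d : ℂ} (hf : LC0 f k c) (hg : LC0 g l d) (hd : d ≠ 0) : LC0 (f/g) (k-l) (c/d) := by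
  rw [div_eq_mul_inv, div_eq_mul_inv, sub_eq_add_neg]; exact hf.mul (hg.inv hd)

theorem LC0.pow {f : K0} {k : ℤ} {c : ℂ} (hf : LC0 f k c) (n : ℕ) : LC0 (f^n) (n*k) (c^n) := by
  induction n with
  | zero => exact ⟨1, by simp, by simp⟩
  | succ n ih =>
    rw [pow_succ, pow_succ]
    convert ih.mul hf using 1
    push_cast; ring

theorem LC0_one : LC0 1 0 1 := ⟨1, by simp, by simp⟩
theorem LC0_ofNat (n : ℕ) [n.AtLeastTwo] : LC0 (OfNat.ofNat n) 0 (OfNat.ofNat n) :=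
  ⟨OfNat.ofNat n, by rw [map_ofNat]; simp, map_ofNat _ _⟩

theorem LC0.congr {f : K0} {k l : ℤ} {c d : ℂ} (hf : LC0 f k c) (hk : k = l) (hc : c = d) : LC0 f l d := by
  subst hk hc; exact hf

theorem LC0.eq {f : K0} {k : ℤ} {c d : ℂ} (hf : LC0 f k c) (hg : LC0 f k d) : c = d := by
  rw [← hf.coeff, hg.coeff]

theorem LC0_V0 (m : ℕ) [NeZero m] {f : K0} {k : ℤ} {c : ℂ} (hf : LC0 f k c) : LC0 (V0 m f) (m*k) c := by
  obtain ⟨g, rfl, rfl⟩ := hf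
  refine ⟨PowerSeries.expand m (NeZero.ne m) g, ?_, by simp⟩
  rw [map_mul, V0_ofPS]
  congr 1
  exact HahnSeries.embDomain_single

/-- the field of Laurent series -/
def KK : Type := K0
instance : Field KK := inferInstanceAs (Field K0)
instance : CharZero KK := inferInstanceAs (CharZero K0)
/-- identity map -/
def toKK : K0 →+* KK := RingHom.id K0
theorem toKK_inj : Function.Injective toKK := fun _ _ h => h
/-- embedding of integral power series -/
def io : PowerSeries ℤ →+* KK := toKK.comp i0
/-- q -> q^m -/
def VV (m : ℕ) [NeZero m] : KK →+* KK := V0 m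
theorem VV_inj (m : ℕ) [NeZero m] (f g : KK) (h : VV m f = VV m g) : f = g := V0_inj m f g h
/-- q -> z^i q -/
def sg (i : ℕ) : KK →+* KK := sg0 (ze^i)
/-- the U operator -/
def UU (f : KK) : KK := U0 f
theorem UU_add (f g : KK) : UU (f+g) = UU f + UU g := U0_add f g
theorem UU_zero : UU 0 = 0 := U0_zero
theorem sum_sg (f : KK) : ∑ i ∈ Finset.range 7, sg i f = 7 * VV 7 (UU f) := sum_sg0 f
theorem sg_VV (i : ℕ) (f : KK) : sg i (VV 7 f) = VV 7 f := sg0_V0 i f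
theorem UU_V (c f : KK) : UU (VV 7 c * f) = c * UU f := U0_V c f
theorem VV_VV (m n k : ℕ) [NeZero m] [NeZero n] [NeZero k] (h : m * n = k) (f : KK) : VV m (VV n f) = VV k f := V0_V0 m n k h f
theorem VV_io (m : ℕ) [NeZero m] (f : PowerSeries ℤ) : VV m (io f) = io (PowerSeries.expand m (NeZero.ne m) f) := V0_i0 m f
/-- leading coefficient calculus -/
def LC (f : KK) (k : ℤ) (c : ℂ) : Prop := LC0 f k c
section
variable {f g : KK} {k l : ℤ} {c d : ℂ}
theorem LC.mul (hf : LC f k c) (hg : LC g l d) : LC (f*g) (k+l) (c*d) := LC0.mul hf hg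
theorem LC.add (hf : LC f k c) (hg : LC g k d) : LC (f+g) k (c+d) := LC0.add hf hg
theorem LC.neg (hf : LC f k c) : LC (-f) k (-c) := LC0.neg hf
theorem LC.sub (hf : LC f k c) (hg : LC g k d) : LC (f-g) k (c-d) := LC0.sub hf hg
theorem LC.low (hf : LC f k c) (l : ℤ) (h : l < k) : LC f l 0 := LC0.low hf l h
theorem LC.inv (hf : LC f k c) (hc : c ≠ 0) : LC f⁻¹ (-k) c⁻¹ := LC0.inv hf hc
theorem LC.ne (hf : LC f k c) (hc : c ≠ 0) : f ≠ 0 := LC0.ne hf hc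
theorem LC.div (hf : LC f k c) (hg : LC g l d) (hd : d ≠ 0) : LC (f/g) (k-l) (c/d) := LC0.div hf hg hd
theorem LC.pow (hf : LC f k c) (n : ℕ) : LC (f^n) (n*k) (c^n) := LC0.pow hf n
theorem LC_one : LC 1 0 1 := LC0_one
theorem LC_ofNat (n : ℕ) [n.AtLeastTwo] : LC (OfNat.ofNat n) 0 (OfNat.ofNat n) := LC0_ofNat n
theorem LC.congr (hf : LC f k c) (hk : k = l) (hc : c = d) : LC f l d := LC0.congr hf hk hc
theorem LC.eq (hf : LC f k c) (hg : LC f k d) : c = d := LC0.eq hf hg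
theorem LC_VV (m : ℕ) [NeZero m] (hf : LC f k c) : LC (VV m f) (m*k) c := LC0_V0 m hf
end
/-- q -/
def qq : KK := io PowerSeries.X
/-- J_b in K -/
def jj (b : ℕ) : KK := io (J b)

theorem LC_q : LC qq 1 1 := ⟨1, show i0 PowerSeries.X = _ by simp [i0], by simp⟩

theorem LC_j (b : ℕ) (hb : 1 ≤ b) : LC (jj b) 0 1 := by
  refine ⟨PowerSeries.map (Int.castRingHom ℂ) (J b), show i0 (J b) = _ by simp [i0], ?_⟩
  rw [← PowerSeries.coeff_zero_eq_constantCoeff_apply, PowerSeries.coeff_map, J, PowerSeries.coeff_mk]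
  simp [show b ≠ 0 by omega]

theorem jj_ne (b : ℕ) (hb : 1 ≤ b) : jj b ≠ 0 := (LC_j b hb).ne one_ne_zero
theorem qq_ne : qq ≠ 0 := LC_q.ne one_ne_zero
theorem VV_q (m : ℕ) [NeZero m] : VV m qq = qq^m := by
  rw [qq, VV_io, PowerSeries.expand_X, map_pow]
theorem VV_j (m b c : ℕ) [NeZero m] (hb : 1 ≤ b) (h : m * b = c) : VV m (jj b) = jj c := by
  rw [jj, VV_io, J_expand b m hb, h, jj]

/-- t -/
def tt : KK := qq * jj 7^4 / jj 1^4
/-- p1 -/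
def PP : KK := jj 2^4 * jj 7^4 / (qq * jj 1^4 * jj 14^4)
/-- v -/
def vv : KK := qq * jj 2^3 * jj 14^3 / (jj 1^3 * jj 7^3)

theorem jac_aux {K : Type*} [Field K] [CharZero K] (a b a' b' q p w : K) (ha : a ≠ 0) (hb : b ≠ 0) (ha' : a' ≠ 0) (hb' : b' ≠ 0)
    (hq : q ≠ 0) (hG : (a*a')^2 - b*b' = 2*q*(a*a')*(b*b')^2)
    (h1 : a^16 = b^8 + 16*q*a^8*b^16) (h2 : a'^16 = b'^8 + 16*q^7*a'^8*b'^16)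
    (hp : p = b^4/(q^2*b'^4)) (hw : w = q^2*(b*b')^3) :
    (p+1/p)^3 - 3*(p+1/p) = (8*w+7+1/w)^3 - 3*(8*w+7+1/w) := by
  have e1 : (a^8/b^8 + 1/a^8)^2 = 256*q^2*b^16+4/b^8 := by
    have : a^8/b^8 - 1/a^8 = 16*q*b^8 := by
      field_simp
      linear_combination h1
    have h3 : (a^8/b^8) * (1/a^8) = 1/b^8 := by field_simp
    linear_combination (a^8/b^8 - 1/a^8 + 16*q*b^8) * this + 4 * h3
  have e2 : (a'^8/b'^8 + 1/a'^8)^2 = 256*q^14*b'^16+4/b'^8 := by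
    have : a'^8/b'^8 - 1/a'^8 = 16*q^7*b'^8 := by
      field_simp
      linear_combination h2
    have h3 : (a'^8/b'^8) * (1/a'^8) = 1/b'^8 := by field_simp
    linear_combination (a'^8/b'^8 - 1/a'^8 + 16*q^7*b'^8) * this + 4 * h3
  have e3 : (a^8/b^8 + 1/a^8)*(a'^8/b'^8 + 1/a'^8) = 2*((a*a'/(b*b'))^8+(1/(a*a'))^8) - 256*q^8*(b*b')^8 := by
    have u1 : a^8/b^8 - 1/a^8 = 16*q*b^8 := by
      field_simp
      linear_combination h1
    have u2 : a'^8/b'^8 - 1/a'^8 = 16*q^7*b'^8 := by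
      field_simp
      linear_combination h2
    have u3 : (a*a'/(b*b'))^8 = (a^8/b^8) * (a'^8/b'^8) := by field_simp
    have u4 : (1/(a*a'))^8 = (1/a^8) * (1/a'^8) := by field_simp
    rw [u3, u4]
    linear_combination (-a'^8/b'^8 + 1/a'^8) * u1 - 16*q*b^8 * u2
  have e4 : a*a'/(b*b') - 1/(a*a') = 2*q*(b*b') := by
    field_simp
    linear_combination hG
  have e5 : (a*a'/(b*b')) * (1/(a*a')) = 1/(b*b') := by field_simp
  have hc : b*b' ≠ 0 := mul_ne_zero hb hb'
  have hw0 : w ≠ 0 := by rw [hw]; positivity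
  have hp0 : p ≠ 0 := by rw [hp]; positivity
  have e6 : (a*a'/(b*b'))^2 + (1/(a*a'))^2 = 2/(b*b')*(1+2*w) := by
    have : 2/(b*b')*(1+2*w) = 2 * (1/(b*b')) + 4*q^2*(b*b')^2 := by
      rw [hw]; field_simp; ring
    rw [this]
    linear_combination (a*a'/(b*b') - 1/(a*a') + 2*q*(b*b')) * e4 + 2 * e5
  generalize hA : a*a'/(b*b') = A at *
  generalize hB : 1/(a*a') = B at *
  have e7 : A^8+B^8 = 2/(b*b')^4*(2*(1+8*w+8*w^2)^2-1) := by
    have h4 : A^4+B^4 = 2/(b*b')^2*(1+8*w+8*w^2) := by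
      have : A^4+B^4 = (2/(b*b')*(1+2*w))^2 - 2*(1/(b*b'))^2 := by
        rw [← e6, ← e5]; ring
      rw [this]; field_simp; ring
    have : A^8+B^8 = (2/(b*b')^2*(1+8*w+8*w^2))^2 - 2*(1/(b*b'))^4 := by
      rw [← h4, ← e5]; ring
    rw [this]; field_simp
  have e8 : (256*q^2*b^16+4/b^8)*(256*q^14*b'^16+4/b'^8) = (2*(2/(b*b')^4*(2*(1+8*w+8*w^2)^2-1)) - 256*q^8*(b*b')^8)^2 := by
    rw [← e7, ← e1, ← e2, ← e3, mul_pow]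
  have e9 : 1+64*w^4*(p^3+1/p^3)+4096*w^8 = (1+32*w+160*w^2+256*w^3+64*w^4)^2 := by
    have l : 1+64*w^4*(p^3+1/p^3)+4096*w^8 = (b*b')^8/16 * ((256*q^2*b^16+4/b^8)*(256*q^14*b'^16+4/b'^8)) := by
      rw [hp, hw]; field_simp; ring
    have r : (1+32*w+160*w^2+256*w^3+64*w^4)^2 = (b*b')^8/16 * (2*(2/(b*b')^4*(2*(1+8*w+8*w^2)^2-1)) - 256*q^8*(b*b')^8)^2 := by
      have : (1+32*w+160*w^2+256*w^3+64*w^4) = (b*b')^4/4 * (2*(2/(b*b')^4*(2*(1+8*w+8*w^2)^2-1)) - 256*q^8*(b*b')^8) := by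
        have h : (b*b')^4/4 * (2*(2/(b*b')^4*(2*(1+8*w+8*w^2)^2-1)) - 256*q^8*(b*b')^8) = (2*(1+8*w+8*w^2)^2-1) - 64*w^4 := by
          rw [show 64*w^4 = 64*(q^2*(b*b')^3)^4 by rw [hw]]; field_simp
          try ring
        rw [h]; ring
      rw [this]; ring
    rw [l, r, e8]
  have e10 : (p+1/p)^3 - 3*(p+1/p) = p^3+1/p^3 := by field_simp; ring
  have e11 : p^3+1/p^3 = ((1+32*w+160*w^2+256*w^3+64*w^4)^2-1-4096*w^8)/(64*w^4) := by
    rw [← e9]; field_simp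
    try ring
  rw [e10, e11]; field_simp; ring

theorem LC_P : LC PP (-1) 1 := by
  unfold PP
  exact ((((LC_j 2 (by norm_num)).pow 4).mul ((LC_j 7 (by norm_num)).pow 4)).div ((LC_q.mul ((LC_j 1 (by norm_num)).pow 4)).mul ((LC_j 14 (by norm_num)).pow 4)) (by norm_num)).congr (by norm_num) (by norm_num)
theorem LC_v : LC vv 1 1 := by
  unfold vv
  exact (((LC_q.mul ((LC_j 2 (by norm_num)).pow 3)).mul ((LC_j 14 (by norm_num)).pow 3)).div (((LC_j 1 (by norm_num)).pow 3).mul ((LC_j 7 (by norm_num)).pow 3)) (by norm_num)).congr (by norm_num) (by norm_num)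
theorem LC_t : LC tt 1 1 := by
  unfold tt
  exact ((LC_q.mul ((LC_j 7 (by norm_num)).pow 4)).div ((LC_j 1 (by norm_num)).pow 4) (by norm_num)).congr (by norm_num) (by norm_num)
theorem P_ne : PP ≠ 0 := LC_P.ne one_ne_zero
theorem v_ne : vv ≠ 0 := LC_v.ne one_ne_zero
theorem t_ne : tt ≠ 0 := LC_t.ne one_ne_zero
theorem V2_1 : VV 2 (jj 1) = jj 2 := VV_j 2 1 2 (by norm_num) (by norm_num)
theorem V2_2 : VV 2 (jj 2) = jj 4 := VV_j 2 2 4 (by norm_num) (by norm_num)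
theorem V2_7 : VV 2 (jj 7) = jj 14 := VV_j 2 7 14 (by norm_num) (by norm_num)
theorem V2_14 : VV 2 (jj 14) = jj 28 := VV_j 2 14 28 (by norm_num) (by norm_num)
theorem V7_1 : VV 7 (jj 1) = jj 7 := VV_j 7 1 7 (by norm_num) (by norm_num)
theorem V7_2 : VV 7 (jj 2) = jj 14 := VV_j 7 2 14 (by norm_num) (by norm_num)
theorem V7_4 : VV 7 (jj 4) = jj 28 := VV_j 7 4 28 (by norm_num) (by norm_num)
theorem V2P : VV 2 PP = jj 4^4 * jj 14^4 / (qq^2 * jj 2^4 * jj 28^4) := by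
  unfold PP
  simp only [map_mul, map_div₀, map_pow, VV_q, V2_1, V2_2, V2_7, V2_14]
theorem V2v : VV 2 vv = qq^2 * jj 4^3 * jj 28^3 / (jj 2^3 * jj 14^3) := by
  unfold vv
  simp only [map_mul, map_div₀, map_pow, VV_q, V2_1, V2_2, V2_7, V2_14]
theorem V2t : VV 2 tt = tt / PP := by
  unfold tt PP
  have := jj_ne 1 (by norm_num)
  have := jj_ne 7 (by norm_num)
  have := jj_ne 2 (by norm_num)
  have := jj_ne 14 (by norm_num)
  have := qq_ne
  simp only [map_mul, map_div₀, map_pow, VV_q, V2_1, V2_7]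
  field_simp

theorem GzK : jj 2^3*jj 14^3 = jj 1^2*jj 7^2*jj 4*jj 28 + 2*qq*jj 1*jj 7*jj 4^2*jj 28^2 := by
  unfold jj qq
  have := congrArg io GzJ
  simpa only [map_mul, map_pow, map_add, map_ofNat] using this
theorem JacK : jj 2^24 = jj 1^16*jj 4^8 + 16*qq*jj 1^8*jj 4^16 := by
  unfold jj qq
  have := congrArg io JacJ
  simpa only [map_mul, map_pow, map_add, map_ofNat] using this
theorem JacK' : jj 14^24 = jj 7^16*jj 28^8 + 16*qq^7*jj 7^8*jj 28^16 := by
  have := congrArg (VV 7) JacK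
  simpa only [map_mul, map_pow, map_add, map_ofNat, VV_q, V7_1, V7_2, V7_4] using this

theorem jac_aux2 {K : Type*} [Field K] [CharZero K] (j1 j2 j4 j7 j14 j28 q p w : K) (h1 : j1 ≠ 0) (h2 : j2 ≠ 0) (h4 : j4 ≠ 0)
    (h7 : j7 ≠ 0) (h14 : j14 ≠ 0) (h28 : j28 ≠ 0) (hq : q ≠ 0)
    (hG : j2^3*j14^3 = j1^2*j7^2*j4*j28 + 2*q*j1*j7*j4^2*j28^2)
    (hJ : j2^24 = j1^16*j4^8 + 16*q*j1^8*j4^16)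
    (hJ' : j14^24 = j7^16*j28^8 + 16*q^7*j7^8*j28^16)
    (hp : p = j4^4 * j14^4 / (q^2 * j2^4 * j28^4)) (hw : w = q^2 * j4^3 * j28^3 / (j2^3 * j14^3)) :
    (p+1/p)^3 - 3*(p+1/p) = (8*w+7+1/w)^3 - 3*(8*w+7+1/w) := by
  apply jac_aux (j2/j1) (j4/j2) (j14/j7) (j28/j14) q p w (div_ne_zero h2 h1) (div_ne_zero h4 h2) (div_ne_zero h14 h7) (div_ne_zero h28 h14) hq
  · field_simp; linear_combination hG
  · field_simp; linear_combination hJ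
  · field_simp; linear_combination hJ'
  · rw [hp]; field_simp
  · rw [hw]; field_simp

theorem G : PP + 1/PP = 8*vv+7+1/vv := by
  apply VV_inj 2
  simp only [map_add, map_mul, map_div₀, map_ofNat, map_one]
  have key := jac_aux2 _ _ _ _ _ _ _ (VV 2 PP) (VV 2 vv) (jj_ne 1 (by norm_num)) (jj_ne 2 (by norm_num)) (jj_ne 4 (by norm_num)) (jj_ne 7 (by norm_num))
    (jj_ne 14 (by norm_num)) (jj_ne 28 (by norm_num)) qq_ne GzK JacK JacK' V2P V2v
  have L1 : LC (VV 2 PP + 1/VV 2 PP) (-2) 1 := by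
    have a := LC_VV 2 LC_P
    exact ((a.congr (by norm_num) rfl).add ((LC_one.div a one_ne_zero).low (-2) (by norm_num))).congr rfl (by norm_num)
  have L2 : LC (8*VV 2 vv+7+1/VV 2 vv) (-2) 1 := by
    have a := LC_VV 2 LC_v
    exact (((((LC_ofNat 8).mul a).low (-2) (by norm_num)).add ((LC_ofNat 7).low (-2) (by norm_num))).add ((LC_one.div a one_ne_zero).congr (l := -2) (by norm_num) rfl)).congr rfl (by norm_num)
  generalize VV 2 PP + 1/VV 2 PP = c at *
  generalize 8*VV 2 vv+7+1/VV 2 vv = c0 at *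
  have L3 : LC (c^2+c*c0+c0^2-3) (-4) 3 := by
    exact (((((L1.pow 2).congr (l := -4) (by norm_num) rfl).add ((L1.mul L2).congr (by norm_num) rfl)).add ((L2.pow 2).congr (by norm_num) rfl)).sub ((LC_ofNat 3).low (-4) (by norm_num))).congr rfl (by norm_num)
  have h3 := L3.ne (by norm_num)
  have : (c-c0)*(c^2+c*c0+c0^2-3) = 0 := by linear_combination key
  rcases mul_eq_zero.1 this with h | h
  · exact sub_eq_zero.1 h
  · exact absurd h h3

theorem V2_inv0 (f : K0) (h : V0 2 f = f) (hL : LC0 f 0 0) : f = 0 := by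
  have hn : ∀ n : ℕ, f.coeff (n:ℤ) = 0 := by
    intro n
    induction n using Nat.strong_induction_on with
    | _ n ih =>
      rcases Nat.eq_zero_or_pos n with rfl | hpos
      · exact hL.coeff
      · rw [← h]
        rcases Nat.even_or_odd' n with ⟨k, rfl | rfl⟩
        · rw [show ((2*k:ℕ):ℤ) = ((2:ℕ):ℤ) * (k:ℤ) by push_cast; ring, V0_coeff]
          exact ih k (by omega)
        · apply V0_coeff_nd
          push_cast; omega
  apply K0_ext; intro n
  rcases lt_or_ge n 0 with hn' | hn'
  · rw [hL.coeff_lt n hn']; rfl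
  · lift n to ℕ using hn'
    rw [hn]; rfl
theorem V2_inv (f : KK) (h : VV 2 f = f) (hL : LC f 0 0) : f = 0 := V2_inv0 f h hL

/-- inverse of P -/
def Pi : KK := 1/PP
/-- inverse of v -/
def vi : KK := 1/vv
/-- inverse of t -/
def ti : KK := 1/tt
theorem PPi : PP*Pi=1 := mul_one_div_cancel P_ne
theorem vvi : vv*vi=1 := mul_one_div_cancel v_ne
theorem tti : tt*ti=1 := mul_one_div_cancel t_ne
theorem LC_Pi : LC Pi 1 1 := (LC_one.div LC_P one_ne_zero).congr (by norm_num) (by norm_num)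
theorem LC_vi : LC vi (-1) 1 := (LC_one.div LC_v one_ne_zero).congr (by norm_num) (by norm_num)
theorem LC_ti : LC ti (-1) 1 := (LC_one.div LC_t one_ne_zero).congr (by norm_num) (by norm_num)
theorem G' : PP + Pi = 8*vv+7+vi := G

theorem d_aux {K : Type*} [Field K] (j1 j2 j4 j7 j14 j28 q v w : K) (h1 : j1 ≠ 0) (h2 : j2 ≠ 0)
    (h7 : j7 ≠ 0) (h14 : j14 ≠ 0)
    (hG : j2^3*j14^3 = j1^2*j7^2*j4*j28 + 2*q*j1*j7*j4^2*j28^2)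
    (hv : v = q * j2^3 * j14^3 / (j1^3 * j7^3))
    (hw : w = q^2 * j4^3 * j28^3 / (j2^3 * j14^3)) :
    ∃ d, d = q*(j4*j28)/(j1*j7) ∧ v = d*(1+2*d) ∧ w*(1+2*d) = d^2 := by
  refine ⟨_, rfl, ?_, ?_⟩
  · rw [hv]; field_simp; linear_combination q*hG
  · rw [hw]; field_simp; linear_combination -q^2*j4^2*j28^2*hG

theorem sq_aux {K : Type*} [Field K] (d v vi w wi p pi p2 pi2 : K)
    (hd : v = d*(1+2*d)) (hw : w*(1+2*d) = d^2) (h1 : p*pi=1) (h2 : p2*pi2=1) (hv : v*vi=1) (hwi : w*wi=1)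
    (hG : p+pi=8*v+7+vi) (hG2 : p2+pi2=8*w+7+wi) :
    ((p2-pi2)*(d*(1+4*d)))^2 = ((1+d)*(p-pi))^2 := by
  grind
theorem tau_aux {K : Type*} [Field K] [CharZero K] (d v vi w wi p pi p2 pi2 : K)
    (hd : v = d*(1+2*d)) (hw : w*(1+2*d) = d^2) (h1 : p*pi=1) (h2 : p2*pi2=1) (hv : v*vi=1) (hwi : w*wi=1)
    (hG : p+pi=8*v+7+vi) (hG2 : p2+pi2=8*w+7+wi) (hd4 : 1+4*d ≠ 0)
    (hs : (p2-pi2)*(d*(1+4*d)) = (1+d)*(p-pi)) :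
    p2-8-8*w+8*w*pi2=p*(p-8-8*v+8*v*pi) := by
  grind

theorem M1 : ti = PP-8-8*vv+8*vv*Pi := by
  obtain ⟨d, hd, hv, hw⟩ := d_aux (jj 1) (jj 2) (jj 4) (jj 7) (jj 14) (jj 28) qq vv (VV 2 vv) (jj_ne 1 (by norm_num)) (jj_ne 2 (by norm_num))
    (jj_ne 7 (by norm_num)) (jj_ne 14 (by norm_num)) GzK rfl V2v
  have Ld : LC d 1 1 := by
    rw [hd]
    exact ((LC_q.mul ((LC_j 4 (by norm_num)).mul (LC_j 28 (by norm_num)))).div ((LC_j 1 (by norm_num)).mul (LC_j 7 (by norm_num))) (by norm_num)).congr (by norm_num) (by norm_num)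
  have L4 : LC (1+4*d) 0 1 := (LC_one.add (((LC_ofNat 4).mul Ld).low 0 (by norm_num))).congr (by norm_num) (by norm_num)
  have L1 : LC (1+d) 0 1 := (LC_one.add (Ld.low 0 (by norm_num))).congr (by norm_num) (by norm_num)
  have h2 : VV 2 PP * VV 2 Pi = 1 := by rw [← map_mul, PPi, map_one]
  have h3 : VV 2 vv * VV 2 vi = 1 := by rw [← map_mul, vvi, map_one]
  have h4 : VV 2 PP + VV 2 Pi = 8*VV 2 vv + 7 + VV 2 vi := by
    simpa only [map_add, map_mul, map_ofNat] using congrArg (VV 2) G'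
  have sq := sq_aux d vv vi (VV 2 vv) (VV 2 vi) PP Pi (VV 2 PP) (VV 2 Pi) hv hw PPi h2 vvi h3 G' h4
  have hs : (VV 2 PP - VV 2 Pi)*(d*(1+4*d)) = (1+d)*(PP-Pi) := by
    rcases sq_eq_sq_iff_eq_or_eq_neg.1 sq with h | h
    · exact h
    · exfalso
      have a1 : LC ((VV 2 PP - VV 2 Pi)*(d*(1+4*d))) (-1) 1 :=
        ((((LC_VV 2 LC_P).congr (l := -2) (by norm_num) rfl).sub ((LC_VV 2 LC_Pi).low (-2) (by norm_num))).mul (Ld.mul L4)).congr (by norm_num) (by norm_num)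
      have a2 : LC ((1+d)*(PP-Pi)) (-1) 1 := (L1.mul (LC_P.sub (LC_Pi.low (-1) (by norm_num)))).congr (by norm_num) (by norm_num)
      rw [h] at a1
      have := a1.eq a2.neg
      norm_num at this
  have tau := tau_aux d vv vi (VV 2 vv) (VV 2 vi) PP Pi (VV 2 PP) (VV 2 Pi) hv hw PPi h2 vvi h3 G' h4 (L4.ne one_ne_zero) hs
  have Lt : LC (PP-8-8*vv+8*vv*Pi) (-1) 1 :=
    (((LC_P.sub ((LC_ofNat 8).low (-1) (by norm_num))).sub (((LC_ofNat 8).mul LC_v).low (-1) (by norm_num))).add ((((LC_ofNat 8).mul LC_v).mul LC_Pi).low (-1) (by norm_num))).congr rfl (by norm_num)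
  have hz : (PP-8-8*vv+8*vv*Pi)*tt - 1 = 0 := by
    apply V2_inv
    · simp only [map_sub, map_mul, map_add, map_one, map_ofNat, V2t]
      rw [tau]
      have := P_ne
      field_simp
    · exact (((Lt.mul LC_t).congr (by norm_num) rfl).sub LC_one).congr rfl (by norm_num)
  have := tti
  have ht := t_ne
  apply mul_right_cancel₀ ht
  linear_combination this - hz

theorem M2_aux {K : Type*} [Field K] (P Pi v vi t ti: K) (h1 : P*Pi=1) (h2 : v*vi=1) (hG : P+Pi=8*v+7+vi) (h3 : t*ti=1)
    (ht : ti = P-8-8*v+8*v*Pi) : 49*t = Pi-8-8*v+8*v*P := by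
  grind
theorem M2 : 49*tt = Pi-8-8*vv+8*vv*PP := M2_aux _ _ _ _ _ _ PPi vvi G' tti M1

/-- D -/
def DD : KK := 4*(PP-Pi)-24*vv+3*vi
/-- D star -/
def DS : KK := 4*(Pi-PP)-24*vv+3*vi
theorem DD_aux {K : Type*} [Field K] (P Pi v vi : K) (h1 : P*Pi=1) (h2 : v*vi=1) (hG : P+Pi=8*v+7+vi) :
    (4*(P-Pi)-24*v+3*vi)^2*v^2 = (Pi-8-8*v+8*v*P)*(P+64*v^4*Pi^2) := by
  grind
theorem DD_sq : DD^2*vv^2 = 49*tt*(PP+64*vv^4*Pi^2) := by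
  rw [M2]; exact DD_aux _ _ _ _ PPi vvi G'
theorem DS_sq : DS^2*vv^2 = ti*(Pi+64*vv^4*PP^2) := by
  rw [M1]; exact DD_aux _ _ _ _ (by rw [mul_comm]; exact PPi) vvi (by rw [add_comm]; exact G')
theorem LC_DD : LC DD (-1) 7 := by
  have h1 := ((LC_ofNat 4).mul (LC_P.sub (LC_Pi.low (-1) (by norm_num)))).congr (l := -1) (by norm_num) rfl
  have h2 := ((LC_ofNat 24).mul LC_v).low (-1) (by norm_num)
  have h3 := ((LC_ofNat 3).mul LC_vi).congr (l := -1) (by norm_num) rfl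
  exact ((h1.sub h2).add h3).congr rfl (by norm_num)
theorem LC_DS : LC DS (-1) (-1) := by
  have h1 := ((LC_ofNat 4).mul ((LC_Pi.low (-1) (by norm_num)).sub LC_P)).congr (l := -1) (by norm_num) rfl
  have h2 := ((LC_ofNat 24).mul LC_v).low (-1) (by norm_num)
  have h3 := ((LC_ofNat 3).mul LC_vi).congr (l := -1) (by norm_num) rfl
  exact ((h1.sub h2).add h3).congr rfl (by norm_num)

theorem lag_aux {K : Type*} [Field K] (a7 a4 a1 a0 : K) (rho : ℕ → K) (hinj : Set.InjOn rho (Finset.range 8 : Finset ℕ))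
    (hr : ∀ i ∈ Finset.range 8, (rho i)^8 + a7*(rho i)^7 + a4*(rho i)^4 + a1*rho i + a0 = 0) (m : ℕ) (hm : m < 7) :
    ∑ i ∈ Finset.range 8, (rho i)^m / (8*(rho i)^7 + 7*a7*(rho i)^6 + 4*a4*(rho i)^3 + a1) = 0 := by
  classical
  open Polynomial in
  let p : K[X] := X^8 + (C a7*X^7 + C a4*X^4 + C a1*X + C a0)
  have hq : (Polynomial.C a7*Polynomial.X^7 + Polynomial.C a4*Polynomial.X^4 + Polynomial.C a1*Polynomial.X + Polynomial.C a0).degree ≤ 7 := by compute_degree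
  have hq' : (Polynomial.C a7*Polynomial.X^7 + Polynomial.C a4*Polynomial.X^4 + Polynomial.C a1*Polynomial.X + Polynomial.C a0).degree < ((8:ℕ):WithBot ℕ) := lt_of_le_of_lt hq (by decide)
  have hmon : p.Monic := Polynomial.monic_X_pow_add hq'
  have hdeg : p.degree = (8:ℕ) := by
    rw [Polynomial.degree_add_eq_left_of_degree_lt, Polynomial.degree_X_pow]
    rw [Polynomial.degree_X_pow]; exact hq'
  have hp : p = Lagrange.nodal (Finset.range 8) rho := by
    apply Polynomial.eq_of_degree_sub_lt_of_eval_index_eq (v := rho) (Finset.range 8) hinj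
    · rw [Finset.card_range]
      rw [← hdeg]
      apply Polynomial.degree_sub_lt
      · rw [hdeg, Lagrange.degree_nodal, Finset.card_range]
      · exact hmon.ne_zero
      · rw [hmon.leadingCoeff, Lagrange.nodal_monic.leadingCoeff]
    · intro i hi
      rw [Lagrange.eval_nodal_at_node hi]
      simp only [p, Polynomial.eval_add, Polynomial.eval_mul, Polynomial.eval_pow, Polynomial.eval_X, Polynomial.eval_C]
      linear_combination hr i hi
  have h1 := Lagrange.coeff_eq_sum hinj (P := Polynomial.X^m) (by
    rw [Polynomial.degree_X_pow, Finset.card_range]; exact_mod_cast (by omega : m < 8))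
  rw [Finset.card_range, Polynomial.coeff_X_pow, if_neg (by omega)] at h1
  rw [h1]
  apply Finset.sum_congr rfl
  intro i hi
  rw [Polynomial.eval_pow, Polynomial.eval_X]
  congr 1
  have := Lagrange.eval_nodal_derivative_eval_node_eq (v := rho) hi
  rw [Lagrange.eval_nodal, ← hp] at this
  rw [← this]
  simp only [p, Polynomial.derivative_add, Polynomial.derivative_mul, Polynomial.derivative_X_pow, Polynomial.derivative_C, Polynomial.derivative_X, Polynomial.eval_add, Polynomial.eval_mul, Polynomial.eval_pow, Polynomial.eval_X, Polynomial.eval_C]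
  simp
  ring

/-- xi -/
def xi : KK := jj 1 / (qq^2 * jj 49)
/-- y -/
def yy : KK := qq^2 * jj 49 / jj 1
/-- r -/
def rr : KK := jj 2 * jj 49 / (qq^2 * jj 98 * jj 1)
/-- V7 P -/
def P' : KK := VV 7 PP
/-- V7 P inverse -/
def Pi' : KK := VV 7 Pi
/-- V7 v -/
def v' : KK := VV 7 vv
/-- V7 v inverse -/
def vi' : KK := VV 7 vi
/-- V7 t -/
def T : KK := VV 7 tt
/-- V7 DS -/
def DS' : KK := VV 7 DS
theorem PPi' : P'*Pi'=1 := by unfold P' Pi'; rw [← map_mul, PPi, map_one]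
theorem vvi' : v'*vi'=1 := by unfold v' vi'; rw [← map_mul, vvi, map_one]
theorem GG' : P' + Pi' = 8*v'+7+vi' := by
  unfold P' Pi' v' vi'
  simpa only [map_add, map_mul, map_ofNat] using congrArg (VV 7) G'
theorem V7_7 : VV 7 (jj 7) = jj 49 := VV_j 7 7 49 (by norm_num) (by norm_num)
theorem V7_14 : VV 7 (jj 14) = jj 98 := VV_j 7 14 98 (by norm_num) (by norm_num)
theorem LC_xi : LC xi (-2) 1 := ((LC_j 1 (by norm_num)).div ((LC_q.pow 2).mul (LC_j 49 (by norm_num))) (by norm_num)).congr (by norm_num) (by norm_num)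
theorem LC_y : LC yy 2 1 := (((LC_q.pow 2).mul (LC_j 49 (by norm_num))).div (LC_j 1 (by norm_num)) (by norm_num)).congr (by norm_num) (by norm_num)
theorem LC_r : LC rr (-2) 1 := (((LC_j 2 (by norm_num)).mul (LC_j 49 (by norm_num))).div (((LC_q.pow 2).mul (LC_j 98 (by norm_num))).mul (LC_j 1 (by norm_num))) (by norm_num)).congr (by norm_num) (by norm_num)
theorem xi_ne : xi ≠ 0 := LC_xi.ne one_ne_zero
theorem y_ne : yy ≠ 0 := LC_y.ne one_ne_zero
theorem r_ne : rr ≠ 0 := LC_r.ne one_ne_zero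
theorem rel_aux {K : Type*} [Field K] (j1 j2 j7 j14 j49 j98 q : K) (h1 : j1 ≠ 0) (h2 : j2 ≠ 0) (h7 : j7 ≠ 0) (h14 : j14 ≠ 0)
   (h49 : j49 ≠ 0) (h98 : j98 ≠ 0) (hq : q ≠ 0) :
   (j1/(q^2*j49)) * (q^2*j49/j1) = 1 ∧ (q^2*j49/j1)^4 = (q*j7^4/j1^4)*(q^7*j49^4/j7^4)
   ∧ (j2^4*j7^4/(q*j1^4*j14^4)) * (j14^4*j49^4/(q^7*j7^4*j98^4)) = (j2*j49/(q^2*j98*j1))^4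
   ∧ q*j2^3*j14^3/(j1^3*j7^3) = (j2*j49/(q^2*j98*j1))^3 * (q^7*j14^3*j98^3/(j7^3*j49^3)) := by
  refine ⟨?_, ?_, ?_, ?_⟩ <;> field_simp
theorem rels : xi*yy = 1 ∧ yy^4 = tt*T ∧ PP*P' = rr^4 ∧ vv = rr^3*v' := by
  have := rel_aux (jj 1) (jj 2) (jj 7) (jj 14) (jj 49) (jj 98) qq (jj_ne 1 (by norm_num)) (jj_ne 2 (by norm_num)) (jj_ne 7 (by norm_num)) (jj_ne 14 (by norm_num)) (jj_ne 49 (by norm_num)) (jj_ne 98 (by norm_num)) qq_ne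
  unfold xi yy tt T PP P' rr vv v'
  unfold tt PP vv
  simp only [map_mul, map_div₀, map_pow, VV_q, V7_1, V7_2, V7_7, V7_14]
  exact this
theorem xy : xi*yy=1 := rels.1
theorem y4 : yy^4=tt*T := rels.2.1
theorem Pr : PP*P'=rr^4 := rels.2.2.1
theorem vr : vv=rr^3*v' := rels.2.2.2

theorem g8_aux {K : Type*} [Field K] (P Pi v vi P' Pi' v' vi' r : K) (h1 : P*Pi=1) (h2 : v*vi=1) (hG : P+Pi=8*v+7+vi)
    (h1' : P'*Pi'=1) (h2' : v'*vi'=1) (hP : P*P'=r^4) (hv : v=r^3*v') :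
    r^8+(-8*v'*P')*r^7+(-7*P')*r^4+(-P'*vi')*r+P'^2=0 := by
  have h3 : vi*r^3 = vi' := by grind
  have h4 : v*P*P'^2 = r^3*v'*r^4*P' := by rw [hv, ← hP]; ring
  have h5 : (P*P')^2 = r^8 := by rw [hP]; ring
  linear_combination P*P'^2*hG - h5 + 8*h4 - P'^2*h1 + (7*P'+vi*P')*hP + P'*r*h3
theorem g8 : rr^8+(-8*v'*P')*rr^7+(-7*P')*rr^4+(-P'*vi')*rr+P'^2=0 := g8_aux _ _ _ _ _ _ _ _ _ PPi vvi G' PPi' vvi' Pr vr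

theorem xisq_aux {K : Type*} [Field K] (P Pi v vi P' Pi' v' vi' r y x t ti T Ti D S : K) (h1 : P*Pi=1) (h2 : v*vi=1) (hr : r ≠ 0)
    (h1' : P'*Pi'=1) (h2' : v'*vi'=1) (hP : P*P'=r^4) (hv : v=r^3*v') (hxy : x*y=1) (hy : y^4=t*T) (hT : T*Ti=1)
    (hD : D^2*v^2=49*t*(P+64*v^4*Pi^2)) (hS : S^2*v'^2=Ti*(Pi'+64*v'^4*P'^2)) :
    (x^2*r*D)^2 = (7*S)^2 := by
  have e1 : P+64*v^4*Pi^2 = r^4*(Pi'+64*v'^4*P'^2) := by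
    have : Pi*r^4=P' := by linear_combination P'*h1 - Pi*hP
    have h3 : P = r^4*Pi' := by linear_combination -P*h1' + Pi'*hP
    rw [hv, h3, ← this]; ring
  have hv0 : v' ≠ 0 := left_ne_zero_of_mul_eq_one h2'
  have hy0 : y ≠ 0 := right_ne_zero_of_mul_eq_one hxy
  have e2 : r^2*D^2*(r^6*v'^2) = 49*t*T*S^2*(r^6*v'^2) := by
    have : S^2*v'^2*T = (Pi'+64*v'^4*P'^2) := by rw [hS]; linear_combination (Pi'+64*v'^4*P'^2)*hT
    rw [e1, hv] at hD
    linear_combination r^2*hD - 49*t*r^6*this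
  have e3 : r^2*D^2 = 49*t*T*S^2 := mul_right_cancel₀ (by simp [hr, hv0]) e2
  have e4 : x^4*y^4 = 1 := by rw [← mul_pow, hxy, one_pow]
  rw [hy] at e4
  linear_combination x^4*e3 + 49*S^2*e4
theorem sg_lc0 (c : ℂˣ) (f : K0) (k : ℤ) (a : ℂ) (h : LC0 f k a) : (sg0 c f).coeff k = (c:ℂ)^k*a := by
  rw [sg0_coeff, h.coeff]
theorem DS'_lc : LC DS' (-7) (-1) := (LC_VV 7 LC_DS).congr (by norm_num) (by norm_num)
theorem DS'_ne : DS' ≠ 0 := DS'_lc.ne (by norm_num)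
theorem xisq : xi^2*rr*DD = -7*DS' := by
  have h7 : LC (7*DS') (-7) (-7) := ((LC_ofNat 7).mul DS'_lc).congr (by norm_num) (by norm_num)
  have hx : LC (xi^2*rr*DD) (-7) 7 := (((LC_xi.pow 2).mul LC_r).mul LC_DD).congr (by norm_num) (by norm_num)
  have hS : DS'^2*v'^2 = VV 7 ti*(Pi'+64*v'^4*P'^2) := by
    unfold DS' P' Pi' v'
    simpa only [map_mul, map_add, map_pow, map_ofNat] using congrArg (VV 7) DS_sq
  have := xisq_aux PP Pi vv vi P' Pi' v' vi' rr yy xi tt ti T (VV 7 ti) DD DS' PPi vvi r_ne PPi' vvi' Pr vr xy y4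
    (by unfold T; rw [← map_mul, tti, map_one]) DD_sq hS
  rcases sq_eq_sq_iff_eq_or_eq_neg.1 this with h | h
  · rw [h] at hx
    have := hx.eq h7
    norm_num at this
  · rw [h]; ring

theorem sg_r_inj (i j : ℕ) (hi : i < 7) (hj : j < 7) (h : sg i rr = sg j rr) : i = j := by
  have h1 := sg_lc0 (ze^i) rr (-2) 1 LC_r
  have h2 := sg_lc0 (ze^j) rr (-2) 1 LC_r
  have h3 : sg0 (ze^i) rr = sg0 (ze^j) rr := h
  rw [h3, h2, mul_one, mul_one] at h1
  have h4 : ((ze:ℂ)^2)^j = ((ze:ℂ)^2)^i := by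
    rw [Units.val_pow_eq_pow_val, Units.val_pow_eq_pow_val] at h1
    have h5 := congrArg (fun x => x⁻¹) h1
    simp only [zpow_neg, inv_inv] at h5
    rw [← pow_mul, ← pow_mul, mul_comm 2 j, mul_comm 2 i, pow_mul, pow_mul]
    exact_mod_cast h5
  have hp : IsPrimitiveRoot ((ze:ℂ)^2) 7 := ze_prim.pow_of_coprime 2 (by norm_num)
  exact (hp.pow_inj hj hi h4).symm

theorem sg_r_ne_one (i : ℕ) : sg i rr ≠ 1 := by
  intro h
  have h1 := sg_lc0 (ze^i) rr (-2) 1 LC_r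
  have h3 : sg0 (ze^i) rr = 1 := h
  rw [h3, mul_one] at h1
  have h4 : (1:K0).coeff (-2) = 0 := by
    rw [HahnSeries.coeff_one, if_neg (by norm_num)]
  rw [h4] at h1
  exact zpow_ne_zero _ (ze^i).ne_zero h1.symm

theorem gd_aux {K : Type*} [Field K] (P Pi v vi P' Pi' v' vi' r : K) (h1 : P*Pi=1) (h2 : v*vi=1) (hr : r ≠ 0)
    (h1' : P'*Pi'=1) (h2' : v'*vi'=1) (hP : P*P'=r^4) (hv : v=r^3*v') (hG : P+Pi=8*v+7+vi) :
    8*r^7+7*(-8*v'*P')*r^6+4*(-7*P')*r^3+(-P'*vi') = r^3*P'*(4*(P-Pi)-24*v+3*vi) := by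
  have h3 : vi*r^3 = vi' := by grind
  have h4 : Pi*r^4 = P' := by grind
  have h8 := g8_aux P Pi v vi P' Pi' v' vi' r h1 h2 hG h1' h2' hP hv
  apply mul_right_cancel₀ hr
  have e1 : r^4*P'*P = r^8 := by linear_combination r^4*hP
  have e2 : r^4*P'*Pi = P'^2 := by linear_combination P'*h4
  have e3 : r^4*P'*vi = P'*vi'*r := by linear_combination P'*r*h3
  linear_combination 4*h8 - 4*e1 + 4*e2 - 3*e3 + 24*r^4*P'*hv

theorem g1_aux {K : Type*} [Field K] (P Pi v vi : K) (h1 : P*Pi=1) (hG : P+Pi=8*v+7+vi) :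
    (1:K)^8+(-8*v*P)*1^7+(-7*P)*1^4+(-P*vi)*1+P^2=0 ∧ 8*(1:K)^7+7*(-8*v*P)*1^6+4*(-7*P)*1^3+(-P*vi) = P*(4*(Pi-P)-24*v+3*vi) := by
  constructor
  · linear_combination P*hG - h1
  · linear_combination 4*P*hG - 8*h1

theorem S2_nat (m : ℕ) (hm : m < 7) : UU (xi^2*rr^((m:ℤ)-2)) = 1 := by
  have hg1 := g1_aux P' Pi' v' vi' PPi' GG'
  have hDS : DS' = 4*(Pi'-P')-24*v'+3*vi' := by
    unfold DS' DS Pi' P' v' vi'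
    simp only [map_add, map_sub, map_mul, map_ofNat]
  have hgd : 8*rr^7+7*(-8*v'*P')*rr^6+4*(-7*P')*rr^3+(-P'*vi') = rr^3*P'*DD := gd_aux PP Pi vv vi P' Pi' v' vi' rr PPi vvi r_ne PPi' vvi' Pr vr G'
  have hP0 : P' ≠ 0 := left_ne_zero_of_mul_eq_one PPi'
  have hD0 : DD ≠ 0 := LC_DD.ne (by norm_num)
  have hx : xi^2*rr^((m:ℤ)-2) = (-7*DS'*P') * (rr^m/(8*rr^7+7*(-8*v'*P')*rr^6+4*(-7*P')*rr^3+(-P'*vi'))) := by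
    rw [hgd, zpow_sub₀ r_ne]
    have hr := r_ne
    have := xisq
    rw [zpow_natCast, show rr^(2:ℤ) = rr^2 from zpow_ofNat rr 2]
    field_simp
    linear_combination this
  let rho : ℕ → KK := fun i => if i < 7 then sg i rr else 1
  have e1 : ∀ i, sg i P' = P' := fun i => sg_VV i _
  have e2 : ∀ i, sg i v' = v' := fun i => sg_VV i _
  have e3 : ∀ i, sg i vi' = vi' := fun i => sg_VV i _
  have e4 : ∀ i, sg i DS' = DS' := fun i => sg_VV i _
  have key := lag_aux (-8*v'*P') (-7*P') (-P'*vi') (P'^2) rho (by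
      intro i hi j hj hij
      rw [Finset.mem_coe, Finset.mem_range] at hi hj
      by_cases h1 : i < 7 <;> by_cases h2 : j < 7
      · simp only [rho, if_pos h1, if_pos h2] at hij
        exact sg_r_inj i j h1 h2 hij
      · simp only [rho, if_pos h1, if_neg h2] at hij
        exact absurd hij (sg_r_ne_one i)
      · simp only [rho, if_neg h1, if_pos h2] at hij
        exact absurd hij.symm (sg_r_ne_one j)
      · omega) (by
      intro i hi
      by_cases h1 : i < 7
      · simp only [rho, if_pos h1]
        have := congrArg (sg i) g8
        simpa only [map_add, map_mul, map_neg, map_pow, map_ofNat, map_zero, e1, e2, e3] using this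
      · simp only [rho, if_neg h1]
        exact hg1.1) m hm
  rw [Finset.sum_range_succ] at key
  have hr7 : rho 7 = 1 := by simp [rho]
  rw [hr7, hg1.2, ← hDS] at key
  apply VV_inj 7
  apply mul_left_cancel₀ (show (7:KK) ≠ 0 by norm_num)
  rw [← sum_sg, map_one]
  have hs : ∑ i ∈ Finset.range 7, sg i (xi^2*rr^((m:ℤ)-2)) = (-7*DS'*P') * ∑ i ∈ Finset.range 7, rho i ^ m / (8 * rho i ^ 7 + 7 * (-8 * v' * P') * rho i ^ 6 + 4 * (-7 * P') * rho i ^ 3 + -P' * vi') := by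
    rw [Finset.mul_sum]
    apply Finset.sum_congr rfl
    intro i hi
    rw [Finset.mem_range] at hi
    rw [hx]
    simp only [rho, if_pos hi, map_add, map_mul, map_div₀, map_neg, map_pow, map_ofNat, e1, e2, e3, e4]
  rw [hs, eq_neg_of_add_eq_zero_left key]
  have := DS'_ne
  field_simp
  simp

/-- the sums S -/
def SS (k a : ℤ) : KK := UU (xi^k*rr^a)
theorem S2 (a : ℤ) (h1 : -2 ≤ a) (h2 : a ≤ 4) : SS 2 a = 1 := by
  have := S2_nat (a+2).toNat (by omega)
  rw [show (((a+2).toNat:ℤ)-2) = a by omega] at this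
  rw [← this]; rfl

/-- formal expressions in P, v and their inverses -/
inductive Ex where
  | P : Ex
  | Q : Ex
  | v : Ex
  | w : Ex
  | c : ℤ → Ex
  | add : Ex → Ex → Ex
  | sub : Ex → Ex → Ex
  | mul : Ex → Ex → Ex
  | pow : Ex → ℕ → Ex
  | lit : ℕ → List ℤ → List ℤ → Ex
namespace Ex
instance : Add Ex := ⟨Ex.add⟩
instance : Sub Ex := ⟨Ex.sub⟩
instance : Mul Ex := ⟨Ex.mul⟩
instance : Pow Ex ℕ := ⟨Ex.pow⟩
instance (n : ℕ) : OfNat Ex n := ⟨Ex.c n⟩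
instance : Neg Ex := ⟨fun e => Ex.sub (Ex.c 0) e⟩
/-- sum of coefficient lists -/
def addL : List ℤ → List ℤ → List ℤ
  | [], m => m
  | a :: l, [] => a :: l
  | a :: l, b :: m => (a+b) :: addL l m
/-- scaling -/
def smL (a : ℤ) : List ℤ → List ℤ
  | [] => []
  | b :: l => (a*b) :: smL a l
/-- product of coefficient lists -/
def mulL : List ℤ → List ℤ → List ℤ
  | [], _ => []
  | a :: l, m => addL (smL a m) (0 :: mulL l m)
/-- shifting -/
def shL : ℕ → List ℤ → List ℤ
  | 0, l => l
  | n+1, l => 0 :: shL n l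
/-- zero test -/
def zL : List ℤ → Bool
  | [] => true
  | a :: l => (a == 0) && zL l
/-- normal forms -/
abbrev NF := ℕ × List ℤ × List ℤ
/-- sum of normal forms -/
def addN (x y : NF) : NF := (x.1 + (y.1 - x.1), addL (shL (y.1-x.1) x.2.1) (shL (x.1-y.1) y.2.1), addL (shL (y.1-x.1) x.2.2) (shL (x.1-y.1) y.2.2))
/-- scaling of normal forms -/
def smN (a : ℤ) (x : NF) : NF := (x.1, smL a x.2.1, smL a x.2.2)
/-- product of normal forms -/
def mulN (x y : NF) : NF :=
  match x.2.2, y.2.2 with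
  | [], B => (x.1+y.1, mulL x.2.1 y.2.1, mulL x.2.1 B)
  | B, [] => (x.1+y.1, mulL x.2.1 y.2.1, mulL B y.2.1)
  | B, D => (x.1+y.1+1, 0 :: addL (mulL x.2.1 y.2.1) (smL (-1) (mulL B D)), addL (0 :: addL (mulL x.2.1 D) (mulL B y.2.1)) (mulL [1,7,8] (mulL B D)))
/-- power -/
def powN (x : NF) : ℕ → NF
  | 0 => (0, [1], [])
  | n+1 => mulN (powN x n) x
/-- normal form -/
def nf : Ex → NF
  | P => (0, [], [1])
  | Q => (1, [1,7,8], [0,-1])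
  | v => (0, [0,1], [])
  | w => (1, [1], [])
  | c n => (0, [n], [])
  | add a b => addN a.nf b.nf
  | sub a b => addN a.nf (smN (-1) b.nf)
  | mul a b => mulN a.nf b.nf
  | pow a n => powN a.nf n
  | lit n A B => (n, A, B)
/-- equality check -/
def chk (a b : Ex) : Bool := let d := nf (a - b); zL d.2.1 && zL d.2.2
section
variable {K : Type*} [Field K]
/-- value of a coefficient list -/
def evL (x : K) : List ℤ → K
  | [] => 0
  | a :: l => a + x * evL x l
/-- value -/
def ev (p q x y : K) : Ex → K
  | P => p
  | Q => q
  | v => x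
  | w => y
  | c n => n
  | add a b => a.ev p q x y + b.ev p q x y
  | sub a b => a.ev p q x y - b.ev p q x y
  | mul a b => a.ev p q x y * b.ev p q x y
  | pow a n => a.ev p q x y ^ n
  | lit n A B => y^n * (evL x A + p * evL x B)
/-- value of a normal form -/
def evN (p x y : K) (d : NF) : K := y^d.1 * (evL x d.2.1 + p * evL x d.2.2)
theorem evL_add (x : K) (l m : List ℤ) : evL x (addL l m) = evL x l + evL x m := by
  induction l generalizing m with
  | nil => simp [addL, evL]
  | cons a l ih =>
    cases m with
    | nil => simp [addL, evL]
    | cons b m => simp only [addL, evL, ih]; push_cast; ring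
theorem evL_sm (x : K) (a : ℤ) (l : List ℤ) : evL x (smL a l) = a * evL x l := by
  induction l with
  | nil => simp [smL, evL]
  | cons b l ih => simp only [smL, evL, ih]; push_cast; ring
theorem evL_mul (x : K) (l m : List ℤ) : evL x (mulL l m) = evL x l * evL x m := by
  induction l with
  | nil => simp [mulL, evL]
  | cons a l ih => simp only [mulL, evL_add, evL_sm, evL, ih]; push_cast; ring
theorem evL_sh (x y : K) (h : x*y=1) (n : ℕ) (l : List ℤ) : y^n * evL x (shL n l) = evL x l := by
  induction n with
  | zero => simp [shL]
  | succ n ih => simp only [shL, evL]; rw [← ih]; push_cast; linear_combination y^n*evL x (shL n l)*h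
theorem evL_c0 (x : K) (l : List ℤ) : evL x (0 :: l) = x * evL x l := by simp [evL]
theorem evL_z (x : K) (l : List ℤ) (h : zL l = true) : evL x l = 0 := by
  induction l with
  | nil => rfl
  | cons a l ih =>
    simp only [zL, Bool.and_eq_true, beq_iff_eq] at h
    simp [evL, h.1, ih h.2]
variable {p q x y : K}
theorem evN_add (h : x*y=1) (d e : NF) : evN p x y (addN d e) = evN p x y d + evN p x y e := by
  simp only [evN, addN, evL_add]
  have h1 := evL_sh x y h (e.1-d.1) d.2.1
  have h2 := evL_sh x y h (e.1-d.1) d.2.2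
  have h3 := evL_sh x y h (d.1-e.1) e.2.1
  have h4 := evL_sh x y h (d.1-e.1) e.2.2
  have h5 : y^(d.1+(e.1-d.1)) = y^e.1*y^(d.1-e.1) := by rw [← pow_add]; congr 1; omega
  have h6 : y^(d.1+(e.1-d.1)) = y^d.1*y^(e.1-d.1) := pow_add _ _ _
  linear_combination y^d.1*(h1+p*h2) + y^e.1*(h3+p*h4) + h6*(evL x (shL (e.1-d.1) d.2.1)+p*evL x (shL (e.1-d.1) d.2.2)) + h5*(evL x (shL (d.1-e.1) e.2.1)+p*evL x (shL (d.1-e.1) e.2.2))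
theorem evN_sm (a : ℤ) (d : NF) : evN p x y (smN a d) = a * evN p x y d := by
  simp only [evN, smN, evL_sm]; ring
theorem evN_mul (h : x*y=1) (h1 : p*q=1) (hG : p+q=8*x+7+y) (d e : NF) : evN p x y (mulN d e) = evN p x y d * evN p x y e := by
  obtain ⟨n, A, B⟩ := d
  obtain ⟨m, C, D⟩ := e
  have hp : p^2 = y*(1+7*x+8*x^2)*p - 1 := by linear_combination p*hG - h1 - (8*x*p+7*p)*h
  cases B with
  | nil => simp only [evN, mulN, evL_mul, evL]; ring
  | cons b B =>
    cases D with
    | nil => simp only [evN, mulN, evL_mul, evL]; ring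
    | cons b' D =>
      simp only [evN, mulN, evL_mul, evL_add, evL_sm, evL_c0]
      rw [show evL x [1,7,8] = 1+7*x+8*x^2 by simp [evL]; ring]
      generalize evL x A = a
      generalize evL x C = c
      generalize evL x (b::B) = b
      generalize evL x (b'::D) = d
      push_cast
      rw [pow_succ, pow_add]
      linear_combination y^n*y^m*(a*c-b*d+p*(a*d+b*c))*h - y^n*y^m*b*d*hp
theorem nf_ev (h : x*y=1) (h1 : p*q=1) (hG : p+q=8*x+7+y) (e : Ex) : evN p x y e.nf = e.ev p q x y := by
  induction e with
  | P => simp [nf, ev, evN, evL]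
  | Q => simp [nf, ev, evN, evL]; linear_combination -hG + (8*x+7-p)*h
  | v => simp [nf, ev, evN, evL]
  | w => simp [nf, ev, evN, evL]
  | c n => simp [nf, ev, evN, evL]
  | lit n A B => rfl
  | add a b iha ihb => rw [nf, ev, evN_add h, iha, ihb]
  | sub a b iha ihb => rw [nf, ev, evN_add h, evN_sm, iha, ihb]; push_cast; ring
  | mul a b iha ihb => rw [nf, ev, evN_mul h h1 hG, iha, ihb]
  | pow a n iha =>
    rw [nf, ev]
    induction n with
    | zero => simp [powN, evN, evL]
    | succ n ih => rw [powN, evN_mul h h1 hG, ih, iha, pow_succ]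
theorem sound (h1 : p*q=1) (h : x*y=1) (hG : p+q=8*x+7+y) (a b : Ex) (hc : chk a b = true) : a.ev p q x y = b.ev p q x y := by
  simp only [chk, Bool.and_eq_true] at hc
  have h2 := nf_ev h h1 hG (a - b)
  rw [evN, evL_z _ _ hc.1, evL_z _ _ hc.2, mul_zero, add_zero, mul_zero] at h2
  exact (sub_eq_zero.1 h2.symm)
theorem ev_add (a b : Ex) : (a+b).ev p q x y = a.ev p q x y + b.ev p q x y := rfl
theorem ev_sub (a b : Ex) : (a-b).ev p q x y = a.ev p q x y - b.ev p q x y := rfl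
theorem ev_mul (a b : Ex) : (a*b).ev p q x y = a.ev p q x y * b.ev p q x y := rfl
theorem ev_pow (a : Ex) (n : ℕ) : (a^n).ev p q x y = a.ev p q x y ^ n := rfl
theorem ev_neg (a : Ex) : (-a).ev p q x y = -a.ev p q x y := by
  show ((0:ℤ):K) - _ = _
  simp
theorem ev_ofNat (n : ℕ) [n.AtLeastTwo] : (ofNat(n) : Ex).ev p q x y = ofNat(n) := by
  show (((n:ℕ):ℤ):K) = _
  rw [Int.cast_natCast]
  exact Nat.cast_ofNat
theorem ev_one : (1 : Ex).ev p q x y = 1 := by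
  show (((1:ℕ):ℤ):K) = _
  simp
theorem ev_zero : (0 : Ex).ev p q x y = 0 := by
  show (((0:ℕ):ℤ):K) = _
  simp
theorem ev_P : P.ev p q x y = p := rfl
theorem ev_Q : Q.ev p q x y = q := rfl
theorem ev_v : v.ev p q x y = x := rfl
theorem ev_w : w.ev p q x y = y := rfl
end
end Ex

theorem asq_gen {K : Type*} [Field K] (p q x y r : K) (hp : p*q=1) (hx : x*y=1) (hG : p+q=8*x+7+y) (P S b0 b1 b2 b3 b4 b5 e6 e3 e0 a b c q0 q1 q2 q3 : Ex)
   (h0 : Ex.chk (7*P*b0*b0 + (-1)*q0*(-c)) 0 = true)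
   (h1 : Ex.chk (7*P*b0*b1 + 7*P*b1*b0 + (-1)*q1*(-c) + (-1)*q0*b) 0 = true)
   (h2 : Ex.chk (7*P*b0*b2 + 7*P*b1*b1 + 7*P*b2*b0 + S*e0 + (-1)*q2*(-c) + (-1)*q1*b + (-1)*q0*b) 0 = true)
   (h3 : Ex.chk (7*P*b0*b3 + 7*P*b1*b2 + 7*P*b2*b1 + 7*P*b3*b0 + (-1)*q3*(-c) + (-1)*q2*b + (-1)*q1*b + (-1)*q0*b) 0 = true)
   (h4 : Ex.chk (7*P*b0*b4 + 7*P*b1*b3 + 7*P*b2*b2 + 7*P*b3*b1 + 7*P*b4*b0 + (-1)*q3*b + (-1)*q2*b + (-1)*q1*b + (-1)*q0*a) 0 = true)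
   (h5 : Ex.chk (7*P*b0*b5 + 7*P*b1*b4 + 7*P*b2*b3 + 7*P*b3*b2 + 7*P*b4*b1 + 7*P*b5*b0 + S*e3 + (-1)*q3*b + (-1)*q2*b + (-1)*q1*a + (-1)*q0*a) 0 = true)
   (h6 : Ex.chk (7*P*b1*b5 + 7*P*b2*b4 + 7*P*b3*b3 + 7*P*b4*b2 + 7*P*b5*b1 + (-1)*q3*b + (-1)*q2*a + (-1)*q1*a + (-1)*q0*a) 0 = true)
   (h7 : Ex.chk (7*P*b2*b5 + 7*P*b3*b4 + 7*P*b4*b3 + 7*P*b5*b2 + (-1)*q3*a + (-1)*q2*a + (-1)*q1*a + (-1)*q0*1) 0 = true)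
   (h8 : Ex.chk (7*P*b3*b5 + 7*P*b4*b4 + 7*P*b5*b3 + S*e6 + (-1)*q3*a + (-1)*q2*a + (-1)*q1*1) 0 = true)
   (h9 : Ex.chk (7*P*b4*b5 + 7*P*b5*b4 + S*8 + (-1)*q3*a + (-1)*q2*1) 0 = true)
   (h10 : Ex.chk (7*P*b5*b5 + (-1)*q3*1) 0 = true)
   (hg : r^7+a.ev p q x y*(r^6+r^5+r^4)+b.ev p q x y*(r^3+r^2+r)-c.ev p q x y=0) :
   7*((b0.ev p q x y)+(b1.ev p q x y)*r+(b2.ev p q x y)*r^2+(b3.ev p q x y)*r^3+(b4.ev p q x y)*r^4+(b5.ev p q x y)*r^5)^2*(P.ev p q x y) = -(S.ev p q x y)*r^2*(8*r^7+(e6.ev p q x y)*r^6+(e3.ev p q x y)*r^3+(e0.ev p q x y)) := by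
  replace h0 := Ex.sound hp hx hG _ _ h0
  replace h1 := Ex.sound hp hx hG _ _ h1
  replace h2 := Ex.sound hp hx hG _ _ h2
  replace h3 := Ex.sound hp hx hG _ _ h3
  replace h4 := Ex.sound hp hx hG _ _ h4
  replace h5 := Ex.sound hp hx hG _ _ h5
  replace h6 := Ex.sound hp hx hG _ _ h6
  replace h7 := Ex.sound hp hx hG _ _ h7
  replace h8 := Ex.sound hp hx hG _ _ h8
  replace h9 := Ex.sound hp hx hG _ _ h9
  replace h10 := Ex.sound hp hx hG _ _ h10
  simp only [Ex.ev_add, Ex.ev_mul, Ex.ev_neg, Ex.ev_pow, Ex.ev_ofNat, Ex.ev_one, Ex.ev_zero] at h0 h1 h2 h3 h4 h5 h6 h7 h8 h9 h10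
  generalize P.ev p q x y = P at *
  generalize S.ev p q x y = S at *
  generalize b0.ev p q x y = b0 at *
  generalize b1.ev p q x y = b1 at *
  generalize b2.ev p q x y = b2 at *
  generalize b3.ev p q x y = b3 at *
  generalize b4.ev p q x y = b4 at *
  generalize b5.ev p q x y = b5 at *
  generalize e6.ev p q x y = e6 at *
  generalize e3.ev p q x y = e3 at *
  generalize e0.ev p q x y = e0 at *
  generalize a.ev p q x y = a at *
  generalize b.ev p q x y = b at *
  generalize c.ev p q x y = c at *
  generalize q0.ev p q x y = q0 at *
  generalize q1.ev p q x y = q1 at *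
  generalize q2.ev p q x y = q2 at *
  generalize q3.ev p q x y = q3 at *
  linear_combination (q0*r^0+q1*r^1+q2*r^2+q3*r^3)*hg + r^0*h0+r^1*h1+r^2*h2+r^3*h3+r^4*h4+r^5*h5+r^6*h6+r^7*h7+r^8*h8+r^9*h9+r^10*h10
theorem wat_gen {K : Type*} [Field K] (p q x y r : K) (hp : p*q=1) (hx : x*y=1) (hG : p+q=8*x+7+y) (P Q S Ti b0 b1 b2 b3 b4 b5 e6 e3 e0 u4 u0 a b c w1 w2 w3 q0 q1 q2 q3 q4 q5 q6 q7 q8 q9 q10 : Ex)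
   (h0 : Ex.chk ((-1)*e0*b0*(-49)*u0 + (-1)*q0*(-c)) 0 = true)
   (h1 : Ex.chk ((-1)*e0*b0*Ti + (-1)*e0*b0*(-49)*(-8) + (-1)*e0*b1*(-49)*u0 + (-1)*q1*(-c) + (-1)*q0*b) 0 = true)
   (h2 : Ex.chk ((-1)*e0*b1*Ti + (-1)*e0*b1*(-49)*(-8) + (-1)*e0*b2*(-49)*u0 + (-7)*P*S*b0*7*u0 + S*e0*21*u0 + (-1)*q2*(-c) + (-1)*q1*b + (-1)*q0*b) 0 = true)
   (h3 : Ex.chk ((-1)*e3*b0*(-49)*u0 + (-1)*e0*b3*(-49)*u0 + (-1)*e0*b2*Ti + (-1)*e0*b2*(-49)*(-8) + (-7)*P*S*b0*7*(-8) + (-7)*P*S*b0*w2 + (-7)*P*S*b1*7*u0 + S*e0*21*(-8) + S*e0*w3 + (-1)*q3*(-c) + (-1)*q2*b + (-1)*q1*b + (-1)*q0*b) 0 = true)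
   (h4 : Ex.chk ((-1)*e3*b0*Ti + (-1)*e3*b0*(-49)*(-8) + (-1)*e0*b3*Ti + (-1)*e0*b3*(-49)*(-8) + (-1)*e3*b1*(-49)*u0 + (-1)*e0*b4*(-49)*u0 + (-1)*e0*b0*(-49)*u4 + (-7)*P*S^2*u0 + (-7)*P*S*b1*7*(-8) + (-7)*P*S*b1*w2 + (-7)*P*S*b2*7*u0 + (-1)*q4*(-c) + (-1)*q3*b + (-1)*q2*b + (-1)*q1*b + (-1)*q0*a) 0 = true)
   (h5 : Ex.chk ((-1)*e3*b1*Ti + (-1)*e3*b1*(-49)*(-8) + (-1)*e0*b4*Ti + (-1)*e0*b4*(-49)*(-8) + (-1)*e3*b2*(-49)*u0 + (-1)*e0*b5*(-49)*u0 + (-1)*e0*b0*(-49)*Q + (-1)*e0*b1*(-49)*u4 + (-7)*P*S^2*(-8) + (-7)*P*S^2*w1 + (-7)*P*S*b2*7*(-8) + (-7)*P*S*b2*w2 + (-7)*P*S*b3*7*u0 + S*e3*21*u0 + (-1)*q5*(-c) + (-1)*q4*b + (-1)*q3*b + (-1)*q2*b + (-1)*q1*a + (-1)*q0*a) 0 =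 true)
   (h6 : Ex.chk ((-1)*e6*b0*(-49)*u0 + (-1)*e3*b3*(-49)*u0 + (-1)*e3*b2*Ti + (-1)*e3*b2*(-49)*(-8) + (-1)*e0*b5*Ti + (-1)*e0*b5*(-49)*(-8) + (-1)*e0*b1*(-49)*Q + (-1)*e0*b2*(-49)*u4 + (-7)*P*S*b0*7*u4 + (-7)*P*S*b3*7*(-8) + (-7)*P*S*b3*w2 + (-7)*P*S*b4*7*u0 + S*e3*21*(-8) + S*e3*w3 + S*e0*21*u4 + (-1)*q6*(-c) + (-1)*q5*b + (-1)*q4*b + (-1)*q3*b + (-1)*q2*a + (-1)*q1*a + (-1)*q0*a) 0 = true)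
   (h7 : Ex.chk ((-1)*8*b0*(-49)*u0 + (-1)*e6*b1*(-49)*u0 + (-1)*e3*b4*(-49)*u0 + (-1)*e6*b0*Ti + (-1)*e6*b0*(-49)*(-8) + (-1)*e3*b3*Ti + (-1)*e3*b3*(-49)*(-8) + (-1)*e3*b0*(-49)*u4 + (-1)*e0*b3*(-49)*u4 + (-1)*e0*b2*(-49)*Q + (-7)*P*S*b0*7*Q + (-7)*P*S*b1*7*u4 + (-7)*P*S*b4*7*(-8) + (-7)*P*S*b4*w2 + (-7)*P*S*b5*7*u0 + S*e0*21*Q + (-1)*q7*(-c) + (-1)*q6*b + (-1)*q5*b + (-1)*q4*b + (-1)*q3*a + (-1)*q2*a + (-1)*q1*a + (-1)*q0*1) 0 = true)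
   (h8 : Ex.chk ((-1)*8*b0*Ti + (-1)*8*b0*(-49)*(-8) + (-1)*e6*b1*Ti + (-1)*e6*b1*(-49)*(-8) + (-1)*e3*b4*Ti + (-1)*e3*b4*(-49)*(-8) + (-1)*8*b1*(-49)*u0 + (-1)*e6*b2*(-49)*u0 + (-1)*e3*b5*(-49)*u0 + (-1)*e3*b0*(-49)*Q + (-1)*e0*b3*(-49)*Q + (-1)*e3*b1*(-49)*u4 + (-1)*e0*b4*(-49)*u4 + (-7)*P*S^2*u4 + (-7)*P*S*b1*7*Q + (-7)*P*S*b2*7*u4 + (-7)*P*S*b5*7*(-8) + (-7)*P*S*b5*w2 + S*e6*21*u0 + (-1)*q8*(-c) + (-1)*q7*b + (-1)*q6*b + (-1)*q5*b + (-1)*q4*a + (-1)*q3*a + (-1)*q2*a + (-1)*q1*1) 0 = true)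
   (h9 : Ex.chk ((-1)*8*b1*Ti + (-1)*8*b1*(-49)*(-8) + (-1)*e6*b2*Ti + (-1)*e6*b2*(-49)*(-8) + (-1)*e3*b5*Ti + (-1)*e3*b5*(-49)*(-8) + (-1)*8*b2*(-49)*u0 + (-1)*e6*b3*(-49)*u0 + (-1)*e3*b1*(-49)*Q + (-1)*e0*b4*(-49)*Q + (-1)*e3*b2*(-49)*u4 + (-1)*e0*b5*(-49)*u4 + (-7)*P*S^2*Q + (-7)*P*S*b2*7*Q + (-7)*P*S*b3*7*u4 + S*8*21*u0 + S*e6*21*(-8) + S*e6*w3 + S*e3*21*u4 + (-1)*q9*(-c) + (-1)*q8*b + (-1)*q7*b + (-1)*q6*b + (-1)*q5*a + (-1)*q4*a + (-1)*q3*a + (-1)*q2*1) 0 = true)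
   (h10 : Ex.chk ((-1)*8*b2*Ti + (-1)*8*b2*(-49)*(-8) + (-1)*e6*b3*Ti + (-1)*e6*b3*(-49)*(-8) + (-1)*8*b3*(-49)*u0 + (-1)*e6*b4*(-49)*u0 + (-1)*e6*b0*(-49)*u4 + (-1)*e3*b3*(-49)*u4 + (-1)*e3*b2*(-49)*Q + (-1)*e0*b5*(-49)*Q + (-7)*P*S*b3*7*Q + (-7)*P*S*b4*7*u4 + S*8*21*(-8) + S*8*w3 + S*e3*21*Q + (-1)*q10*(-c) + (-1)*q9*b + (-1)*q8*b + (-1)*q7*b + (-1)*q6*a + (-1)*q5*a + (-1)*q4*a + (-1)*q3*1) 0 = true)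
   (h11 : Ex.chk ((-1)*8*b0*(-49)*u4 + (-1)*e6*b1*(-49)*u4 + (-1)*e3*b4*(-49)*u4 + (-1)*8*b3*Ti + (-1)*8*b3*(-49)*(-8) + (-1)*e6*b4*Ti + (-1)*e6*b4*(-49)*(-8) + (-1)*8*b4*(-49)*u0 + (-1)*e6*b5*(-49)*u0 + (-1)*e6*b0*(-49)*Q + (-1)*e3*b3*(-49)*Q + (-7)*P*S*b4*7*Q + (-7)*P*S*b5*7*u4 + (-1)*q10*b + (-1)*q9*b + (-1)*q8*b + (-1)*q7*a + (-1)*q6*a + (-1)*q5*a + (-1)*q4*1) 0 = true)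
   (h12 : Ex.chk ((-1)*8*b0*(-49)*Q + (-1)*e6*b1*(-49)*Q + (-1)*e3*b4*(-49)*Q + (-1)*8*b1*(-49)*u4 + (-1)*e6*b2*(-49)*u4 + (-1)*e3*b5*(-49)*u4 + (-1)*8*b4*Ti + (-1)*8*b4*(-49)*(-8) + (-1)*e6*b5*Ti + (-1)*e6*b5*(-49)*(-8) + (-1)*8*b5*(-49)*u0 + (-7)*P*S*b5*7*Q + S*e6*21*u4 + (-1)*q10*b + (-1)*q9*b + (-1)*q8*a + (-1)*q7*a + (-1)*q6*a + (-1)*q5*1) 0 = true)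
   (h13 : Ex.chk ((-1)*8*b1*(-49)*Q + (-1)*e6*b2*(-49)*Q + (-1)*e3*b5*(-49)*Q + (-1)*8*b2*(-49)*u4 + (-1)*e6*b3*(-49)*u4 + (-1)*8*b5*Ti + (-1)*8*b5*(-49)*(-8) + S*8*21*u4 + S*e6*21*Q + (-1)*q10*b + (-1)*q9*a + (-1)*q8*a + (-1)*q7*a + (-1)*q6*1) 0 = true)
   (h14 : Ex.chk ((-1)*8*b2*(-49)*Q + (-1)*e6*b3*(-49)*Q + (-1)*8*b3*(-49)*u4 + (-1)*e6*b4*(-49)*u4 + S*8*21*Q + (-1)*q10*a + (-1)*q9*a + (-1)*q8*a + (-1)*q7*1) 0 = true)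
   (h15 : Ex.chk ((-1)*8*b3*(-49)*Q + (-1)*e6*b4*(-49)*Q + (-1)*8*b4*(-49)*u4 + (-1)*e6*b5*(-49)*u4 + (-1)*q10*a + (-1)*q9*a + (-1)*q8*1) 0 = true)
   (h16 : Ex.chk ((-1)*8*b4*(-49)*Q + (-1)*e6*b5*(-49)*Q + (-1)*8*b5*(-49)*u4 + (-1)*q10*a + (-1)*q9*1) 0 = true)
   (h17 : Ex.chk ((-1)*8*b5*(-49)*Q + (-1)*q10*1) 0 = true)
   (hg : r^7+a.ev p q x y*(r^6+r^5+r^4)+b.ev p q x y*(r^3+r^2+r)-c.ev p q x y=0) :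
   -(8*r^7+(e6.ev p q x y)*r^6+(e3.ev p q x y)*r^3+(e0.ev p q x y))*((b0.ev p q x y)+(b1.ev p q x y)*r+(b2.ev p q x y)*r^2+(b3.ev p q x y)*r^3+(b4.ev p q x y)*r^4+(b5.ev p q x y)*r^5)*(r*(Ti.ev p q x y)-49*((Q.ev p q x y)*r^5-8*r+(u4.ev p q x y)*r^4+(u0.ev p q x y))) =
   7*r^4*(P.ev p q x y)*(S.ev p q x y)^2*(((Q.ev p q x y)*r^5-8*r+(u4.ev p q x y)*r^4+(u0.ev p q x y))+(w1.ev p q x y)*r)+7*r^2*(P.ev p q x y)*(S.ev p q x y)*((b0.ev p q x y)+(b1.ev p q x y)*r+(b2.ev p q x y)*r^2+(b3.ev p q x y)*r^3+(b4.ev p q x y)*r^4+(b5.ev p q x y)*r^5)*(7*((Q.ev p q x y)*r^5-8*r+(u4.ev p q x y)*r^4+(u0.ev p q x y))+(w2.ev p q x y)*r)-r^2*(8*r^7+(e6.ev p q x y)*r^6+(e3.ev p q x y)*r^3+(e0.ev p q x y))*(S.ev p q x y)*(21*((Q.ev p q x y)*r^5-8*r+(u4.ev p q x y)*r^4+(u0.ev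 p q x y))+(w3.ev p q x y)*r) := by
  replace h0 := Ex.sound hp hx hG _ _ h0
  replace h1 := Ex.sound hp hx hG _ _ h1
  replace h2 := Ex.sound hp hx hG _ _ h2
  replace h3 := Ex.sound hp hx hG _ _ h3
  replace h4 := Ex.sound hp hx hG _ _ h4
  replace h5 := Ex.sound hp hx hG _ _ h5
  replace h6 := Ex.sound hp hx hG _ _ h6
  replace h7 := Ex.sound hp hx hG _ _ h7
  replace h8 := Ex.sound hp hx hG _ _ h8
  replace h9 := Ex.sound hp hx hG _ _ h9
  replace h10 := Ex.sound hp hx hG _ _ h10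
  replace h11 := Ex.sound hp hx hG _ _ h11
  replace h12 := Ex.sound hp hx hG _ _ h12
  replace h13 := Ex.sound hp hx hG _ _ h13
  replace h14 := Ex.sound hp hx hG _ _ h14
  replace h15 := Ex.sound hp hx hG _ _ h15
  replace h16 := Ex.sound hp hx hG _ _ h16
  replace h17 := Ex.sound hp hx hG _ _ h17
  simp only [Ex.ev_add, Ex.ev_mul, Ex.ev_neg, Ex.ev_pow, Ex.ev_ofNat, Ex.ev_one, Ex.ev_zero] at h0 h1 h2 h3 h4 h5 h6 h7 h8 h9 h10 h11 h12 h13 h14 h15 h16 h17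
  generalize P.ev p q x y = P at *
  generalize Q.ev p q x y = Q at *
  generalize S.ev p q x y = S at *
  generalize Ti.ev p q x y = Ti at *
  generalize b0.ev p q x y = b0 at *
  generalize b1.ev p q x y = b1 at *
  generalize b2.ev p q x y = b2 at *
  generalize b3.ev p q x y = b3 at *
  generalize b4.ev p q x y = b4 at *
  generalize b5.ev p q x y = b5 at *
  generalize e6.ev p q x y = e6 at *
  generalize e3.ev p q x y = e3 at *
  generalize e0.ev p q x y = e0 at *
  generalize u4.ev p q x y = u4 at *
  generalize u0.ev p q x y = u0 at *
  generalize a.ev p q x y = a at *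
  generalize b.ev p q x y = b at *
  generalize c.ev p q x y = c at *
  generalize w1.ev p q x y = w1 at *
  generalize w2.ev p q x y = w2 at *
  generalize w3.ev p q x y = w3 at *
  generalize q0.ev p q x y = q0 at *
  generalize q1.ev p q x y = q1 at *
  generalize q2.ev p q x y = q2 at *
  generalize q3.ev p q x y = q3 at *
  generalize q4.ev p q x y = q4 at *
  generalize q5.ev p q x y = q5 at *
  generalize q6.ev p q x y = q6 at *
  generalize q7.ev p q x y = q7 at *
  generalize q8.ev p q x y = q8 at *
  generalize q9.ev p q x y = q9 at *
  generalize q10.ev p q x y = q10 at *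
  linear_combination (q0*r^0+q1*r^1+q2*r^2+q3*r^3+q4*r^4+q5*r^5+q6*r^6+q7*r^7+q8*r^8+q9*r^9+q10*r^10)*hg + r^0*h0+r^1*h1+r^2*h2+r^3*h3+r^4*h4+r^5*h5+r^6*h6+r^7*h7+r^8*h8+r^9*h9+r^10*h10+r^11*h11+r^12*h12+r^13*h13+r^14*h14+r^15*h15+r^16*h16+r^17*h17
theorem asq_aux {K : Type*} [Field K] (P Pi v vi r B gd S : K) (h1 : P*Pi=1) (h2 : v*vi=1) (hG : P+Pi=8*v+7+vi)
   (hg : r^7+(1-8*v*P)*(r^6+r^5+r^4)+(1-8*v*P-7*P)*(r^3+r^2+r)-P^2=0)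
   (hB : B = 2*P + (2-vi)*r + (2*P-6-2*vi)*r^2 + (2*P-8-2*vi)*r^3+(8*v-2)*r^4+(-2*Pi)*r^5)
   (hS : S = 4*(Pi-P)-24*v+3*vi) (hgd : gd = 8*r^7+7*(-8*v*P)*r^6+4*(-7*P)*r^3+(-P*vi)) :
   7*B^2*P = -S*r^2*gd := by
  have key := asq_gen P Pi v vi r h1 h2 hG
    (Ex.P) (4*(Ex.Q-Ex.P)-24*Ex.v+3*Ex.w) (2*Ex.P) (2-Ex.w) (2*Ex.P-6-2*Ex.w) (2*Ex.P-8-2*Ex.w) (8*Ex.v-2) (-2*Ex.Q) (7*(-8*Ex.v*Ex.P)) (4*(-7*Ex.P)) (-Ex.P*Ex.w) (1-8*Ex.v*Ex.P) (1-8*Ex.v*Ex.P-7*Ex.P) (Ex.P^2) (-28*Ex.P) (-56+28*Ex.P) (28*Ex.w+84-160*Ex.v-36*Ex.P) (28*Ex.w+196+224*Ex.v-28*Ex.P)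
    (by decide +kernel) (by decide +kernel) (by decide +kernel) (by decide +kernel) (by decide +kernel) (by decide +kernel) (by decide +kernel) (by decide +kernel) (by decide +kernel) (by decide +kernel) (by decide +kernel) (by
      simp only [Ex.ev_add, Ex.ev_sub, Ex.ev_mul, Ex.ev_neg, Ex.ev_pow, Ex.ev_ofNat, Ex.ev_one, Ex.ev_zero, Ex.ev_P, Ex.ev_Q, Ex.ev_v, Ex.ev_w]
      exact hg)
  simp only [Ex.ev_add, Ex.ev_sub, Ex.ev_mul, Ex.ev_neg, Ex.ev_pow, Ex.ev_ofNat, Ex.ev_one, Ex.ev_zero, Ex.ev_P, Ex.ev_Q, Ex.ev_v, Ex.ev_w] at key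
  rw [hB, hS, hgd]
  exact key
theorem wat_aux {K : Type*} [Field K] (P Pi v vi r B gd S τ W Ti : K) (h1 : P*Pi=1) (h2 : v*vi=1) (hG : P+Pi=8*v+7+vi)
   (hg : r^7+(1-8*v*P)*(r^6+r^5+r^4)+(1-8*v*P-7*P)*(r^3+r^2+r)-P^2=0)
   (hB : B = 2*P + (2-vi)*r + (2*P-6-2*vi)*r^2 + (2*P-8-2*vi)*r^3+(8*v-2)*r^4+(-2*Pi)*r^5)
   (hS : S = 4*(Pi-P)-24*v+3*vi) (hgd : gd = 8*r^7+7*(-8*v*P)*r^6+4*(-7*P)*r^3+(-P*vi))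
   (hτ : τ = Pi*r^5-8*r+(-8*v)*r^4+8*v*P) (hW : W = Pi-8-8*v+8*v*P) (hTi : Ti = P-8-8*v+8*v*Pi) :
   -gd*B*(r*Ti-49*τ) = 7*r^4*P*S^2*(τ+(7+3*W)*r)+7*r^2*P*S*B*(7*τ+(35+7*W)*r)-r^2*gd*S*(21*τ+(49+7*W)*r) := by
  have key := wat_gen P Pi v vi r h1 h2 hG
    (Ex.P) (Ex.Q) (4*(Ex.Q-Ex.P)-24*Ex.v+3*Ex.w) (Ex.P-8-8*Ex.v+8*Ex.v*Ex.Q) (2*Ex.P) (2-Ex.w) (2*Ex.P-6-2*Ex.w) (2*Ex.P-8-2*Ex.w) (8*Ex.v-2) (-2*Ex.Q) (7*(-8*Ex.v*Ex.P)) (4*(-7*Ex.P)) (-Ex.P*Ex.w) (-8*Ex.v) (8*Ex.v*Ex.P) (1-8*Ex.v*Ex.P) (1-8*Ex.v*Ex.P-7*Ex.P) (Ex.P^2) (7+3*(Ex.Q-8-8*Ex.v+8*Ex.v*Ex.P)) (35+7*(Ex.Q-8-8*Ex.v+8*Ex.v*Ex.P)) (49+7*(Ex.Q-8-8*Ex.v+8*Ex.v*Ex.P))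 (784*Ex.P) (-392*Ex.w+688-128*Ex.v-2*Ex.w*Ex.P-768*Ex.P) (-49*Ex.w^2+294*Ex.w+48+5568*Ex.v-1024*Ex.v^2+50*Ex.w*Ex.P-1200*Ex.P-21824*Ex.v*Ex.P-43904*Ex.v^2*Ex.P) (392*Ex.w^2-1372*Ex.w-9800+7232*Ex.v+2176*Ex.v^2-392*Ex.w*Ex.P+4920*Ex.P+21680*Ex.v*Ex.P) (-686*Ex.w^2-3332*Ex.w-16856-9360*Ex.v-3968*Ex.v^2+3584*Ex.v^3+686*Ex.w*Ex.P-1616*Ex.P-7344*Ex.v*Ex.P+21504*Ex.v^2*Ex.P) (1078*Ex.w^2+5978*Ex.w+6664-21184*Ex.v+1088*Ex.v^2-11264*Ex.v^3-1078*Ex.w*Ex.P+1584*Ex.P-4112*Ex.v*Ex.P+1408*Ex.v^2*Ex.P) (-784*Ex.w^2-3528*Ex.w-784-25872*Ex.v-6848*Ex.v^2+8192*Ex.v^3+784*Ex.w*Ex.P-1960*Ex.P+9984*Ex.v*Ex.P-1024*Ex.v^2*Ex.P) (1176*Ex.w^2+13720*Ex.w+53312+69776*Ex.v+32704*Ex.v^2-1176*Ex.w*Ex.P-5488*Ex.P-6832*Ex.v*Ex.P)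 (-784*Ex.w^2-7840*Ex.w-30576-73696*Ex.v-90944*Ex.v^2+784*Ex.w*Ex.P+2352*Ex.P+8624*Ex.v*Ex.P) (784*Ex.w^2+10192*Ex.w+53312+141904*Ex.v+119168*Ex.v^2-784*Ex.w*Ex.P-4704*Ex.P-14896*Ex.v*Ex.P) (-784*Ex.w^2-10976*Ex.w-50176-87808*Ex.v-50176*Ex.v^2+784*Ex.w*Ex.P+5488*Ex.P+6272*Ex.v*Ex.P)
    (by decide +kernel) (by decide +kernel) (by decide +kernel) (by decide +kernel) (by decide +kernel) (by decide +kernel) (by decide +kernel) (by decide +kernel) (by decide +kernel) (by decide +kernel) (by decide +kernel) (by decide +kernel) (by decide +kernel) (by decide +kernel) (by decide +kernel) (by decide +kernel) (by decide +kernel) (by decide +kernel) (by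
      simp only [Ex.ev_add, Ex.ev_sub, Ex.ev_mul, Ex.ev_neg, Ex.ev_pow, Ex.ev_ofNat, Ex.ev_one, Ex.ev_zero, Ex.ev_P, Ex.ev_Q, Ex.ev_v, Ex.ev_w]
      exact hg)
  simp only [Ex.ev_add, Ex.ev_sub, Ex.ev_mul, Ex.ev_neg, Ex.ev_pow, Ex.ev_ofNat, Ex.ev_one, Ex.ev_zero, Ex.ev_P, Ex.ev_Q, Ex.ev_v, Ex.ev_w] at key
  rw [hB, hS, hgd, hτ, hW, hTi]
  exact key

theorem DS'_eq : DS' = 4*(Pi'-P')-24*v'+3*vi' := by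
  unfold DS' DS Pi' P' v' vi'
  simp only [map_add, map_sub, map_mul, map_ofNat]
theorem gd_eq : 8*rr^7+7*(-8*v'*P')*rr^6+4*(-7*P')*rr^3+(-P'*vi') = rr^3*P'*DD := gd_aux PP Pi vv vi P' Pi' v' vi' rr PPi vvi r_ne PPi' vvi' Pr vr G'
theorem r_ne_one : rr - 1 ≠ 0 := by
  intro h
  have := LC_r.eq ((LC_one.low (-2) (by norm_num)).congr rfl rfl |> (by rw [sub_eq_zero.1 h]; exact ·))
  norm_num at this
theorem g7_aux {K : Type*} [Field K] (P Pi v vi r : K) (h1 : P*Pi=1) (hG : P+Pi=8*v+7+vi) (hr : r-1 ≠ 0)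
    (h8 : r^8+(-8*v*P)*r^7+(-7*P)*r^4+(-P*vi)*r+P^2=0) :
    r^7+(1-8*v*P)*(r^6+r^5+r^4)+(1-8*v*P-7*P)*(r^3+r^2+r)-P^2=0 := by
  apply mul_left_cancel₀ hr
  linear_combination h8 - r*(P*hG - h1)
theorem g7 : rr^7+(1-8*v'*P')*(rr^6+rr^5+rr^4)+(1-8*v'*P'-7*P')*(rr^3+rr^2+rr)-P'^2=0 :=
  g7_aux P' Pi' v' vi' rr PPi' GG' r_ne_one g8
theorem rD : rr*DD = -7*DS'*yy^2 := by
  linear_combination yy^2*xisq - rr*DD*(xi*yy+1)*xy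
theorem LC_P' : LC P' (-7) 1 := (LC_VV 7 LC_P).congr (by norm_num) rfl
theorem LC_Pi' : LC Pi' 7 1 := (LC_VV 7 LC_Pi).congr (by norm_num) rfl
theorem LC_v' : LC v' 7 1 := (LC_VV 7 LC_v).congr (by norm_num) rfl
theorem LC_vi' : LC vi' (-7) 1 := (LC_VV 7 LC_vi).congr (by norm_num) rfl
theorem Bid : DS'*yy*rr^2 = 2*P' + (2-vi')*rr + (2*P'-6-2*vi')*rr^2 + (2*P'-8-2*vi')*rr^3+(8*v'-2)*rr^4+(-2*Pi')*rr^5 := by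
  have hA := asq_aux P' Pi' v' vi' rr _ _ DS' PPi' vvi' GG' g7 rfl DS'_eq gd_eq.symm
  set B := 2*P' + (2-vi')*rr + (2*P'-6-2*vi')*rr^2 + (2*P'-8-2*vi')*rr^3+(8*v'-2)*rr^4+(-2*Pi')*rr^5 with hB
  have hP0 : P' ≠ 0 := left_ne_zero_of_mul_eq_one PPi'
  have h1 : (DS'*yy*rr^2)^2 = B^2 := by
    apply mul_left_cancel₀ (mul_ne_zero (show (7:KK) ≠ 0 by norm_num) hP0)
    linear_combination -hA + DS'*rr^4*P'*rD
  have hl : LC (DS'*yy*rr^2) (-9) (-1) := ((DS'_lc.mul LC_y).mul (LC_r.pow 2)).congr (by norm_num) (by norm_num)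
  have hB' : B = 2*P' + 2*rr - vi'*rr + (16*v'+8-2*Pi')*rr^2 + (16*v'+6-2*Pi')*rr^3+(8*v'-2)*rr^4-2*Pi'*rr^5 := by
    rw [hB]; linear_combination 2*(rr^2+rr^3)*GG'
  have l0 (n : ℕ) [n.AtLeastTwo] : LC (16*v'+OfNat.ofNat n-2*Pi') 0 (OfNat.ofNat n) :=
    (((((LC_ofNat 16).mul LC_v').low 0 (by norm_num)).add (LC_ofNat n)).sub (((LC_ofNat 2).mul LC_Pi').low 0 (by norm_num))).congr rfl (by simp)
  have lB : LC B (-9) (-1) := by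
    rw [hB']
    refine LC.congr ((((((LC.add (((LC_ofNat 2).mul LC_P').low (-9) (by norm_num)) (((LC_ofNat 2).mul LC_r).low (-9) (by norm_num))).sub
      ((LC_vi'.mul LC_r).congr (l := -9) (by norm_num) rfl)).add
      (((l0 8).mul (LC_r.pow 2)).low (-9) (by norm_num))).add
      (((l0 6).mul (LC_r.pow 3)).low (-9) (by norm_num))).add
      (((((((LC_ofNat 8).mul LC_v').low 0 (by norm_num)).sub (LC_ofNat 2))).mul (LC_r.pow 4)).low (-9) (by norm_num))).sub
      ((((LC_ofNat 2).mul LC_Pi').mul (LC_r.pow 5)).low (-9) (by norm_num))) rfl (by norm_num)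
  rcases sq_eq_sq_iff_eq_or_eq_neg.1 h1 with h | h
  · exact h
  · rw [h] at hl
    have := hl.eq lB.neg
    norm_num at this
theorem P_r : PP = rr^4*Pi' := by linear_combination -PP*PPi' + Pi'*Pr
theorem Pi_r : Pi*rr^4 = P' := by linear_combination P'*PPi - Pi*Pr
theorem ti_r : rr*ti = Pi'*rr^5-8*rr+(-8*v')*rr^4+8*v'*P' := by
  rw [M1, P_r, vr, ← Pi_r]; ring
theorem T_eq : 49*T = Pi'-8-8*v'+8*v'*P' := by
  unfold T Pi' v' P'
  simpa only [map_add, map_sub, map_mul, map_ofNat] using congrArg (VV 7) M2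
/-- V7 of inverse t -/
def Ti : KK := VV 7 ti
theorem Ti_eq : Ti = P'-8-8*v'+8*v'*Pi' := by
  unfold Ti Pi' v' P'
  simpa only [map_add, map_sub, map_mul, map_ofNat] using congrArg (VV 7) M1
theorem TTi : T*Ti=1 := by unfold T Ti; rw [← map_mul, tti, map_one]
theorem wat : yy^3*(Ti-49*ti) = (ti+7+147*T)+yy*(7*ti+35+343*T)+yy^2*(21*ti+49+343*T) := by
  have h := wat_aux P' Pi' v' vi' rr _ _ DS' _ _ Ti PPi' vvi' GG' g7 Bid DS'_eq gd_eq.symm ti_r T_eq Ti_eq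
  have hP0 : P' ≠ 0 := left_ne_zero_of_mul_eq_one PPi'
  have e : (7*rr^5*P'*DS'^2) ≠ 0 := mul_ne_zero (mul_ne_zero (mul_ne_zero (by norm_num) (pow_ne_zero _ r_ne)) hP0) (pow_ne_zero _ DS'_ne)
  apply mul_left_cancel₀ e
  linear_combination h + (rr^5*P'*DS'*yy*(Ti-49*ti) - rr^5*P'*DS'*(21*ti+49+343*T))*rD
theorem y7_aux {K : Type*} [Field K] (y t ti T Ti : K) (h1 : t*ti=1) (h2 : T*Ti=1) (h : y^4=t*T)
   (w : y^3*(Ti-49*ti) = (ti+7+147*T)+y*(7*ti+35+343*T)+y^2*(21*ti+49+343*T)) :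
   y^7 = T^2*(1+7*y+21*y^2+49*y^3)+(7*T+147*T^2)*y^4+(35*T+343*T^2)*y^5+(49*T+343*T^2)*y^6 := by
  linear_combination T*y^4*w - y^7*h2 + (T*ti*(1+7*y+21*y^2+49*y^3))*h + T^2*(1+7*y+21*y^2+49*y^3)*h1
theorem y7 : yy^7 = T^2*(1+7*yy+21*yy^2+49*yy^3)+(7*T+147*T^2)*yy^4+(35*T+343*T^2)*yy^5+(49*T+343*T^2)*yy^6 := y7_aux _ _ _ _ _ tti TTi y4 wat

theorem UUs (c : KK) (k a : ℤ) : UU (VV 7 c * (xi^k*rr^a)) = c*SS k a := UU_V _ _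
theorem VPi : VV 7 Pi = Pi' := rfl
theorem VP : VV 7 PP = P' := rfl
theorem Vv : VV 7 vv = v' := rfl
theorem Vvi : VV 7 vi = vi' := rfl
theorem SS_rec (k a : ℤ) : SS k (a+7) + (1-8*vv*PP)*(SS k (a+6)+SS k (a+5)+SS k (a+4)) + (1-8*vv*PP-7*PP)*(SS k (a+3)+SS k (a+2)+SS k (a+1)) - PP^2*SS k a = 0 := by
  have e : VV 7 1 * (xi^k*rr^(a+7)) + (VV 7 (1-8*vv*PP) * (xi^k*rr^(a+6)) + (VV 7 (1-8*vv*PP) * (xi^k*rr^(a+5)) + (VV 7 (1-8*vv*PP) * (xi^k*rr^(a+4))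
    + (VV 7 (1-8*vv*PP-7*PP) * (xi^k*rr^(a+3)) + (VV 7 (1-8*vv*PP-7*PP) * (xi^k*rr^(a+2)) + (VV 7 (1-8*vv*PP-7*PP) * (xi^k*rr^(a+1)) + VV 7 (-PP^2) * (xi^k*rr^a))))))) = 0 := by
    simp only [zpow_add₀ r_ne, map_one, map_sub, map_mul, map_neg, map_pow, map_ofNat, VP, Vv]
    simp only [zpow_ofNat, zpow_one]
    linear_combination xi^k*rr^a*g7
  have := congrArg UU e
  simp only [UU_add, UUs, UU_zero] at this
  linear_combination this
theorem y4i : ti = xi^4*T*1 := by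
  linear_combination (-ti*(xi^3*yy^3+xi^2*yy^2+xi*yy+1))*xy + ti*xi^4*y4 + xi^4*T*tti
theorem x4i : xi^4 = Ti*ti := by
  linear_combination -Ti*y4i - xi^4*TTi
theorem SS_N (k a : ℤ) : SS (k+4) (a+1) = ti*(Pi*SS k (a+5)-8*SS k (a+1)-8*vv*SS k (a+4)+8*vv*PP*SS k a) := by
  have e : xi^(k+4)*rr^(a+1) = VV 7 (ti*Pi) * (xi^k*rr^(a+5)) + (VV 7 (ti*(-8)) * (xi^k*rr^(a+1)) + (VV 7 (ti*(-8*vv)) * (xi^k*rr^(a+4)) + VV 7 (ti*(8*vv*PP)) * (xi^k*rr^a))) := by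
    simp only [zpow_add₀ r_ne, zpow_add₀ xi_ne, map_one, map_sub, map_mul, map_neg, map_pow, map_ofNat, VP, Vv, VPi, show VV 7 ti = Ti from rfl]
    simp only [zpow_ofNat, zpow_one]
    linear_combination xi^k*rr^a*rr*x4i + xi^k*rr^a*Ti*ti_r
  have := congrArg UU e
  simp only [UU_add, UUs, UU_zero] at this
  rw [show SS (k+4) (a+1) = UU (xi^(k+4)*rr^(a+1)) from rfl, this]; ring
theorem SS_odd (k a : ℤ) : DS * SS k (a+2) = 2*PP*SS (k+1) a + (2-vi)*SS (k+1) (a+1) + (2*PP-6-2*vi)*SS (k+1) (a+2) + (2*PP-8-2*vi)*SS (k+1) (a+3) + (8*vv-2)*SS (k+1) (a+4) + (-2*Pi)*SS (k+1) (a+5) := by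
  have e : VV 7 DS * (xi^k*rr^(a+2)) = VV 7 (2*PP)*(xi^(k+1)*rr^a) + (VV 7 (2-vi)*(xi^(k+1)*rr^(a+1)) + (VV 7 (2*PP-6-2*vi)*(xi^(k+1)*rr^(a+2)) + (VV 7 (2*PP-8-2*vi)*(xi^(k+1)*rr^(a+3)) + (VV 7 (8*vv-2)*(xi^(k+1)*rr^(a+4)) + VV 7 (-2*Pi)*(xi^(k+1)*rr^(a+5)))))) := by
    simp only [zpow_add₀ r_ne, zpow_add₀ xi_ne, map_one, map_sub, map_mul, map_neg, map_pow, map_ofNat, VP, Vv, VPi, Vvi, show VV 7 DS = DS' from rfl]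
    simp only [zpow_ofNat, zpow_one]
    linear_combination xi^k*rr^a*xi*Bid - xi^k*rr^a*rr^2*DS'*xy
  have := congrArg UU e
  simp only [UU_add, UUs, UU_zero] at this
  rw [this]; ring
theorem rDD : rr^4*DD = 4*rr^8*Pi'-4*P'-24*rr^7*v'+3*vi'*rr := by
  have h3 : vi*rr^3 = vi' := by linear_combination vi'*vvi - vi'*vi*vr - vi*rr^3*vvi'
  unfold DD
  linear_combination 4*rr^4*P_r - 4*Pi_r - 24*rr^4*vr + 3*rr*h3
theorem SS_y2 (k a : ℤ) : 7*DS * SS k (a+3) = -(4*Pi*SS (k+2) (a+8)-4*PP*SS (k+2) a-24*vv*SS (k+2) (a+7)+3*vi*SS (k+2) (a+1)) := by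
  have e : VV 7 (7*DS) * (xi^k*rr^(a+3)) = VV 7 (-4*Pi)*(xi^(k+2)*rr^(a+8)) + (VV 7 (4*PP)*(xi^(k+2)*rr^a) + (VV 7 (24*vv)*(xi^(k+2)*rr^(a+7)) + VV 7 (-3*vi)*(xi^(k+2)*rr^(a+1)))) := by
    simp only [zpow_add₀ r_ne, zpow_add₀ xi_ne, map_one, map_sub, map_mul, map_neg, map_pow, map_ofNat, VP, Vv, VPi, Vvi, show VV 7 DS = DS' from rfl]
    simp only [zpow_ofNat, zpow_one]
    linear_combination xi^k*rr^a*(-xi^2)*rDD + xi^k*rr^a*rr^3*xisq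
  have := congrArg UU e
  simp only [UU_add, UUs, UU_zero] at this
  rw [this]; ring

/-- value in KK -/
def EV (e : Ex) : KK := e.ev PP Pi vv vi
theorem EV_chk (a b : Ex) (h : Ex.chk a b = true) : EV a = EV b := Ex.sound PPi vvi G' a b h
/-- formal P -/
abbrev xP : Ex := Ex.P
/-- formal inverse of P -/
abbrev xQ : Ex := Ex.Q
/-- formal v -/
abbrev xv : Ex := Ex.v
/-- formal inverse of v -/
abbrev xw : Ex := Ex.w
/-- formal DS -/
def xD : Ex := 4*(xQ-xP)-24*xv+3*xw
/-- formal inverse of t -/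
def xti : Ex := xP-8-8*xv+8*xv*xQ
/-- formal 49 t -/
def xt : Ex := xQ-8-8*xv+8*xv*xP
theorem EV_D : EV xD = DS := by
  simp only [EV, xD, Ex.ev_add, Ex.ev_sub, Ex.ev_mul, Ex.ev_ofNat, Ex.ev_P, Ex.ev_Q, Ex.ev_v, Ex.ev_w]; rfl
theorem EV_ti : EV xti = ti := by
  rw [M1]; simp only [EV, xti, Ex.ev_add, Ex.ev_sub, Ex.ev_mul, Ex.ev_ofNat, Ex.ev_P, Ex.ev_Q, Ex.ev_v, Ex.ev_w]
theorem EV_t : EV xt = 49*tt := by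
  rw [M2]; simp only [EV, xt, Ex.ev_add, Ex.ev_sub, Ex.ev_mul, Ex.ev_ofNat, Ex.ev_P, Ex.ev_Q, Ex.ev_v, Ex.ev_w]
theorem EV_add (a b : Ex) : EV (a+b) = EV a + EV b := rfl
theorem EV_sub (a b : Ex) : EV (a-b) = EV a - EV b := rfl
theorem EV_mul (a b : Ex) : EV (a*b) = EV a * EV b := rfl
theorem EV_pow (a : Ex) (n : ℕ) : EV (a^n) = EV a ^ n := rfl
theorem EV_neg (a : Ex) : EV (-a) = - EV a := Ex.ev_neg a
theorem EV_ofNat (n : ℕ) [n.AtLeastTwo] : EV (ofNat(n) : Ex) = ofNat(n) := Ex.ev_ofNat n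
theorem EV_one : EV 1 = 1 := Ex.ev_one
theorem EV_zero : EV 0 = 0 := Ex.ev_zero
theorem EV_P : EV xP = PP := rfl
theorem EV_Q : EV xQ = Pi := rfl
theorem EV_v : EV xv = vv := rfl
theorem EV_w : EV xw = vi := rfl
theorem EV_c (n : ℤ) : EV (Ex.c n) = n := rfl
/-- table entry -/
def gt (l : List Ex) (i : ℕ) : Ex := l.getD i 0
/-- correct entry -/
def TE (k : ℤ) (l : List Ex) (i : ℕ) : Prop := SS k ((i:ℤ)-2) = EV (gt l i)
/-- formal recurrence -/
def xrec (l : List Ex) (i : ℕ) : Ex := (1-8*xv*xP)*(gt l (i+6)+gt l (i+5)+gt l (i+4)) + (1-8*xv*xP-7*xP)*(gt l (i+3)+gt l (i+2)+gt l (i+1))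
/-- recurrence check -/
def chkR (l : List Ex) (i : ℕ) : Bool := Ex.chk (gt l (i+7) + xrec l i) (xP^2*gt l i)
theorem SSi (k : ℤ) (i j : ℕ) : SS k (((i+j:ℕ):ℤ)-2) = SS k ((i:ℤ)-2+j) := by congr 1; push_cast; ring
theorem chkR_ev (l : List Ex) (i : ℕ) (h : chkR l i = true) : EV (gt l (i+7)) + ((1-8*vv*PP)*(EV (gt l (i+6))+EV (gt l (i+5))+EV (gt l (i+4))) + (1-8*vv*PP-7*PP)*(EV (gt l (i+3))+EV (gt l (i+2))+EV (gt l (i+1)))) = PP^2*EV (gt l i) := by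
  have := EV_chk _ _ h
  simpa only [xrec, EV_add, EV_sub, EV_mul, EV_pow, EV_ofNat, EV_one, EV_P, EV_v] using this
theorem TE_fwd (k : ℤ) (l : List Ex) (i : ℕ) (h : chkR l i = true) (hb : ∀ j < 7, TE k l (i+j)) : TE k l (i+7) := by
  have h1 := chkR_ev l i h
  have h2 := SS_rec k ((i:ℤ)-2)
  have e := fun j (hj : j < 7) => (SSi k i j).symm.trans (hb j hj)
  have e0 := e 0 (by norm_num)
  have e1 := e 1 (by norm_num)
  have e2 := e 2 (by norm_num)
  have e3 := e 3 (by norm_num)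
  have e4 := e 4 (by norm_num)
  have e5 := e 5 (by norm_num)
  have e6 := e 6 (by norm_num)
  have e7 := SSi k i 7
  unfold TE
  push_cast at e0 e1 e2 e3 e4 e5 e6 e7
  rw [add_zero] at e0
  push_cast
  rw [e1, e2, e3, e4, e5, e6, e0, ← e7] at h2
  linear_combination h2 - h1
theorem TE_bwd (k : ℤ) (l : List Ex) (i : ℕ) (h : chkR l i = true) (hb : ∀ j < 7, TE k l (i+1+j)) : TE k l i := by
  have h1 := chkR_ev l i h
  have h2 := SS_rec k ((i:ℤ)-2)
  have e : ∀ j : ℕ, 1 ≤ j → j < 8 → SS k ((i:ℤ)-2+j) = EV (gt l (i+j)) := by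
    intro j h1 h2
    rw [← SSi]
    have := hb (j-1) (by omega)
    rwa [show i+1+(j-1) = i+j by omega] at this
  have e1 := e 1 (by norm_num) (by norm_num)
  have e2 := e 2 (by norm_num) (by norm_num)
  have e3 := e 3 (by norm_num) (by norm_num)
  have e4 := e 4 (by norm_num) (by norm_num)
  have e5 := e 5 (by norm_num) (by norm_num)
  have e6 := e 6 (by norm_num) (by norm_num)
  have e7 := e 7 (by norm_num) (by norm_num)
  unfold TE
  push_cast at e1 e2 e3 e4 e5 e6 e7
  rw [e1, e2, e3, e4, e5, e6, e7] at h2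
  apply mul_left_cancel₀ (pow_ne_zero 2 P_ne)
  linear_combination h1 - h2
theorem TE_all (k : ℤ) (l : List Ex) (m n : ℕ) (hb : ∀ j < 7, TE k l (m+j)) (h : ((List.range n).all (chkR l)) = true) (i : ℕ) (hi : i < n+7) (hm : m ≤ n): TE k l i := by
  have h' : ∀ i < n, chkR l i = true := by simpa using h
  have up : ∀ c, m + c ≤ n → ∀ j < 7, TE k l (m+c+j) := by
    intro c
    induction c with
    | zero => intro _ j hj; exact hb j hj
    | succ c ih =>
      intro hc j hj
      have := ih (by omega)
      rcases Nat.lt_or_ge j 6 with h6 | h6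
      · rw [show m+(c+1)+j = m+c+(j+1) by omega]; exact this _ (by omega)
      · rw [show m+(c+1)+j = m+c+7 by omega]
        exact TE_fwd k l _ (h' _ (by omega)) this
  have dn : ∀ c, c ≤ m → ∀ j < 7, TE k l (m-c+j) := by
    intro c
    induction c with
    | zero => intro _ j hj; exact hb j hj
    | succ c ih =>
      intro hc j hj
      have := ih (by omega)
      rcases Nat.eq_zero_or_pos j with h0 | h0
      · subst h0
        exact TE_bwd k l _ (h' _ (by omega)) (by rw [show m-(c+1)+0+1 = m-c by omega]; exact this)
      · rw [show m-(c+1)+j = m-c+(j-1) by omega]; exact this _ (by omega)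
  rcases Nat.lt_or_ge i m with h1 | h1
  · have := dn (m-i) (by omega) 0 (by norm_num)
    rwa [show m-(m-i)+0 = i by omega] at this
  · rcases Nat.lt_or_ge i (m+7) with h2 | h2
    · rw [show i = m + (i-m) by omega]; exact hb _ (by omega)
    · have := up (i-m-6) (by omega) 6 (by norm_num)
      rwa [show m+(i-m-6)+6 = i by omega] at this
/-- check of the step by four -/
def chkN (l l' : List Ex) (i : ℕ) : Bool := Ex.chk (gt l' (i+1)) (xti*(xQ*gt l (i+5)-8*gt l (i+1)-8*xv*gt l (i+4)+8*xv*xP*gt l i))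
theorem TE_N (k : ℤ) (l l' : List Ex) (i : ℕ) (h : ∀ j < 6, TE k l (i+j)) (hc : chkN l l' i = true) : TE (k+4) l' (i+1) := by
  have h1 := EV_chk _ _ hc
  simp only [EV_add, EV_sub, EV_mul, EV_ofNat, EV_P, EV_Q, EV_v, EV_ti] at h1
  have h2 := SS_N k ((i:ℤ)-2)
  have e := fun j (hj : j < 6) => (SSi k i j).symm.trans (h j hj)
  have e0 := e 0 (by norm_num)
  have e1 := e 1 (by norm_num)
  have e4 := e 4 (by norm_num)
  have e5 := e 5 (by norm_num)
  unfold TE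
  rw [SSi, h1]
  push_cast at e0 e1 e4 e5 ⊢
  rw [add_zero] at e0
  rw [h2, e0, e1, e4, e5]; rfl
/-- check of the step by two -/
def chkY (l l' : List Ex) (i : ℕ) : Bool := Ex.chk (7*xD*gt l' (i+3)) (-(4*xQ*gt l (i+8)-4*xP*gt l i-24*xv*gt l (i+7)+3*xw*gt l (i+1)))
theorem DS_ne : DS ≠ 0 := LC_DS.ne (by norm_num)
theorem TE_Y (k : ℤ) (l l' : List Ex) (i : ℕ) (h : ∀ j < 9, TE (k+2) l (i+j)) (hc : chkY l l' i = true) : TE k l' (i+3) := by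
  have h1 := EV_chk _ _ hc
  simp only [EV_add, EV_sub, EV_mul, EV_neg, EV_ofNat, EV_P, EV_Q, EV_v, EV_w, EV_D] at h1
  have h2 := SS_y2 k ((i:ℤ)-2)
  have e := fun j (hj : j < 9) => (SSi (k+2) i j).symm.trans (h j hj)
  have e0 := e 0 (by norm_num)
  have e1 := e 1 (by norm_num)
  have e4 := e 7 (by norm_num)
  have e5 := e 8 (by norm_num)
  unfold TE
  rw [SSi]
  push_cast at e0 e1 e4 e5 ⊢
  rw [add_zero] at e0
  rw [e0, e1, e4, e5] at h2
  apply mul_left_cancel₀ (mul_ne_zero (show (7:KK) ≠ 0 by norm_num) DS_ne)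
  rw [h2, h1]; rfl
/-- formal odd step -/
def xodd (l : List Ex) (i : ℕ) : Ex := 2*xP*gt l i + (2-xw)*gt l (i+1) + (2*xP-6-2*xw)*gt l (i+2) + (2*xP-8-2*xw)*gt l (i+3) + (8*xv-2)*gt l (i+4) + (-2*xQ)*gt l (i+5)
theorem TE_odd (k : ℤ) (l : List Ex) (i : ℕ) (h : ∀ j < 6, TE (k+1) l (i+j)) : DS*SS k ((i:ℤ)-2+2) = EV (xodd l i) := by
  have h2 := SS_odd k ((i:ℤ)-2)
  have e := fun j (hj : j < 6) => (SSi (k+1) i j).symm.trans (h j hj)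
  have e0 := e 0 (by norm_num)
  have e1 := e 1 (by norm_num)
  have e2 := e 2 (by norm_num)
  have e3 := e 3 (by norm_num)
  have e4 := e 4 (by norm_num)
  have e5 := e 5 (by norm_num)
  push_cast at e0 e1 e2 e3 e4 e5 ⊢
  rw [add_zero] at e0
  rw [h2, e0, e1, e2, e3, e4, e5]
  simp only [xodd, EV_add, EV_sub, EV_mul, EV_neg, EV_ofNat, EV_P, EV_Q, EV_v, EV_w]; rfl
/-- table -/
def tab2 : List Ex := [.lit 0 [1] [],
  .lit 0 [1] [],
  .lit 0 [1] [],
  .lit 0 [1] [],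
  .lit 0 [1] [],
  .lit 0 [1] [],
  .lit 0 [1] [],
  .lit 1 [0,-7] [1,28,56],
  .lit 1 [0,-7,-224,-448] [8,280,2016,4928,3584],
  .lit 1 [0,-63,-2240,-16128,-39424,-28672] [64,2688,32256,168448,430080,516096,229376],
  .lit 1 [0,-511,-21504,-258048,-1347584,-3440640,-4128768,-1835008] [512,25088,412160,3308032,14809088,38678528,58032128,45875200,14680064],
  .lit 2 [0,-7,-4291,-201096,-3297280,-26464256,-118472704,-309428224,-464257024,-367001600,-117440512] [7,4341,231140,4735192,50981952,328036352,1339670528,3550511104,6059196416,6385827840,3758096384,939524096]]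
/-- table -/
def tab6 : List Ex := [.lit 0 [49,2752,13824,17408,4096] [-8,-160,-1728,-512],
  .lit 0 [49] [],
  .lit 0 [49] [],
  .lit 1 [0,-295,-1728,-2176,-512] [1,20,216,64],
  .lit 0 [49] [],
  .lit 0 [49] [],
  .lit 0 [49] [],
  .lit 2 [0,1,69,216,64] [-1,-27,-20,-8],
  .lit 0 [49] [],
  .lit 0 [49] [],
  .lit 3 [0,-1,-20,-167,-64] [1,27,20,8],
  .lit 0 [49] [],
  .lit 0 [49] [],
  .lit 0 [49] [],
  .lit 4 [0,-6,-162,-120,1] [6,204,1296,2064],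
  .lit 4 [0,-49,-1666,-10584,-16807] [49,2009,22589,102949,201684,134456]]
/-- table -/
def tab4 : List Ex := [.lit 0 [-7] [],
  .lit 0 [-7] [],
  .lit 0 [-7,-192,-256] [-4,32],
  .lit 0 [-7,-8,64] [8,-8],
  .lit 0 [-7] [],
  .lit 1 [0,41,64] [1,-8],
  .lit 1 [0,-3,-32] [-4,4],
  .lit 0 [-7] [],
  .lit 0 [-7] [],
  .lit 2 [0,-3,17] [3,-3],
  .lit 2 [0,-8,1] [8,48],
  .lit 2 [0,-56,-343] [56,728,2744,2744],
  .lit 3 [0,-1,-440,-5831,-21952,-21952] [1,447,8960,65856,219520,329280,175616]]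
/-- table -/
def tab10 : List Ex := [.lit 1 [0,2345,-672,-927808,-5784576,-12013568,-9175040,-1835008] [56,1064,-8288,48832,648704,946176,229376],
  .lit 1 [0,2465,1216,-9472,55808,741376,1081344,262144] [-64,-1664,512,1536,4096,-106496,-32768],
  .lit 0 [2401] [],
  .lit 2 [0,9,2509,149112,929664,1930752,1474560,294912] [-9,-171,1332,-7848,-104256,-152064,-36864],
  .lit 2 [0,-16,2097,2368,-13952,-185344,-270336,-65536] [16,416,-128,-384,-1024,26624,8192],
  .lit 0 [2401] [],
  .lit 3 [0,-1,-12,-14167,-103296,-214528,-163840,-32768] [1,19,-148,872,11584,16896,4096],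
  .lit 0 [2401] [],
  .lit 3 [0,8,208,2337,-192,-512,13312,4096] [-8,-264,-1448,-872,1184,-1216,-512],
  .lit 0 [2401] [],
  .lit 4 [0,2,38,-296,4145,23168,33792,8192] [-2,-52,16,48,128,-3328,-1024],
  .lit 4 [0,-9,-234,72,2617,576,-14976,-4608] [9,297,1629,981,-1332,1368,576],
  .lit 0 [2401] [],
  .lit 5 [0,-1,-19,148,-872,-9183,-16896,-4096] [1,26,-8,-24,-64,1664,512],
  .lit 5 [0,7,182,-56,-168,1953,11648,3584] [-7,-231,-1267,-763,1036,-1064,-448],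
  .lit 5 [0,1,33,181,109,2253,152,64] [-1,-40,-419,-1614,-2071,-12,-8]]
/-- table -/
def tab8 : List Ex := [.lit 0 [-343,-128,1152,-7168,40960,65536] [128,-256,0,2048,-8192],
  .lit 1 [0,2057,21632,64512,77824,32768] [1,-16,-2240,-6144,-4096],
  .lit 1 [0,-363,320,44800,122880,81920] [20,-180,1120,-6400,-10240],
  .lit 1 [0,-279,-576,3584,-20480,-32768] [-64,128,0,-1024,4096],
  .lit 1 [0,-407,128,0,-1024,4096] [64,320,-448,576,-512],
  .lit 2 [0,5,-423,-11200,-30720,-20480] [-5,45,-280,1600,2560],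
  .lit 2 [0,-24,-127,-1344,7680,12288] [24,-48,0,384,-1536],
  .lit 2 [0,40,-423,0,640,-2560] [-40,-200,280,-360,320],
  .lit 3 [0,-1,16,1897,6144,4096] [1,-9,56,-320,-512],
  .lit 3 [0,8,-72,105,-2560,-4096] [-8,16,0,-128,512],
  .lit 3 [0,-20,40,-343,-320,1280] [20,100,-140,180,-160],
  .lit 3 [0,-8,-40,-287,-72,64] [8,96,280,16,-8],
  .lit 4 [0,-2,18,-112,297,1024] [2,-4,0,32,-128],
  .lit 4 [0,11,-22,0,-167,-704] [-11,-55,77,-99,88],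
  .lit 4 [0,12,60,-84,-235,-96] [-12,-144,-420,-24,12],
  .lit 5 [0,-1,9,-56,320,169] [1,-2,0,16,-64]]
theorem TE2 (i : ℕ) (hi : i < 12) : TE 2 tab2 i := by
  refine TE_all 2 tab2 0 5 ?_ (by decide +kernel) i hi (by norm_num)
  intro j hj
  unfold TE
  rw [S2 _ (by push_cast; omega) (by push_cast; omega), ← EV_one]
  apply EV_chk
  revert j; decide +kernel
theorem TE6 (i : ℕ) (hi : i < 16) : TE 6 tab6 i := by
  refine TE_all 6 tab6 1 9 ?_ (by decide +kernel) i hi (by norm_num)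
  intro j hj
  rw [add_comm]
  refine TE_N 2 tab2 tab6 j (fun m hm => TE2 _ (by omega)) ?_
  revert j; decide +kernel
theorem TE4 (i : ℕ) (hi : i < 13) : TE 4 tab4 i := by
  refine TE_all 4 tab4 3 6 ?_ (by decide +kernel) i hi (by norm_num)
  intro j hj
  rw [add_comm]
  refine TE_Y 4 tab6 tab4 j (fun m hm => TE6 _ (by omega)) ?_
  revert j; decide +kernel
theorem TE10 (i : ℕ) (hi : i < 16) : TE 10 tab10 i := by
  refine TE_all 10 tab10 1 9 ?_ (by decide +kernel) i hi (by norm_num)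
  intro j hj
  rw [add_comm]
  refine TE_N 6 tab6 tab10 j (fun m hm => TE6 _ (by omega)) ?_
  revert j; decide +kernel
theorem TE8 (i : ℕ) (hi : i < 16) : TE 8 tab8 i := by
  refine TE_all 8 tab8 3 9 ?_ (by decide +kernel) i hi (by norm_num)
  intro j hj
  rw [add_comm]
  refine TE_Y 8 tab10 tab8 j (fun m hm => TE10 _ (by omega)) ?_
  revert j; decide +kernel

/-- p0 -/
def pz : KK := (8*PP*vv-1)/7
/-- basis functions -/
def gg : ℕ → KK
  | 0 => 1
  | 1 => pz
  | _ => PP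
/-- t-basis expressions -/
abbrev TB := List (ℕ × ℤ × ℤ)
/-- value of a t-basis expression -/
def evT : TB → KK
  | [] => 0
  | x :: l => x.2.2 * (tt^x.2.1 * gg x.1) + evT l
/-- formal 7 g -/
def xg : ℕ → Ex
  | 0 => 7
  | 1 => 8*xP*xv-1
  | _ => 7*xP
/-- formal 49 t^j -/
def xpw (j : ℤ) : Ex := if j ≤ 0 then 49*xti^(-j).toNat else xt
/-- formal value -/
def toX : TB → Ex
  | [] => 0
  | x :: l => Ex.c x.2.2 * (xpw x.2.1 * xg x.1) + toX l
theorem EV_g (i : ℕ) : EV (xg i) = 7*gg i := by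
  match i with
  | 0 => simp only [xg, gg, EV_ofNat, mul_one]
  | 1 => simp only [xg, gg, pz, EV_ofNat, EV_sub, EV_mul, EV_one, EV_P, EV_v]; ring
  | (n+2) => simp only [xg, gg, EV_ofNat, EV_mul, EV_P]
theorem ti_zpow (j : ℕ) : ti^j = tt^(-(j:ℤ)) := by
  rw [zpow_neg, zpow_natCast, ← inv_pow]; congr 1; exact one_div _
theorem EV_pw (j : ℤ) (h : j ≤ 1) : EV (xpw j) = 49*tt^j := by
  unfold xpw
  split_ifs with h0
  · rw [EV_mul, EV_pow, EV_ti, EV_ofNat, ti_zpow]; congr 2; omega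
  · rw [EV_t, show j = 1 by omega, zpow_one]
theorem EV_X (l : TB) (h : l.all (fun x => decide (x.2.1 ≤ 1)) = true) : EV (toX l) = 343*evT l := by
  induction l with
  | nil => rw [toX, evT, EV_zero, mul_zero]
  | cons x l ih =>
    rw [List.all_cons, Bool.and_eq_true, decide_eq_true_eq] at h
    rw [toX, evT, EV_add, EV_mul, EV_mul, EV_pw _ h.1, EV_g, ih h.2, EV_c]; ring
/-- the functions to be computed -/
def FF (a i : ℕ) (k : ℤ) : KK := UU (gg i * rr^a * yy^k)
/-- first coefficient -/
def xc1 : ℕ → Ex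
  | 0 => 7
  | 1 => -1
  | _ => 0
/-- second coefficient -/
def xc2 : ℕ → Ex
  | 0 => 0
  | 1 => 8*xv*xQ
  | _ => 7*xQ
/-- offset -/
def dd : ℕ → ℕ
  | 0 => 0
  | 1 => 7
  | _ => 4
theorem yxi (k : ℤ) : yy^(-k) = xi^k := by
  rw [zpow_neg, ← inv_zpow]; congr 1; exact inv_eq_of_mul_eq_one_left xy
theorem UU_mul7 (f : KK) : UU (7*f) = 7*UU f := by
  have := UU_V 7 f
  rwa [map_ofNat] at this
theorem FF_eq (a i : ℕ) (k : ℤ) : 7*FF a i (-k) = EV (xc1 i) * SS k a + EV (xc2 i) * SS k ((a:ℤ)+dd i) := by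
  have e : 7*(gg i * rr^a * yy^(-k)) = VV 7 (EV (xc1 i)) * (xi^k*rr^(a:ℤ)) + VV 7 (EV (xc2 i)) * (xi^k*rr^((a:ℤ)+dd i)) := by
    rw [yxi, zpow_add₀ r_ne]
    match i with
    | 0 => simp only [gg, xc1, xc2, EV_ofNat, EV_zero, map_ofNat, map_zero, zpow_natCast]; ring
    | 1 =>
      simp only [gg, pz, xc1, xc2, dd, EV_mul, EV_neg, EV_one, EV_v, EV_Q, EV_ofNat, map_ofNat, map_mul, map_neg, map_one, Vv, VPi, zpow_natCast]
      rw [P_r, vr]; ring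
    | (n+2) =>
      simp only [gg, xc1, xc2, dd, EV_mul, EV_zero, EV_Q, EV_ofNat, map_ofNat, map_mul, map_zero, VPi, zpow_natCast]
      rw [P_r]; ring
  have := congrArg UU e
  rwa [UU_mul7, UU_add, UUs, UUs] at this
/-- admissible exponents -/
def okM (o k : ℤ) (i : ℕ) (r : ℤ) (e : ℕ) : Prop :=
  (i = 1 ∧ -3 ≤ 7*r-2*k ∧ 7*r-2*k ≤ 4*e+1 ∧ (7*r-2*k ≠ -2 ∨ 1 ≤ e)) ∨ ((i = 0 ∨ i = 2) ∧ o ≤ 7*r-2*k ∧ 7*r-2*k ≤ 4*e+4)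
instance (o k : ℤ) (i : ℕ) (r : ℤ) (e : ℕ) : Decidable (okM o k i r e) := by unfold okM; infer_instance
/-- span of admissible terms -/
def Sp (ok : ℕ → ℤ → ℕ → Prop) : AddSubgroup KK := AddSubgroup.closure {x | ∃ i r e, ok i r e ∧ x = 7^e*(tt^r*gg i)}
theorem Sp_gen {ok : ℕ → ℤ → ℕ → Prop} {i r e} (h : ok i r e) (c : ℤ) : (c:KK) * (7^e*(tt^r*gg i)) ∈ Sp ok := by
  rw [← zsmul_eq_mul]
  exact (Sp ok).zsmul_mem (AddSubgroup.subset_closure (show _ ∈ {x | ∃ i r e, ok i r e ∧ x = 7^e*(tt^r*gg i)} from ⟨i, r, e, h, rfl⟩)) _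
theorem Sp_map {ok ok' : ℕ → ℤ → ℕ → Prop} (φ : KK →+ KK) (h : ∀ i r e, ok i r e → φ (7^e*(tt^r*gg i)) ∈ Sp ok') {x : KK} (hx : x ∈ Sp ok) : φ x ∈ Sp ok' := by
  have : Sp ok ≤ (Sp ok').comap φ := by
    unfold Sp
    rw [AddSubgroup.closure_le]
    rintro x ⟨i, r, e, h1, rfl⟩
    exact h i r e h1
  exact this hx
theorem Sp_mul {ok ok' : ℕ → ℤ → ℕ → Prop} (c : ℤ) (a : ℕ) (b : ℤ) (h : ∀ i r e, ok i r e → ok' i (r+b) (e+a)) {x : KK} (hx : x ∈ Sp ok) : (c*7^a*tt^b)*x ∈ Sp ok' := by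
  refine Sp_map (AddMonoidHom.mulLeft (c*7^a*tt^b)) ?_ hx
  intro i r e h1
  have := Sp_gen (h i r e h1) c
  rw [AddMonoidHom.coe_mulLeft]
  convert this using 1
  rw [zpow_add₀ t_ne, pow_add]; ring
/-- exponent of seven -/
def eM (i : ℕ) (s : ℤ) : ℕ := if i = 1 then (if s = -2 then 1 else ((s+2)/4).toNat) else ((s-1)/4).toNat
/-- check of admissibility -/
def okB (o k : ℤ) (x : ℕ × ℤ × ℤ) : Bool := decide (x.2.1 ≤ 1) && (decide (okM o k x.1 x.2.1 (eM x.1 (7*x.2.1-2*k))) && decide ((7:ℤ)^(eM x.1 (7*x.2.1-2*k)) ∣ x.2.2))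
theorem okB_mem (o k : ℤ) (l : TB) (h : l.all (okB o k) = true) : evT l ∈ Sp (okM o k) := by
  induction l with
  | nil => exact zero_mem _
  | cons x l ih =>
    rw [List.all_cons, Bool.and_eq_true] at h
    have h1 := h.1
    simp only [okB, Bool.and_eq_true, decide_eq_true_eq] at h1
    obtain ⟨_, h2, c, hc⟩ := h1
    rw [evT]
    refine add_mem ?_ (ih h.2)
    have := Sp_gen h2 c
    rw [hc]
    convert this using 1
    push_cast; ring
theorem okB_le (o k : ℤ) (l : TB) (h : l.all (okB o k) = true) : l.all (fun x => decide (x.2.1 ≤ 1)) = true := by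
  rw [List.all_eq_true] at h ⊢
  intro x hx
  have := h x hx
  simp only [okB, Bool.and_eq_true] at this
  exact this.1
theorem mem_even (k : ℤ) (t : List Ex) (n a i : ℕ) (D : TB) (o : ℤ) (hT : ∀ j < n, TE k t j) (hn : a + dd i + 2 < n)
    (hc : Ex.chk (toX D) (49*(xc1 i * gt t (a+2) + xc2 i * gt t (a+dd i+2))) = true) (ho : D.all (okB o (-k)) = true) :
    FF a i (-k) ∈ Sp (okM o (-k)) := by
  have h1 := EV_chk _ _ hc
  have e1 := hT (a+2) (by omega)
  have e2 := hT (a+dd i+2) (by omega)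
  unfold TE at e1 e2
  rw [EV_X _ (okB_le _ _ _ ho), EV_mul, EV_add, EV_mul, EV_mul, ← e1, ← e2, EV_ofNat] at h1
  have h2 := FF_eq a i k
  rw [show ((a+2:ℕ):ℤ)-2 = a by push_cast; ring, show ((a+dd i+2:ℕ):ℤ)-2 = a+dd i by push_cast; ring, ← h2] at h1
  rw [show FF a i (-k) = evT D by
    apply mul_left_cancel₀ (show (343:KK) ≠ 0 by norm_num)
    rw [h1]; ring]
  exact okB_mem _ _ _ ho
theorem mem_odd (k : ℤ) (t : List Ex) (n a i : ℕ) (D : TB) (o : ℤ) (hT : ∀ j < n, TE (k+1) t j) (hn : a + dd i + 5 < n)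
    (hc : Ex.chk (xD*toX D) (49*(xc1 i * xodd t a + xc2 i * xodd t (a+dd i))) = true) (ho : D.all (okB o (-k)) = true) :
    FF a i (-k) ∈ Sp (okM o (-k)) := by
  have h1 := EV_chk _ _ hc
  have e1 := TE_odd k t a (fun j hj => hT _ (by omega))
  have e2 := TE_odd k t (a+dd i) (fun j hj => hT _ (by omega))
  rw [EV_mul, EV_D, EV_X _ (okB_le _ _ _ ho), EV_mul, EV_add, EV_mul, EV_mul, ← e1, ← e2, EV_ofNat] at h1
  have h2 := FF_eq a i k
  rw [show (a:ℤ)-2+2 = a by ring, show ((a+dd i:ℕ):ℤ)-2+2 = a+dd i by push_cast; ring] at h1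
  rw [show FF a i (-k) = evT D by
    apply mul_left_cancel₀ (mul_ne_zero (show (343:KK) ≠ 0 by norm_num) DS_ne)
    linear_combination 49*DS*h2 - h1]
  exact okB_mem _ _ _ ho
theorem FF_rec (a i : ℕ) (k : ℤ) : FF a i (k+7) = (((1:ℤ):KK)*7^0*tt^(2:ℤ))*FF a i k + ((((1:ℤ):KK)*7^1*tt^(2:ℤ))*FF a i (k+1) + ((((3:ℤ):KK)*7^1*tt^(2:ℤ))*FF a i (k+2)
   + ((((1:ℤ):KK)*7^2*tt^(2:ℤ))*FF a i (k+3) + ((((1:ℤ):KK)*7^1*tt^(1:ℤ))*FF a i (k+4) + ((((3:ℤ):KK)*7^2*tt^(2:ℤ))*FF a i (k+4)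
   + ((((5:ℤ):KK)*7^1*tt^(1:ℤ))*FF a i (k+5) + ((((1:ℤ):KK)*7^3*tt^(2:ℤ))*FF a i (k+5) + ((((1:ℤ):KK)*7^2*tt^(1:ℤ))*FF a i (k+6) + (((1:ℤ):KK)*7^3*tt^(2:ℤ))*FF a i (k+6))))))))) := by
  unfold FF
  simp only [← UU_V, ← UU_add]
  congr 1
  simp only [zpow_add₀ y_ne, map_mul, map_pow, map_ofNat, map_intCast, map_zpow₀, show VV 7 tt = T from rfl]
  simp only [zpow_ofNat, zpow_one]
  push_cast
  linear_combination gg i * rr^a*yy^k*y7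
theorem FF_mem (a i : ℕ) (o k0 : ℤ) (hb : ∀ k, k0 ≤ k → k < k0+7 → FF a i k ∈ Sp (okM o k)) (ho : 0 ≤ o) (k : ℤ) (hk : k0 ≤ k) : FF a i k ∈ Sp (okM o k) := by
  have : ∀ n : ℕ, ∀ j, k0 ≤ j → j < k0+7+n → FF a i j ∈ Sp (okM o j) := by
    intro n
    induction n with
    | zero => intro j h1 h2; exact hb j h1 (by simpa using h2)
    | succ n ih =>
      intro j h1 h2
      push_cast at h2
      rcases lt_or_ge j (k0+7) with h3 | h3
      · exact hb j h1 h3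
      obtain ⟨m, rfl⟩ : ∃ m, j = m+7 := ⟨j-7, by ring⟩
      rw [FF_rec]
      have q : ∀ l : ℤ, 0 ≤ l → l < 7 → FF a i (m+l) ∈ Sp (okM o (m+l)) := fun l h1 h2 => ih _ (by omega) (by omega)
      have q0 := q 0 (by norm_num) (by norm_num)
      rw [add_zero] at q0
      refine add_mem (Sp_mul _ _ _ ?_ q0) (add_mem (Sp_mul _ _ _ ?_ (q 1 (by norm_num) (by norm_num))) (add_mem (Sp_mul _ _ _ ?_ (q 2 (by norm_num) (by norm_num)))
        (add_mem (Sp_mul _ _ _ ?_ (q 3 (by norm_num) (by norm_num))) (add_mem (Sp_mul _ _ _ ?_ (q 4 (by norm_num) (by norm_num))) (add_mem (Sp_mul _ _ _ ?_ (q 4 (by norm_num) (by norm_num)))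
        (add_mem (Sp_mul _ _ _ ?_ (q 5 (by norm_num) (by norm_num))) (add_mem (Sp_mul _ _ _ ?_ (q 5 (by norm_num) (by norm_num))) (add_mem (Sp_mul _ _ _ ?_ (q 6 (by norm_num) (by norm_num)))
        (Sp_mul _ _ _ ?_ (q 6 (by norm_num) (by norm_num)))))))))))
      all_goals
        intro i r e h
        unfold okM at h ⊢
        omega
  exact this (k-k0).toNat k hk (by omega)
theorem W00 (k : ℤ) (h1 : -8 ≤ k) (h2 : k < -8+7) : FF 0 0 k ∈ Sp (okM 0 k) := by
  norm_num at h2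
  interval_cases k
  · exact mem_even 8 tab8 16 _ _ [(0,-2,20),(0,0,-343)] _ (fun j hj => TE8 j hj) (by decide) (by decide +kernel) (by decide +kernel)
  · exact mem_odd 7 tab8 16 _ _ [(0,-2,1),(0,-1,49)] _ (fun j hj => TE8 j hj) (by decide) (by decide +kernel) (by decide +kernel)
  · exact mem_even 6 tab6 16 _ _ [(0,0,49)] _ (fun j hj => TE6 j hj) (by decide) (by decide +kernel) (by decide +kernel)
  · exact mem_odd 5 tab6 16 _ _ [(0,-1,10),(0,0,49)] _ (fun j hj => TE6 j hj) (by decide) (by decide +kernel) (by decide +kernel)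
  · exact mem_even 4 tab4 13 _ _ [(0,-1,-4),(0,0,-7)] _ (fun j hj => TE4 j hj) (by decide) (by decide +kernel) (by decide +kernel)
  · exact mem_odd 3 tab4 13 _ _ [(0,0,-7)] _ (fun j hj => TE4 j hj) (by decide) (by decide +kernel) (by decide +kernel)
  · exact mem_even 2 tab2 12 _ _ [(0,0,1)] _ (fun j hj => TE2 j hj) (by decide) (by decide +kernel) (by decide +kernel)
theorem W01 (k : ℤ) (h1 : -9 ≤ k) (h2 : k < -9+7) : FF 0 1 k ∈ Sp (okM 0 k) := by
  norm_num at h2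
  interval_cases k
  · exact mem_odd 9 tab10 16 _ _ [(0,-2,3),(0,-1,-441),(0,0,-2401),(1,-3,1),(1,-2,84),(1,-1,343),(2,-2,-1),(2,-1,-49)] _ (fun j hj => TE10 j hj) (by decide) (by decide +kernel) (by decide +kernel)
  · exact mem_even 8 tab8 16 _ _ [(0,-2,-12),(0,-1,-49),(0,0,-343),(1,-1,49)] _ (fun j hj => TE8 j hj) (by decide) (by decide +kernel) (by decide +kernel)
  · exact mem_odd 7 tab8 16 _ _ [(0,-1,-7),(1,-2,-6),(2,-1,7)] _ (fun j hj => TE8 j hj) (by decide) (by decide +kernel) (by decide +kernel)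
  · exact mem_even 6 tab6 16 _ _ [(0,-1,7),(0,0,49),(1,-1,-7)] _ (fun j hj => TE6 j hj) (by decide) (by decide +kernel) (by decide +kernel)
  · exact mem_odd 5 tab6 16 _ _ [(0,-1,1),(0,0,49),(1,-1,-7)] _ (fun j hj => TE6 j hj) (by decide) (by decide +kernel) (by decide +kernel)
  · exact mem_even 4 tab4 13 _ _ [(0,-1,3),(0,0,-7),(1,-1,1)] _ (fun j hj => TE4 j hj) (by decide) (by decide +kernel) (by decide +kernel)
  · exact mem_odd 3 tab4 13 _ _ [(1,-1,7),(1,0,49),(2,0,-7)] _ (fun j hj => TE4 j hj) (by decide) (by decide +kernel) (by decide +kernel)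
theorem W02 (k : ℤ) (h1 : -8 ≤ k) (h2 : k < -8+7) : FF 0 2 k ∈ Sp (okM 0 k) := by
  norm_num at h2
  interval_cases k
  · exact mem_even 8 tab8 16 _ _ [(0,-2,24),(0,0,-2401),(0,1,-16807),(1,-1,343),(1,0,2401),(2,0,-343)] _ (fun j hj => TE8 j hj) (by decide) (by decide +kernel) (by decide +kernel)
  · exact mem_odd 7 tab8 16 _ _ [(0,-1,182),(0,0,3430),(0,1,16807),(1,-2,-10),(1,-1,-490),(1,0,-2401),(2,-1,7),(2,0,343)] _ (fun j hj => TE8 j hj) (by decide) (by decide +kernel) (by decide +kernel)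
  · exact mem_even 6 tab6 16 _ _ [(0,0,343),(0,1,2401),(1,-1,-49),(1,0,-343),(2,0,49)] _ (fun j hj => TE6 j hj) (by decide) (by decide +kernel) (by decide +kernel)
  · exact mem_odd 5 tab6 16 _ _ [(0,-1,-8),(0,0,-441),(0,1,-2401),(1,-1,63),(1,0,343),(2,0,-49)] _ (fun j hj => TE6 j hj) (by decide) (by decide +kernel) (by decide +kernel)
  · exact mem_even 4 tab4 13 _ _ [(0,-1,-4),(0,0,-49),(0,1,-343),(1,-1,7),(1,0,49),(2,0,-7)] _ (fun j hj => TE4 j hj) (by decide) (by decide +kernel) (by decide +kernel)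
  · exact mem_odd 3 tab4 13 _ _ [(0,0,-7),(1,-1,1)] _ (fun j hj => TE4 j hj) (by decide) (by decide +kernel) (by decide +kernel)
  · exact mem_even 2 tab2 12 _ _ [(0,0,7),(0,1,49),(1,-1,-1),(1,0,-7),(2,0,1)] _ (fun j hj => TE2 j hj) (by decide) (by decide +kernel) (by decide +kernel)
theorem W30 (k : ℤ) (h1 : -8 ≤ k) (h2 : k < -8+7) : FF 3 0 k ∈ Sp (okM 1 k) := by
  norm_num at h2
  interval_cases k
  · exact mem_even 8 tab8 16 _ _ [(0,-1,-245),(0,0,-343),(1,-2,35),(2,-2,-5)] _ (fun j hj => TE8 j hj) (by decide) (by decide +kernel) (by decide +kernel)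
  · exact mem_odd 7 tab8 16 _ _ [(0,-1,14),(0,0,-343),(1,-2,3),(1,-1,98),(2,-1,7)] _ (fun j hj => TE8 j hj) (by decide) (by decide +kernel) (by decide +kernel)
  · exact mem_even 6 tab6 16 _ _ [(0,0,49)] _ (fun j hj => TE6 j hj) (by decide) (by decide +kernel) (by decide +kernel)
  · exact mem_odd 5 tab6 16 _ _ [(0,-1,1),(0,0,-49),(1,-1,7),(2,-1,-4)] _ (fun j hj => TE6 j hj) (by decide) (by decide +kernel) (by decide +kernel)
  · exact mem_even 4 tab4 13 _ _ [(0,0,42),(1,-1,-7),(2,-1,1)] _ (fun j hj => TE4 j hj) (by decide) (by decide +kernel) (by decide +kernel)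
  · exact mem_odd 3 tab4 13 _ _ [(0,0,-7)] _ (fun j hj => TE4 j hj) (by decide) (by decide +kernel) (by decide +kernel)
  · exact mem_even 2 tab2 12 _ _ [(0,0,1)] _ (fun j hj => TE2 j hj) (by decide) (by decide +kernel) (by decide +kernel)
theorem W31 (k : ℤ) (h1 : -10 ≤ k) (h2 : k < -10+7) : FF 3 1 k ∈ Sp (okM 1 k) := by
  norm_num at h2
  interval_cases k
  · exact mem_even 10 tab10 16 _ _ [(0,-1,343),(0,0,2401),(1,-1,-343)] _ (fun j hj => TE10 j hj) (by decide) (by decide +kernel) (by decide +kernel)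
  · exact mem_odd 9 tab10 16 _ _ [(0,-2,6),(0,-1,147),(0,0,2401),(1,-2,-28),(1,-1,-343),(2,-2,-12),(2,-1,98)] _ (fun j hj => TE10 j hj) (by decide) (by decide +kernel) (by decide +kernel)
  · exact mem_even 8 tab8 16 _ _ [(0,-1,98),(0,0,-343),(1,-2,-21),(1,-1,49),(2,-2,3)] _ (fun j hj => TE8 j hj) (by decide) (by decide +kernel) (by decide +kernel)
  · exact mem_odd 7 tab8 16 _ _ [(0,-1,-49),(0,0,-343),(1,-2,1),(1,-1,49),(2,-1,-7)] _ (fun j hj => TE8 j hj) (by decide) (by decide +kernel) (by decide +kernel)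
  · exact mem_even 6 tab6 16 _ _ [(0,-1,7),(0,0,49),(1,-1,-7)] _ (fun j hj => TE6 j hj) (by decide) (by decide +kernel) (by decide +kernel)
  · exact mem_odd 5 tab6 16 _ _ [(0,0,-49),(1,-1,56),(2,-1,12)] _ (fun j hj => TE6 j hj) (by decide) (by decide +kernel) (by decide +kernel)
  · exact mem_even 4 tab4 13 _ _ [(0,0,189),(0,1,2401),(1,-1,15),(1,0,1715),(1,1,16807),(2,-1,1),(2,0,490),(2,1,4802)] _ (fun j hj => TE4 j hj) (by decide) (by decide +kernel) (by decide +kernel)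
theorem W32 (k : ℤ) (h1 : -9 ≤ k) (h2 : k < -9+7) : FF 3 2 k ∈ Sp (okM 0 k) := by
  norm_num at h2
  interval_cases k
  · exact mem_odd 9 tab10 16 _ _ [(0,-2,-7),(0,-1,-980),(0,0,-26411),(0,1,-117649),(1,-2,91),(1,-1,3773),(1,0,16807),(2,-2,22),(2,-1,-196),(2,0,-2401)] _ (fun j hj => TE10 j hj) (by decide) (by decide +kernel) (by decide +kernel)
  · exact mem_even 8 tab8 16 _ _ [(0,-1,-392),(0,0,-2401),(0,1,-16807),(1,-2,56),(1,-1,343),(1,0,2401),(2,-2,-8),(2,0,-343)] _ (fun j hj => TE8 j hj) (by decide) (by decide +kernel) (by decide +kernel)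
  · exact mem_odd 7 tab8 16 _ _ [(0,-1,49),(2,-2,1)] _ (fun j hj => TE8 j hj) (by decide) (by decide +kernel) (by decide +kernel)
  · exact mem_even 6 tab6 16 _ _ [(0,0,343),(0,1,2401),(1,-1,-49),(1,0,-343),(2,0,49)] _ (fun j hj => TE6 j hj) (by decide) (by decide +kernel) (by decide +kernel)
  · exact mem_odd 5 tab6 16 _ _ [(0,0,147),(0,1,2401),(1,-1,-21),(1,0,-343),(2,-1,-4),(2,0,49)] _ (fun j hj => TE6 j hj) (by decide) (by decide +kernel) (by decide +kernel)
  · exact mem_even 4 tab4 13 _ _ [(0,0,98),(0,1,-343),(1,-1,-14),(1,0,49),(2,-1,3),(2,0,-7)] _ (fun j hj => TE4 j hj) (by decide) (by decide +kernel) (by decide +kernel)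
  · exact mem_odd 3 tab4 13 _ _ [(0,0,-49),(0,1,-343),(1,0,49),(2,0,42)] _ (fun j hj => TE4 j hj) (by decide) (by decide +kernel) (by decide +kernel)

/-- UU as an additive map -/
def UUh : KK →+ KK where
  toFun := UU
  map_zero' := UU_zero
  map_add' := UU_add

/-- multiplication by A3, then UU -/
def UAh : KK →+ KK where
  toFun x := UU (rr^3*yy^7*x)
  map_zero' := by rw [mul_zero, UU_zero]
  map_add' x y := by rw [mul_add, UU_add]

/-- odd levels -/
def okO (β : ℕ) (i : ℕ) (n : ℤ) (e : ℕ) : Prop :=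
  (i = 1 ∧ 2 ≤ n ∧ 7*n-16+4*(β:ℤ) ≤ 4*e) ∨ ((i = 0 ∨ i = 2) ∧ 3 ≤ n ∧ 7*n-19+4*(β:ℤ) ≤ 4*e)
/-- even levels -/
def okE (β : ℕ) (i : ℕ) (n : ℤ) (e : ℕ) : Prop :=
  (i = 1 ∧ 0 ≤ n ∧ 7*n-3+4*(β:ℤ) ≤ 4*e ∧ (0 < n ∨ β+1 ≤ e)) ∨ ((i = 0 ∨ i = 2) ∧ 1 ≤ n ∧ 7*n-6+4*(β:ℤ) ≤ 4*e)

theorem T_zp (n : ℤ) : tt^n = VV 7 (tt^(-n)) * yy^(4*n) := by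
  rw [map_zpow₀, zpow_mul, show yy^(4:ℤ) = yy^4 from zpow_ofNat _ _, y4]
  change _ = T^(-n) * _
  have h : T ≠ 0 := by
    intro h
    have := y4
    rw [h, mul_zero] at this
    exact y_ne (pow_eq_zero_iff (by norm_num) |>.1 this)
  rw [mul_zpow, zpow_neg]
  have : T^n ≠ 0 := zpow_ne_zero _ h
  field_simp

theorem UU_7 (e : ℕ) (x : KK) : UU (7^e*x) = 7^e * UU x := by
  have := UU_V (7^e) x
  rwa [map_pow, map_ofNat] at this

theorem UU_gen (e : ℕ) (n : ℤ) (i : ℕ) : UU (7^e*(tt^n*gg i)) = 7^e*(tt^(-n)) * FF 0 i (4*n) := by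
  rw [UU_7, T_zp, mul_assoc, UU_V, FF, mul_assoc]
  congr 3
  ring

theorem UA_gen (e : ℕ) (n : ℤ) (i : ℕ) : UU (rr^3*yy^7*(7^e*(tt^n*gg i))) = 7^e*(tt^(-n)) * FF 3 i (4*n+7) := by
  rw [show rr^3*yy^7*(7^e*(tt^n*gg i)) = 7^e*(tt^n*(rr^3*yy^7*gg i)) by ring, UU_7, T_zp, mul_assoc (VV 7 _), UU_V, FF, mul_assoc (7^e)]
  rw [zpow_add₀ y_ne, show yy^(7:ℤ) = yy^7 from zpow_ofNat _ _]
  congr 3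
  ring

theorem M00 (k : ℤ) (h : -8 ≤ k) : FF 0 0 k ∈ Sp (okM 0 k) := FF_mem 0 0 0 (-8) W00 le_rfl k h
theorem M01 (k : ℤ) (h : -9 ≤ k) : FF 0 1 k ∈ Sp (okM 0 k) := FF_mem 0 1 0 (-9) W01 le_rfl k h
theorem M02 (k : ℤ) (h : -8 ≤ k) : FF 0 2 k ∈ Sp (okM 0 k) := FF_mem 0 2 0 (-8) W02 le_rfl k h
theorem M30 (k : ℤ) (h : -8 ≤ k) : FF 3 0 k ∈ Sp (okM 1 k) := FF_mem 3 0 1 (-8) W30 (by norm_num) k h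
theorem M31 (k : ℤ) (h : -10 ≤ k) : FF 3 1 k ∈ Sp (okM 1 k) := FF_mem 3 1 1 (-10) W31 (by norm_num) k h
theorem M32 (k : ℤ) (h : -9 ≤ k) : FF 3 2 k ∈ Sp (okM 0 k) := FF_mem 3 2 0 (-9) W32 le_rfl k h

theorem Sp_mul1 {ok ok' : ℕ → ℤ → ℕ → Prop} {x : KK} (a : ℕ) (b : ℤ) (h : ∀ i r e, ok i r e → ok' i (r+b) (e+a)) (hx : x ∈ Sp ok) :
    (7^a*tt^b)*x ∈ Sp ok' := by
  have := Sp_mul 1 a b h hx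
  rwa [Int.cast_one, one_mul] at this

theorem towE (β : ℕ) (x : KK) (hx : x ∈ Sp (okO β)) : UU x ∈ Sp (okE β) := by
  refine Sp_map UUh ?_ hx
  intro i n e h
  change UU _ ∈ _
  rw [UU_gen]
  rcases h with ⟨rfl, h1, h2⟩ | ⟨rfl | rfl, h1, h2⟩
  · refine Sp_mul1 _ _ ?_ (M01 _ (by omega))
    intro i r e' h; unfold okM at h; unfold okE; push_cast; rcases eq_or_lt_of_le h1 with h1 | h1 <;> omega
  · refine Sp_mul1 _ _ ?_ (M00 _ (by omega))
    intro i r e' h; unfold okM at h; unfold okE; push_cast; omega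
  · refine Sp_mul1 _ _ ?_ (M02 _ (by omega))
    intro i r e' h; unfold okM at h; unfold okE; push_cast; omega

theorem towO (β : ℕ) (x : KK) (hx : x ∈ Sp (okE β)) : UU (rr^3*yy^7*x) ∈ Sp (okO (β+1)) := by
  refine Sp_map UAh ?_ hx
  intro i n e h
  change UU _ ∈ _
  rw [UA_gen]
  rcases h with ⟨rfl, h1, h2, h3⟩ | ⟨rfl | rfl, h1, h2⟩
  · refine Sp_mul1 _ _ ?_ (M31 _ (by omega))
    intro i r e' h; unfold okM at h; unfold okO; push_cast; rcases eq_or_lt_of_le h1 with h1 | h1 <;> omega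
  · refine Sp_mul1 _ _ ?_ (M30 _ (by omega))
    intro i r e' h; unfold okM at h; unfold okO; push_cast; rcases eq_or_lt_of_le h1 with h1 | h1 <;> omega
  · refine Sp_mul1 _ _ ?_ (M32 _ (by omega))
    intro i r e' h; unfold okM at h; unfold okO; push_cast; rcases eq_or_lt_of_le h1 with h1 | h1 <;> omega

theorem tow1 : UU (rr^3*yy^7*1) ∈ Sp (okO 0) := by
  have := UA_gen 0 0 0
  rw [pow_zero, zpow_zero, gg, one_mul, one_mul] at this
  rw [this, ← pow_zero (7:KK)]
  refine Sp_mul1 _ _ ?_ (M30 _ (by omega))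
  intro i r e' h; unfold okM at h; unfold okO; push_cast; omega

/-- expansion form -/
def Exx (β : ℕ) (d : ℕ → ℕ → ℤ) (N : ℕ) : KK :=
  pz * ∑ n ∈ Finset.range N, ((if 2 ≤ n then d n 0 * 7 ^ ((7 * n - 13) / 4 + β) else 0 : ℤ) : KK) * tt^n
  + PP * ∑ n ∈ Finset.range N, ((if 3 ≤ n then d n 1 * 7 ^ ((7 * n - 16) / 4 + β) else 0 : ℤ) : KK) * tt^n
  + ∑ n ∈ Finset.range N, ((if 3 ≤ n then d n 2 * 7 ^ ((7 * n - 16) / 4 + β) else 0 : ℤ) : KK) * tt^n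

/-- d supported below N -/
def Su (d : ℕ → ℕ → ℤ) (N : ℕ) : Prop := ∀ n, N ≤ n → ∀ j, d n j = 0

theorem sum_ext (f : ℕ → KK) (N M : ℕ) (h : N ≤ M) (hf : ∀ n, N ≤ n → f n = 0) :
    ∑ n ∈ Finset.range N, f n = ∑ n ∈ Finset.range M, f n := by
  apply Finset.sum_subset
  · intro a; simp only [Finset.mem_range]; omega
  · intro a _ h; apply hf; simpa using h

theorem Ex_mono (β : ℕ) (d : ℕ → ℕ → ℤ) (N M : ℕ) (h : N ≤ M) (hs : Su d N) : Exx β d N = Exx β d M := by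
  unfold Exx
  rw [sum_ext _ N M h, sum_ext _ N M h, sum_ext _ N M h]
  all_goals
    intro n hn
    rw [hs n hn]; simp

theorem Ex_add (β : ℕ) (d d' : ℕ → ℕ → ℤ) (N : ℕ) :
    Exx β (fun n j => d n j + d' n j) N = Exx β d N + Exx β d' N := by
  have h : ∀ (j m : ℕ) (E : ℕ → ℕ), ∑ n ∈ Finset.range N, ((if m ≤ n then (d n j + d' n j) * 7 ^ (E n) else 0 : ℤ) : KK) * tt^n
     = ∑ n ∈ Finset.range N, ((if m ≤ n then (d n j) * 7 ^ (E n) else 0 : ℤ) : KK) * tt^n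
      + ∑ n ∈ Finset.range N, ((if m ≤ n then (d' n j) * 7 ^ (E n) else 0 : ℤ) : KK) * tt^n := by
    intro j m E
    rw [← Finset.sum_add_distrib]
    apply Finset.sum_congr rfl
    intro n _
    split_ifs
    · push_cast; ring
    · simp
  unfold Exx
  rw [h 0 2 (fun n => (7 * n - 13) / 4 + β), h 1 3 (fun n => (7 * n - 16) / 4 + β), h 2 3 (fun n => (7 * n - 16) / 4 + β)]
  ring

theorem Ex_neg (β : ℕ) (d : ℕ → ℕ → ℤ) (N : ℕ) :
    Exx β (fun n j => - d n j) N = - Exx β d N := by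
  have h : ∀ (j m : ℕ) (E : ℕ → ℕ), ∑ n ∈ Finset.range N, ((if m ≤ n then (- d n j) * 7 ^ (E n) else 0 : ℤ) : KK) * tt^n
     = - ∑ n ∈ Finset.range N, ((if m ≤ n then (d n j) * 7 ^ (E n) else 0 : ℤ) : KK) * tt^n := by
    intro j m E
    rw [← Finset.sum_neg_distrib]
    apply Finset.sum_congr rfl
    intro n _
    split_ifs
    · push_cast; ring
    · simp
  unfold Exx
  rw [h 0 2 (fun n => (7 * n - 13) / 4 + β), h 1 3 (fun n => (7 * n - 16) / 4 + β), h 2 3 (fun n => (7 * n - 16) / 4 + β)]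
  ring

theorem sum_one (f : ℕ → KK) (n : ℕ) (hf : ∀ k, k ≠ n → f k = 0) : ∑ k ∈ Finset.range (n+1), f k = f n := by
  apply Finset.sum_eq_single
  · intro b _ hb; exact hf b hb
  · intro h; simp at h

theorem Sp_Ex (β : ℕ) (x : KK) (hx : x ∈ Sp (okO β)) : ∃ d N, Su d N ∧ x = Exx β d N := by
  unfold Sp at hx
  induction hx using AddSubgroup.closure_induction with
  | zero => exact ⟨fun _ _ => 0, 0, fun _ _ _ => rfl, by simp [Exx]⟩
  | add x y _ _ hx hy =>
    obtain ⟨d, N, hs, rfl⟩ := hx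
    obtain ⟨d', N', hs', rfl⟩ := hy
    refine ⟨fun n j => d n j + d' n j, max N N', ?_, ?_⟩
    · intro n hn j
      simp only
      rw [hs n (le_trans (le_max_left _ _) hn), hs' n (le_trans (le_max_right _ _) hn)]; rfl
    · rw [Ex_add, Ex_mono β d N _ (le_max_left _ _) hs, Ex_mono β d' N' _ (le_max_right _ _) hs']
  | neg x _ hx =>
    obtain ⟨d, N, hs, rfl⟩ := hx
    refine ⟨fun n j => - d n j, N, ?_, (Ex_neg _ _ _).symm⟩
    intro n hn j
    simp only
    rw [hs n hn]; rfl
  | mem x hx =>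
    obtain ⟨i, r, e, h, rfl⟩ := hx
    have hr : 0 ≤ r := by unfold okO at h; omega
    lift r to ℕ using hr
    rw [zpow_natCast]
    have key : ∀ (j E : ℕ), E ≤ e → ∃ d : ℕ → ℕ → ℤ, Su d (r+1) ∧ (∀ n, n ≠ r → ∀ l, d n l = 0) ∧ (∀ l, l ≠ j → ∀ n, d n l = 0)
        ∧ (((d r j * 7^E : ℤ)) : KK) = 7^e := by
      intro j E hE
      refine ⟨fun n l => if n = r ∧ l = j then 7^(e-E) else 0, ?_, ?_, ?_, ?_⟩
      · intro n hn l; simp only; rw [if_neg]; omega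
      · intro n hn l; simp only; rw [if_neg]; omega
      · intro l hl n; simp only; rw [if_neg]; omega
      · simp only [and_self, if_true]
        rw [← pow_add, Nat.sub_add_cancel hE]; push_cast; rfl
    rcases h with ⟨rfl, h1, h2⟩ | ⟨rfl | rfl, h1, h2⟩
    · obtain ⟨d, hs, hn, hl, hv⟩ := key 0 ((7 * r - 13) / 4 + β) (by omega)
      refine ⟨d, r+1, hs, ?_⟩
      unfold Exx
      rw [sum_one, sum_one, sum_one, if_pos (by omega), hv, hl 1 (by norm_num), hl 2 (by norm_num)]
      · simp [gg]; ring
      all_goals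
        intro k hk
        rw [hn k hk]; simp
    · obtain ⟨d, hs, hn, hl, hv⟩ := key 2 ((7 * r - 16) / 4 + β) (by omega)
      refine ⟨d, r+1, hs, ?_⟩
      unfold Exx
      rw [sum_one, sum_one, sum_one, if_pos (show 3 ≤ r by omega), if_pos (show 3 ≤ r by omega), hv, hl 1 (by norm_num), hl 0 (by norm_num)]
      · simp [gg]
      all_goals
        intro k hk
        rw [hn k hk]; simp
    · obtain ⟨d, hs, hn, hl, hv⟩ := key 1 ((7 * r - 16) / 4 + β) (by omega)
      refine ⟨d, r+1, hs, ?_⟩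
      unfold Exx
      rw [sum_one, sum_one, sum_one, if_pos (show 3 ≤ r by omega), if_pos (show 3 ≤ r by omega), hv, hl 2 (by norm_num), hl 0 (by norm_num)]
      · simp [gg]; ring
      all_goals
        intro k hk
        rw [hn k hk]; simp

/-- integral Laurent series to complex ones -/
def mp0 : LaurentSeries ℤ →+* K0 where
  toFun f := HahnSeries.map f (Int.castRingHom ℂ)
  map_one' := by
    ext n
    simp only [HahnSeries.map_coeff, HahnSeries.coeff_one]
    split_ifs <;> simp
  map_zero' := by ext n; simp
  map_add' f g := by ext n; simp
  map_mul' f g := by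
    ext n
    simp only [HahnSeries.map_coeff, HahnSeries.coeff_mul, map_sum, map_mul]
    apply Finset.sum_congr
    · ext x
      simp only [Finset.mem_antidiagonal, HahnSeries.mem_support, HahnSeries.map_coeff]
      simp
    · intro x _; rfl

theorem mp0_coeff (f : LaurentSeries ℤ) (n : ℤ) : (mp0 f).coeff n = (f.coeff n : ℂ) := rfl

theorem mp0_inj : Function.Injective mp0 := by
  intro f g h
  ext n
  have := congrArg (fun x => HahnSeries.coeff x n) h
  simp only [mp0_coeff] at this
  exact_mod_cast this

theorem ofPSZ_neg (f : PowerSeries ℤ) (n : ℤ) (h : n < 0) : (HahnSeries.ofPowerSeries ℤ ℤ f).coeff n = 0 := by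
  rw [HahnSeries.ofPowerSeries_apply]
  apply HahnSeries.embDomain_notin_image_support
  rintro ⟨k, _, hk⟩
  simp at hk; omega

theorem mp0_ps (f : PowerSeries ℤ) : mp0 (HahnSeries.ofPowerSeries ℤ ℤ f) = i0 f := by
  apply K0_ext; intro n
  rw [mp0_coeff]
  change _ = (HahnSeries.ofPowerSeries ℤ ℂ (PowerSeries.map (Int.castRingHom ℂ) f)).coeff n
  by_cases h : n < 0
  · rw [ofPSZ_neg _ _ h, ofPS_neg _ _ h]; simp
  · obtain ⟨m, rfl⟩ := Int.eq_ofNat_of_zero_le (not_lt.1 h)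
    rw [HahnSeries.ofPowerSeries_apply_coeff, HahnSeries.ofPowerSeries_apply_coeff, PowerSeries.coeff_map]; rfl

/-- map to KK -/
def mp : LaurentSeries ℤ →+* KK := toKK.comp mp0
theorem mp_inj : Function.Injective mp := mp0_inj
theorem mp_ps (f : PowerSeries ℤ) : mp (HahnSeries.ofPowerSeries ℤ ℤ f) = io f := mp0_ps f

theorem mp_U (U : LaurentSeries ℤ → LaurentSeries ℤ)
    (hU : ∀ (f : LaurentSeries ℤ) (n : ℤ), (U f).coeff n = f.coeff (7 * n)) (f : LaurentSeries ℤ) :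
    mp (U f) = UU (mp f) := by
  change mp0 (U f) = U0 (mp0 f)
  apply K0_ext; intro n
  rw [mp0_coeff, hU, U0_coeff, mp0_coeff]

theorem J_cc (b : ℕ) (hb : 1 ≤ b) : PowerSeries.constantCoeff (J b) = 1 := by
  rw [← PowerSeries.coeff_zero_eq_constantCoeff_apply, J, PowerSeries.coeff_mk]
  simp [show b ≠ 0 by omega]

theorem t_dvd (t : PowerSeries ℤ) (ht : t * (J 1) ^ 4 = PowerSeries.X * (J 7) ^ 4) : PowerSeries.X ∣ t := by
  rw [PowerSeries.X_dvd_iff]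
  have := congrArg PowerSeries.constantCoeff ht
  simpa [J_cc] using this

theorem tp_fin (t : PowerSeries ℤ) (ht : PowerSeries.X ∣ t) (c : ℕ → ℤ) (N : ℕ) (hc : ∀ n, N ≤ n → c n = 0) :
    tpowSum t c = ∑ n ∈ Finset.range N, (c n : PowerSeries ℤ) * t^n := by
  have hz : ∀ m n : ℕ, m < n → PowerSeries.coeff m (t^n) = 0 := by
    intro m n h
    have := pow_dvd_pow_of_dvd ht n
    exact (PowerSeries.X_pow_dvd_iff.1 this) m h
  ext m
  rw [tpowSum, PowerSeries.coeff_mk, map_sum]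
  have h1 : ∀ n, PowerSeries.coeff m ((c n : PowerSeries ℤ) * t^n) = c n * PowerSeries.coeff m (t^n) := by
    intro n
    rw [← map_intCast (PowerSeries.C (R := ℤ)), PowerSeries.coeff_C_mul]; simp
  simp only [h1]
  trans ∑ n ∈ Finset.range (max N (m+1)), c n * PowerSeries.coeff m (t^n)
  · apply Finset.sum_subset
    · intro a; simp only [Finset.mem_range]; omega
    · intro a _ h; rw [hz, mul_zero]; simp only [Finset.mem_range] at h; omega
  · symm
    apply Finset.sum_subset
    · intro a; simp only [Finset.mem_range]; omega
    · intro a _ h; rw [hc, zero_mul]; simp only [Finset.mem_range] at h; omega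

theorem io_tp (t : PowerSeries ℤ) (ht : t * (J 1) ^ 4 = PowerSeries.X * (J 7) ^ 4) (c : ℕ → ℤ) (N : ℕ) (hc : ∀ n, N ≤ n → c n = 0) :
    io (tpowSum t c) = ∑ n ∈ Finset.range N, ((c n : ℤ) : KK) * tt^n := by
  rw [tp_fin t (t_dvd t ht) c N hc, map_sum]
  have : io t = tt := by
    have h := congrArg io ht
    rw [map_mul, map_mul, map_pow, map_pow] at h
    change _ * jj 1^4 = qq * jj 7^4 at h
    rw [tt, ← h]
    have := jj_ne 1 le_rfl
    field_simp
  simp only [map_mul, map_pow, map_intCast, this]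

theorem p0_eq (p0 : PowerSeries ℤ) (hp0 : (1 + 7 * p0) * ((J 1) ^ 7 * J 14) = 8 * (J 2) ^ 7 * J 7) : io p0 = pz := by
  have h := congrArg io hp0
  simp only [map_mul, map_pow, map_add, map_one, map_ofNat] at h
  change (1 + 7 * io p0) * (jj 1^7 * jj 14) = 8 * jj 2^7 * jj 7 at h
  have h1 := jj_ne 1 le_rfl
  have h2 := jj_ne 14 (by norm_num)
  have h3 := jj_ne 7 (by norm_num)
  have hq := qq_ne
  have e : 1 + 7 * io p0 = 8 * PP * vv := by
    apply mul_right_cancel₀ (mul_ne_zero (pow_ne_zero 7 h1) h2)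
    rw [h, PP, vv]
    field_simp
  rw [pz, ← e]
  field_simp
  ring

theorem p1_eq (p1 : LaurentSeries ℤ)
    (hp1 : p1 * HahnSeries.ofPowerSeries ℤ ℤ (PowerSeries.X * (J 1) ^ 4 * (J 14) ^ 4)
        = HahnSeries.ofPowerSeries ℤ ℤ ((J 2) ^ 4 * (J 7) ^ 4)) : mp p1 = PP := by
  have h := congrArg mp hp1
  rw [map_mul, mp_ps, mp_ps] at h
  simp only [map_mul, map_pow] at h
  change mp p1 * (qq * jj 1^4 * jj 14^4) = jj 2^4 * jj 7^4 at h
  have h1 := jj_ne 1 le_rfl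
  have h2 := jj_ne 14 (by norm_num)
  have hq := qq_ne
  rw [PP, ← h]
  field_simp

theorem A3_eq (A3 : LaurentSeries ℤ)
    (hA3 : A3 * HahnSeries.ofPowerSeries ℤ ℤ ((J 1) ^ 10 * (J 98) ^ 3)
        = HahnSeries.ofPowerSeries ℤ ℤ (PowerSeries.X ^ 8 * (J 2) ^ 3 * (J 49) ^ 10)) : mp A3 = rr^3*yy^7 := by
  have h := congrArg mp hA3
  rw [map_mul, mp_ps, mp_ps] at h
  simp only [map_mul, map_pow] at h
  change mp A3 * (jj 1^10 * jj 98^3) = qq^8 * jj 2^3 * jj 49^10 at h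
  have h1 := jj_ne 1 le_rfl
  have h2 := jj_ne 98 (by norm_num)
  have hq := qq_ne
  apply mul_right_cancel₀ (mul_ne_zero (pow_ne_zero 10 h1) (pow_ne_zero 3 h2))
  rw [h, rr, yy]
  field_simp

/-- in the d₃ tower, for every `α ≥ 1` there are integers `d(n,i)` with
`L_{2α−1} = p₀·∑_{n≥2} d(n,0)·7^{⌊(7n−13)/4⌋+α−1}·tⁿ
 + p₁·∑_{n≥3} d(n,1)·7^{⌊(7n−16)/4⌋+α−1}·tⁿ + ∑_{n≥3} d(n,2)·7^{⌊(7n−16)/4⌋+α−1}·tⁿ`.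
Here `t = q·J_7^4/J_1^4`, `p₀ = (8·J_2^7·J_7/(J_1^7·J_14) − 1)/7`,
`p₁ = q⁻¹·J_2^4·J_7^4/(J_1^4·J_14^4)`, all given by their defining equations. -/
theorem stmt11
    (t : PowerSeries ℤ) (ht : t * (J 1) ^ 4 = PowerSeries.X * (J 7) ^ 4)
    (p0 : PowerSeries ℤ)
    (hp0 : (1 + 7 * p0) * ((J 1) ^ 7 * J 14) = 8 * (J 2) ^ 7 * J 7)
    (p1 : LaurentSeries ℤ)
    (hp1 : p1 * HahnSeries.ofPowerSeries ℤ ℤ (PowerSeries.X * (J 1) ^ 4 * (J 14) ^ 4)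
        = HahnSeries.ofPowerSeries ℤ ℤ ((J 2) ^ 4 * (J 7) ^ 4))
    (U : LaurentSeries ℤ → LaurentSeries ℤ)
    (hU : ∀ (f : LaurentSeries ℤ) (n : ℤ), (U f).coeff n = f.coeff (7 * n))
    (A3 : LaurentSeries ℤ)
    (hA3 : A3 * HahnSeries.ofPowerSeries ℤ ℤ ((J 1) ^ 10 * (J 98) ^ 3)
        = HahnSeries.ofPowerSeries ℤ ℤ (PowerSeries.X ^ 8 * (J 2) ^ 3 * (J 49) ^ 10))
    (L : ℕ → LaurentSeries ℤ) (hL0 : L 0 = 1)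
    (hLodd : ∀ β : ℕ, L (2 * β + 1) = U (A3 * L (2 * β)))
    (hLeven : ∀ β : ℕ, L (2 * β + 2) = U (L (2 * β + 1)))
    (α : ℕ) (hα : 1 ≤ α) :
    ∃ d : ℕ → ℕ → ℤ,
      L (2 * α - 1)
        = HahnSeries.ofPowerSeries ℤ ℤ
            (p0 * tpowSum t fun n =>
              if 2 ≤ n then d n 0 * 7 ^ ((7 * n - 13) / 4 + (α - 1)) else 0)
        + p1 * HahnSeries.ofPowerSeries ℤ ℤ
            (tpowSum t fun n =>
              if 3 ≤ n then d n 1 * 7 ^ ((7 * n - 16) / 4 + (α - 1)) else 0)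
        + HahnSeries.ofPowerSeries ℤ ℤ
            (tpowSum t fun n =>
              if 3 ≤ n then d n 2 * 7 ^ ((7 * n - 16) / 4 + (α - 1)) else 0) := by
  obtain ⟨β, rfl⟩ : ∃ β, α = β + 1 := ⟨α - 1, by omega⟩
  have key : ∀ β : ℕ, mp (L (2 * β + 1)) ∈ Sp (okO β) := by
    intro β
    induction β with
    | zero =>
      rw [hLodd, mp_U U hU, map_mul, A3_eq A3 hA3, mul_zero, hL0, map_one]
      exact tow1
    | succ β ih =>
      rw [hLodd, mp_U U hU, map_mul, A3_eq A3 hA3]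
      apply towO
      rw [show 2 * (β + 1) = 2 * β + 2 by ring, hLeven, mp_U U hU]
      exact towE β _ ih
  obtain ⟨d, N, hs, hd⟩ := Sp_Ex β _ (key β)
  refine ⟨d, ?_⟩
  apply mp_inj
  rw [show 2 * (β + 1) - 1 = 2 * β + 1 by omega, hd, map_add, map_add, map_mul mp p1, mp_ps, mp_ps, mp_ps, map_mul io,
    p0_eq p0 hp0, p1_eq p1 hp1, io_tp t ht _ N, io_tp t ht _ N, io_tp t ht _ N]
  · rfl
  all_goals
    intro n hn
    rw [hs n hn]; simp
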